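/- arXiv:2303.16699 — 2 statements merged into one kernel-verified Lean document; each statement's English description precedes it below -/
import Mathlib

section
/- There is a total computable function mapping every finite set Ti of tiles together with a designated tile τ₀ ∈ Ti (a tile is a function from {east,west,north,south} to a finite set C of colours) to a HyperLTL sentence φ_Ti such that φ_Ti is satisfiable if and only if there exists a tiling ti : ℕ×ℕ → Ti of the positive quadrant satisfying ti(i,j)(east) = ti(i+1,j)(west) and ti(i,j)(north) = ti(i,j+1)(south) for all i,j, and ti(0,j) = τ₀ for infinitely many j. Consequently, HyperLTL satisfiability is Σ¹₁-hard (every Σ¹₁ set many-one reduces to it via a total computable function). -/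
/-! ### HyperLTL: syntax and semantics -/

/-- A trace over a set `AP` of atomic propositions. -/
abbrev Trace (AP : Type) : Type := ℕ → Set AP

/-- The suffix of a trace from position `j` onwards. -/
def Trace.shift {AP : Type} (t : Trace AP) (j : ℕ) : Trace AP := fun i => t (i + j)

/-- Quantifier-free HyperLTL formulas; trace variables are natural numbers. -/
inductive QF (AP : Type) : Type where
  | atom : AP → ℕ → QF AP
  | neg  : QF AP → QF AP
  | disj : QF AP → QF AP → QF AP
  | next : QF AP → QF AP
  | untl : QF AP → QF AP → QF AP

/-- HyperLTL formulas: a block of trace quantifiers followed by a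
quantifier-free formula (HyperLTL formulas are in prenex normal form). -/
inductive HFormula (AP : Type) : Type where
  | ex  : ℕ → HFormula AP → HFormula AP
  | all : ℕ → HFormula AP → HFormula AP
  | qf  : QF AP → HFormula AP

/-- The simultaneous shift of a trace assignment. -/
def shiftAsg {AP : Type} (As : ℕ → Trace AP) (j : ℕ) : ℕ → Trace AP :=
  fun x => Trace.shift (As x) j

/-- Semantics of quantifier-free HyperLTL formulas w.r.t. a trace assignment. -/
def QF.sat {AP : Type} : QF AP → (ℕ → Trace AP) → Prop
  | .atom a x, As => a ∈ As x 0
  | .neg ψ, As => ¬ ψ.sat As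
  | .disj ψ₁ ψ₂, As => ψ₁.sat As ∨ ψ₂.sat As
  | .next ψ, As => ψ.sat (shiftAsg As 1)
  | .untl ψ₁ ψ₂, As => ∃ j, ψ₂.sat (shiftAsg As j) ∧ ∀ j' < j, ψ₁.sat (shiftAsg As j')

/-- Semantics of HyperLTL formulas w.r.t. a set of traces and a trace assignment. -/
def HFormula.sat {AP : Type} : HFormula AP → Set (Trace AP) → (ℕ → Trace AP) → Prop
  | .ex x φ, T, As => ∃ t ∈ T, φ.sat T (Function.update As x t)
  | .all x φ, T, As => ∀ t ∈ T, φ.sat T (Function.update As x t)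
  | .qf ψ, _, As => ψ.sat As

def QF.freeVars {AP : Type} : QF AP → Set ℕ
  | .atom _ x => {x}
  | .neg ψ => ψ.freeVars
  | .disj ψ₁ ψ₂ => ψ₁.freeVars ∪ ψ₂.freeVars
  | .next ψ => ψ.freeVars
  | .untl ψ₁ ψ₂ => ψ₁.freeVars ∪ ψ₂.freeVars

def HFormula.freeVars {AP : Type} : HFormula AP → Set ℕ
  | .ex x φ => φ.freeVars \ {x}
  | .all x φ => φ.freeVars \ {x}
  | .qf ψ => ψ.freeVars

/-- A sentence is a formula without free variables. -/
def HFormula.IsSentence {AP : Type} (φ : HFormula AP) : Prop := φ.freeVars = ∅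

/-- `T` is a model of `φ` (for sentences the initial assignment is irrelevant). -/
def HModels {AP : Type} (T : Set (Trace AP)) (φ : HFormula AP) : Prop :=
  φ.sat T (fun _ _ => ∅)

/-- A HyperLTL sentence is satisfiable if it has a model. -/
def HSatisfiable {AP : Type} (φ : HFormula AP) : Prop := ∃ T, HModels T φ

/-! ### A fixed computable injective encoding of HyperLTL formulas -/

def QF.codeWith {AP : Type} (e : AP → ℕ) : QF AP → ℕ
  | .atom a x => Nat.pair 0 (Nat.pair (e a) x)
  | .neg ψ => Nat.pair 1 (ψ.codeWith e)
  | .disj ψ₁ ψ₂ => Nat.pair 2 (Nat.pair (ψ₁.codeWith e) (ψ₂.codeWith e))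
  | .next ψ => Nat.pair 3 (ψ.codeWith e)
  | .untl ψ₁ ψ₂ => Nat.pair 4 (Nat.pair (ψ₁.codeWith e) (ψ₂.codeWith e))

def HFormula.codeWith {AP : Type} (e : AP → ℕ) : HFormula AP → ℕ
  | .ex x φ => Nat.pair 0 (Nat.pair x (φ.codeWith e))
  | .all x φ => Nat.pair 1 (Nat.pair x (φ.codeWith e))
  | .qf ψ => Nat.pair 2 (ψ.codeWith e)

/-! ### Arithmetic formulas and Σ¹₁ sets -/

/-- Terms of arithmetic (signature 0,1,+,·) with number variables and
applications of (free) type-1 function variables. -/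
inductive ATerm : Type where
  | var : ℕ → ATerm
  | zero : ATerm
  | one : ATerm
  | add : ATerm → ATerm → ATerm
  | mul : ATerm → ATerm → ATerm
  | app : ℕ → ATerm → ATerm

def ATerm.eval : ATerm → (ℕ → ℕ) → (ℕ → ℕ → ℕ) → ℕ
  | .var x, v, _ => v x
  | .zero, _, _ => 0
  | .one, _, _ => 1
  | .add s t, v, F => s.eval v F + t.eval v F
  | .mul s t, v, F => s.eval v F * t.eval v F
  | .app f t, v, F => F f (t.eval v F)

/-- Formulas of arithmetic with arbitrary quantification over natural numbers
(type-0 objects); type-1 function variables occur free, via `ATerm.app`. -/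
inductive AForm : Type where
  | eq : ATerm → ATerm → AForm
  | lt : ATerm → ATerm → AForm
  | neg : AForm → AForm
  | disj : AForm → AForm → AForm
  | exN : ℕ → AForm → AForm
  | allN : ℕ → AForm → AForm

def AForm.sat : AForm → (ℕ → ℕ) → (ℕ → ℕ → ℕ) → Prop
  | .eq s t, v, F => s.eval v F = t.eval v F
  | .lt s t, v, F => s.eval v F < t.eval v F
  | .neg φ, v, F => ¬ φ.sat v F
  | .disj φ ψ, v, F => φ.sat v F ∨ ψ.sat v F
  | .exN x φ, v, F => ∃ n : ℕ, φ.sat (Function.update v x n) F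
  | .allN x φ, v, F => ∀ n : ℕ, φ.sat (Function.update v x n) F

/-- A set `N ⊆ ℕ` is Σ¹₁ if it is defined by existential quantification over
type-1 objects (functions ℕ → ℕ) followed by an arithmetic formula with
arbitrary quantification over natural numbers. -/
def Sigma11 (N : Set ℕ) : Prop :=
  ∃ ψ : AForm, ∀ x : ℕ, x ∈ N ↔ ∃ F : ℕ → ℕ → ℕ, ψ.sat (fun _ => x) F

/-- `A` many-one reduces to `B` via a total computable function. -/
def ManyOneRed (A B : Set ℕ) : Prop :=
  ∃ f : ℕ → ℕ, Computable f ∧ ∀ x, x ∈ A ↔ f x ∈ B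

/-! ### Tiles and the recurring tiling problem -/

/-- A tile: its east, west, north and south colours (colours are naturals;
a finite set of tiles only uses finitely many colours). -/
abbrev Tile : Type := ℕ × ℕ × ℕ × ℕ

def Tile.east (τ : Tile) : ℕ := τ.1
def Tile.west (τ : Tile) : ℕ := τ.2.1
def Tile.north (τ : Tile) : ℕ := τ.2.2.1
def Tile.south (τ : Tile) : ℕ := τ.2.2.2

/-- There is a tiling of the positive quadrant with tiles from `Ti`, matching
horizontally and vertically, in which `τ₀` occurs infinitely often in column 0. -/
def RecurTiling (Ti : Finset Tile) (τ₀ : Tile) : Prop :=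
  ∃ ti : ℕ × ℕ → Tile, (∀ p, ti p ∈ Ti) ∧
    (∀ i j, (ti (i, j)).east = (ti (i + 1, j)).west) ∧
    (∀ i j, (ti (i, j)).north = (ti (i, j + 1)).south) ∧
    (∀ m, ∃ j, m ≤ j ∧ ti (0, j) = τ₀)

/-! ### Derived operators -/

theorem shiftAsg_apply {AP : Type} (As : ℕ → Trace AP) (j x i : ℕ) :
    shiftAsg As j x i = As x (i + j) := rfl

theorem shiftAsg_shiftAsg {AP : Type} (As : ℕ → Trace AP) (j k : ℕ) :
    shiftAsg (shiftAsg As j) k = shiftAsg As (j + k) := by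
  funext x i
  simp only [shiftAsg_apply]
  congr 1
  omega

def qtt : QF ℕ := .disj (.atom 0 0) (.neg (.atom 0 0))
def qand (a b : QF ℕ) : QF ℕ := .neg (.disj (.neg a) (.neg b))
def qF (a : QF ℕ) : QF ℕ := .untl qtt a
def qG (a : QF ℕ) : QF ℕ := .neg (qF (.neg a))
def qall : List (QF ℕ) → QF ℕ := List.foldr qand qtt
def qany : List (QF ℕ) → QF ℕ := List.foldr .disj (.neg qtt)
def qnextN : ℕ → QF ℕ → QF ℕ
  | 0, q => q
  | n + 1, q => .next (qnextN n q)

theorem sat_qtt (As) : qtt.sat As := by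
  simp only [qtt, QF.sat]; exact em _

theorem sat_qand (a b : QF ℕ) (As) : (qand a b).sat As ↔ a.sat As ∧ b.sat As := by
  simp only [qand, QF.sat]; tauto

theorem sat_qF (a : QF ℕ) (As) : (qF a).sat As ↔ ∃ j, a.sat (shiftAsg As j) := by
  simp [qF, QF.sat, sat_qtt]

theorem sat_qG (a : QF ℕ) (As) : (qG a).sat As ↔ ∀ j, a.sat (shiftAsg As j) := by
  simp [qG, QF.sat, sat_qF]

theorem sat_qall (l : List (QF ℕ)) (As) : (qall l).sat As ↔ ∀ q ∈ l, q.sat As := by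
  induction l with
  | nil => simp [qall, sat_qtt]
  | cons a l ih =>
    have : qall (a :: l) = qand a (qall l) := rfl
    simp [this, sat_qand, ih]

theorem sat_qany (l : List (QF ℕ)) (As) : (qany l).sat As ↔ ∃ q ∈ l, q.sat As := by
  induction l with
  | nil => simp [qany, QF.sat, sat_qtt]
  | cons a l ih =>
    have : qany (a :: l) = .disj a (qany l) := rfl
    simp [this, QF.sat, ih]

theorem sat_qnextN (n : ℕ) (q : QF ℕ) (As) :
    (qnextN n q).sat As ↔ q.sat (shiftAsg As n) := by
  induction n generalizing As with
  | zero => rfl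
  | succ n ih =>
    simp only [qnextN, QF.sat, ih, shiftAsg_shiftAsg]
    rw [Nat.add_comm]

/-- A strict upper bound on the trace variables of a formula. -/
def QF.bd : QF ℕ → ℕ
  | .atom _ x => x + 1
  | .neg a => a.bd
  | .disj a b => max a.bd b.bd
  | .next a => a.bd
  | .untl a b => max a.bd b.bd

theorem QF.lt_bd (q : QF ℕ) : ∀ x ∈ q.freeVars, x < q.bd := by
  induction q with
  | atom a x => simp [QF.freeVars, QF.bd]
  | neg a ih => exact ih
  | next a ih => exact ih
  | disj a b iha ihb =>
    rintro x (h | h)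
    · exact lt_max_of_lt_left (iha x h)
    · exact lt_max_of_lt_right (ihb x h)
  | untl a b iha ihb =>
    rintro x (h | h)
    · exact lt_max_of_lt_left (iha x h)
    · exact lt_max_of_lt_right (ihb x h)

theorem bd_qnextN (n : ℕ) (q : QF ℕ) : (qnextN n q).bd = q.bd := by
  induction n with
  | zero => rfl
  | succ n ih => simpa [qnextN, QF.bd] using ih

theorem bd_qand (a b : QF ℕ) : (qand a b).bd = max a.bd b.bd := rfl

theorem bd_qall_le (l : List (QF ℕ)) (k : ℕ) (hk : 1 ≤ k) (h : ∀ q ∈ l, q.bd ≤ k) :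
    (qall l).bd ≤ k := by
  induction l with
  | nil => simpa [qall, qtt, QF.bd] using hk
  | cons a l ih =>
    have : qall (a :: l) = qand a (qall l) := rfl
    rw [this, bd_qand]
    exact max_le (h a (by simp)) (ih fun q hq => h q (by simp [hq]))

theorem bd_qany_le (l : List (QF ℕ)) (k : ℕ) (hk : 1 ≤ k) (h : ∀ q ∈ l, q.bd ≤ k) :
    (qany l).bd ≤ k := by
  induction l with
  | nil => simpa [qany, qtt, QF.bd] using hk
  | cons a l ih =>
    have : qany (a :: l) = .disj a (qany l) := rfl
    rw [this]
    exact max_le (h a (by simp)) (ih fun q hq => h q (by simp [hq]))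

/-! ### Computability of families of formulas -/

/-- A family of quantifier-free formulas with primitive recursive code. -/
def PQ {α : Type} [Primcodable α] (q : α → QF ℕ) : Prop :=
  Primrec fun a => (q a).codeWith id

/-- A family of formulas with primitive recursive code. -/
def PH {α : Type} [Primcodable α] (q : α → HFormula ℕ) : Prop :=
  Primrec fun a => (q a).codeWith id

section
variable {α β : Type} [Primcodable α] [Primcodable β]

theorem PQ.const (q : QF ℕ) : PQ fun _ : α => q := Primrec.const _

theorem PQ.atom {a : α → ℕ} (ha : Primrec a) (x : ℕ) : PQ fun i => .atom (a i) x :=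
  Primrec₂.natPair.comp (Primrec.const 0) (Primrec₂.natPair.comp ha (Primrec.const x))

theorem PQ.neg {q : α → QF ℕ} (h : PQ q) : PQ fun i => .neg (q i) :=
  Primrec₂.natPair.comp (Primrec.const 1) h

theorem PQ.next {q : α → QF ℕ} (h : PQ q) : PQ fun i => .next (q i) :=
  Primrec₂.natPair.comp (Primrec.const 3) h

theorem PQ.disj {q r : α → QF ℕ} (h : PQ q) (h' : PQ r) : PQ fun i => .disj (q i) (r i) :=
  Primrec₂.natPair.comp (Primrec.const 2) (Primrec₂.natPair.comp h h')

theorem PQ.untl {q r : α → QF ℕ} (h : PQ q) (h' : PQ r) : PQ fun i => .untl (q i) (r i) :=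
  Primrec₂.natPair.comp (Primrec.const 4) (Primrec₂.natPair.comp h h')

theorem PQ.qand {q r : α → QF ℕ} (h : PQ q) (h' : PQ r) : PQ fun i => qand (q i) (r i) :=
  (h.neg.disj h'.neg).neg

theorem PQ.qF {q : α → QF ℕ} (h : PQ q) : PQ fun i => qF (q i) :=
  (PQ.const qtt).untl h

theorem PQ.qG {q : α → QF ℕ} (h : PQ q) : PQ fun i => qG (q i) :=
  h.neg.qF.neg

theorem PQ.ite {c : α → Prop} [DecidablePred c] (hc : PrimrecPred c) {q r : α → QF ℕ}
    (h : PQ q) (h' : PQ r) : PQ fun i => if c i then q i else r i := by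
  have := Primrec.ite hc h h'
  refine this.of_eq fun i => ?_
  by_cases hi : c i <;> simp [hi]

theorem PQ.foldr (op : QF ℕ → QF ℕ → QF ℕ) (cop : ℕ → ℕ → ℕ) (hcop : Primrec₂ cop)
    (hop : ∀ a b, (op a b).codeWith id = cop (a.codeWith id) (b.codeWith id)) (z : QF ℕ)
    {L : α → List β} (hL : Primrec L) {q : α → β → QF ℕ} (h : PQ fun p : α × β => q p.1 p.2) :
    PQ fun i => List.foldr op z ((L i).map (q i)) := by
  have h2 : Primrec₂ fun (i : α) (p : β × ℕ) => cop ((q i p.1).codeWith id) p.2 :=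
    hcop.comp
      (h.comp (Primrec.pair Primrec.fst (Primrec.fst.comp Primrec.snd)))
      (Primrec.snd.comp Primrec.snd)
  have := Primrec.list_foldr hL (Primrec.const (α := α) (z.codeWith id)) h2
  refine this.of_eq fun i => ?_
  beta_reduce
  induction L i with
  | nil => rfl
  | cons b l ih => simp only [List.foldr_cons, List.map_cons, hop, ih]

theorem PQ.qall {L : α → List β} (hL : Primrec L) {q : α → β → QF ℕ}
    (h : PQ fun p : α × β => q p.1 p.2) : PQ fun i => qall ((L i).map (q i)) := by
  refine PQ.foldr _ (fun a b => Nat.pair 1 (Nat.pair 2 (Nat.pair (Nat.pair 1 a) (Nat.pair 1 b))))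
    ?_ (fun a b => rfl) _ hL h
  have p1 : Primrec fun a : ℕ => Nat.pair 1 a :=
    Primrec₂.natPair.comp (Primrec.const 1) Primrec.id
  have p2 : Primrec fun a : ℕ => Nat.pair 2 a :=
    Primrec₂.natPair.comp (Primrec.const 2) Primrec.id
  exact p1.comp (p2.comp (Primrec₂.natPair.comp (p1.comp Primrec.fst) (p1.comp Primrec.snd)))

theorem PQ.qany {L : α → List β} (hL : Primrec L) {q : α → β → QF ℕ}
    (h : PQ fun p : α × β => q p.1 p.2) : PQ fun i => qany ((L i).map (q i)) := by
  refine PQ.foldr _ (fun a b => Nat.pair 2 (Nat.pair a b))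
    ?_ (fun a b => rfl) _ hL h
  exact Primrec₂.natPair.comp (Primrec.const 2) (Primrec₂.natPair.comp Primrec.fst Primrec.snd)

theorem PQ.qnextN (q : QF ℕ) : PQ fun n : ℕ => qnextN n q := by
  have h2 : Primrec₂ fun (_ : ℕ) (c : ℕ) => Nat.pair 3 c :=
    Primrec₂.natPair.comp (Primrec.const 3) Primrec.snd
  refine (Primrec.nat_rec₁ (q.codeWith id) h2).of_eq fun n => ?_
  induction n with
  | zero => rfl
  | succ n ih => simp only [ih]; rfl

theorem PH.qf {q : α → QF ℕ} (h : PQ q) : PH fun i => .qf (q i) :=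
  Primrec₂.natPair.comp (Primrec.const 2) h

theorem PH.ex (x : ℕ) {q : α → HFormula ℕ} (h : PH q) : PH fun i => .ex x (q i) :=
  Primrec₂.natPair.comp (Primrec.const 0) (Primrec₂.natPair.comp (Primrec.const x) h)

theorem PH.all (x : ℕ) {q : α → HFormula ℕ} (h : PH q) : PH fun i => .all x (q i) :=
  Primrec₂.natPair.comp (Primrec.const 1) (Primrec₂.natPair.comp (Primrec.const x) h)

end

/-! ### The tiling reduction -/

/-- Tiles are used as atomic propositions through their code. -/
def tenc (τ : Tile) : ℕ := Encodable.encode τ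

/-- Co-occurring tiles on successive positions of a column, or on the same position of
successive columns, have to match. -/
def tbad (τ τ' : Tile) : QF ℕ :=
  qand (if τ.north = τ'.south then qtt
      else .neg (qand (.atom (tenc τ) 1) (.next (.atom (tenc τ') 1))))
    (if τ.east = τ'.west then qtt
      else .neg (qand (.atom (tenc τ) 1) (.atom (tenc τ') 2)))

/-- The matrix of the tiling sentence. -/
def tmat (L : List Tile) (τ₀ : Tile) : QF ℕ :=
  qand (qG (qF (.atom (tenc τ₀) 0)))
    (qG (qand (qany (L.map fun τ => .atom (tenc τ) 1))
      (qall (L.map fun τ => qall (L.map fun τ' => tbad τ τ')))))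

/-- The tiling sentence: traces are the columns of the tiling. -/
def tform (L : List Tile) (τ₀ : Tile) : HFormula ℕ :=
  .ex 0 (.all 1 (.ex 2 (.qf (tmat L τ₀))))

theorem tform_sentence (L : List Tile) (τ₀ : Tile) : (tform L τ₀).IsSentence := by
  have hb : (tmat L τ₀).bd ≤ 3 := by
    have h1 : ∀ τ τ' : Tile, (tbad τ τ').bd ≤ 3 := by
      intro τ τ'
      unfold tbad
      split <;> split <;> simp [qand, qtt, QF.bd]
    have h2 : (qany (L.map fun τ => .atom (tenc τ) 1)).bd ≤ 3 := by
      apply bd_qany_le _ _ (by norm_num)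
      simp only [List.mem_map]
      rintro q ⟨τ, -, rfl⟩
      simp [QF.bd]
    have h3 : (qall (L.map fun τ => qall (L.map fun τ' => tbad τ τ'))).bd ≤ 3 := by
      apply bd_qall_le _ _ (by norm_num)
      simp only [List.mem_map]
      rintro q ⟨τ, -, rfl⟩
      apply bd_qall_le _ _ (by norm_num)
      simp only [List.mem_map]
      rintro q ⟨τ', -, rfl⟩
      exact h1 _ _
    simp only [tmat, bd_qand, qG, qF, QF.bd, qtt]
    omega
  rw [HFormula.IsSentence, Set.eq_empty_iff_forall_notMem]
  intro x hx
  simp only [tform, HFormula.freeVars, Set.mem_sdiff, Set.mem_singleton_iff] at hx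
  have := QF.lt_bd _ x hx.1.1.1
  omega

theorem tform_prim : Primrec fun p : List Tile × Tile => (tform p.1 p.2).codeWith id := by
  have hn : Primrec Tile.north := Primrec.fst.comp (Primrec.snd.comp Primrec.snd)
  have hs : Primrec Tile.south := Primrec.snd.comp (Primrec.snd.comp Primrec.snd)
  have he : Primrec Tile.east := Primrec.fst
  have hw : Primrec Tile.west := Primrec.fst.comp Primrec.snd
  have ht : Primrec tenc := Primrec.encode
  have hbad : PQ fun p : ((List Tile × Tile) × Tile) × Tile => tbad p.1.2 p.2 := by
    have a1 : Primrec fun p : ((List Tile × Tile) × Tile) × Tile => p.1.2 :=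
      Primrec.snd.comp Primrec.fst
    have a2 : Primrec fun p : ((List Tile × Tile) × Tile) × Tile => p.2 := Primrec.snd
    refine PQ.qand (PQ.ite (Primrec.eq.comp (hn.comp a1) (hs.comp a2)) (PQ.const _) ?_)
      (PQ.ite (Primrec.eq.comp (he.comp a1) (hw.comp a2)) (PQ.const _) ?_)
    · exact ((PQ.atom (ht.comp a1) 1).qand (PQ.atom (ht.comp a2) 1).next).neg
    · exact ((PQ.atom (ht.comp a1) 1).qand (PQ.atom (ht.comp a2) 2)).neg
  refine PH.ex 0 (PH.all 1 (PH.ex 2 (PH.qf ?_)))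
  refine PQ.qand (PQ.atom (ht.comp Primrec.snd) 0).qF.qG (PQ.qG (PQ.qand ?_ ?_))
  · exact PQ.qany Primrec.fst (PQ.atom (ht.comp Primrec.snd) 1)
  · exact PQ.qall Primrec.fst (q := fun p τ => qall (p.1.map fun τ' => tbad τ τ'))
      (PQ.qall (Primrec.fst.comp Primrec.fst) hbad)

theorem tmat_sat (L : List Tile) (τ₀ : Tile) (As : ℕ → Trace ℕ) :
    (tmat L τ₀).sat As ↔ (∀ m, ∃ j, m ≤ j ∧ tenc τ₀ ∈ As 0 j) ∧
      ∀ j, (∃ τ ∈ L, tenc τ ∈ As 1 j) ∧ ∀ τ ∈ L, ∀ τ' ∈ L, tenc τ ∈ As 1 j →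
        (tenc τ' ∈ As 1 (j + 1) → τ.north = τ'.south) ∧
        (tenc τ' ∈ As 2 j → τ.east = τ'.west) := by
  have hbad : ∀ τ τ' As, (tbad τ τ').sat As ↔ (tenc τ ∈ As 1 0 →
        (tenc τ' ∈ As 1 1 → τ.north = τ'.south) ∧
        (tenc τ' ∈ As 2 0 → τ.east = τ'.west)) := by
    intro τ τ' As
    unfold tbad
    rw [sat_qand]
    split <;> split <;> simp [sat_qtt, sat_qand, QF.sat, shiftAsg_apply, *]
    tauto
  simp only [tmat, sat_qand, sat_qG, sat_qF, sat_qany, sat_qall, List.mem_map,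
    exists_exists_and_eq_and, forall_exists_index, and_imp, forall_apply_eq_imp_iff₂, hbad,
    QF.sat, shiftAsg_apply, Nat.zero_add, Nat.add_comm 1]
  refine and_congr_left fun _ => forall_congr' fun m => ?_
  constructor
  · rintro ⟨j, h⟩; exact ⟨j + m, by omega, h⟩
  · rintro ⟨j, h, h'⟩; exact ⟨j - m, by rwa [Nat.sub_add_cancel h]⟩

theorem tform_correct (L : List Tile) (τ₀ : Tile) (h₀ : τ₀ ∈ L) :
    HSatisfiable (tform L τ₀) ↔ ∃ ti : ℕ × ℕ → Tile, (∀ p, ti p ∈ L) ∧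
    (∀ i j, (ti (i, j)).east = (ti (i + 1, j)).west) ∧
    (∀ i j, (ti (i, j)).north = (ti (i, j + 1)).south) ∧
    (∀ m, ∃ j, m ≤ j ∧ ti (0, j) = τ₀) := by
  constructor
  · rintro ⟨T, t0, ht0, h⟩
    simp only [HFormula.sat, tmat_sat] at h
    simp [Function.update] at h
    obtain ⟨_, _, hrec, -⟩ := h t0 ht0
    choose! nx hnx hrec' hall using h
    let col : ℕ → Trace ℕ := fun i => nx^[i] t0
    have hcol : ∀ i, col i ∈ T := by
      intro i
      induction i with
      | zero => exact ht0
      | succ i ih =>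
        have : col (i + 1) = nx (col i) := Function.iterate_succ_apply' _ _ _
        rw [this]; exact hnx _ ih
    have hsucc : ∀ i, col (i + 1) = nx (col i) := fun i => Function.iterate_succ_apply' _ _ _
    have hex : ∀ p : ℕ × ℕ, ∃ τ ∈ L, tenc τ ∈ col p.1 p.2 ∧
        (tenc τ₀ ∈ col p.1 p.2 → τ = τ₀) := by
      intro p
      by_cases hp : tenc τ₀ ∈ col p.1 p.2
      · exact ⟨τ₀, h₀, hp, fun _ => rfl⟩
      · obtain ⟨⟨a, b, c, d, hL, hm⟩, -⟩ := hall _ (hcol p.1) p.2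
        exact ⟨(a, b, c, d), hL, hm, fun h => absurd h hp⟩
    choose ti hL hm hz using hex
    refine ⟨ti, hL, ?_, ?_, ?_⟩
    · intro i j
      have h1 := (hall _ (hcol i) j).2 _ _ _ _ (hL (i, j)) _ _ _ _ (hL (i + 1, j)) (hm (i, j))
      apply h1.2
      have h2 := hm (i + 1, j)
      simp only [hsucc] at h2
      exact h2
    · intro i j
      have h1 := (hall _ (hcol i) j).2 _ _ _ _ (hL (i, j)) _ _ _ _ (hL (i, j + 1)) (hm (i, j))
      exact h1.1 (hm (i, j + 1))
    · intro m
      obtain ⟨j, hj, hh⟩ := hrec m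
      exact ⟨j, hj, hz (0, j) hh⟩
  · rintro ⟨ti, hL, he, hn, hr⟩
    have hinj : ∀ a b, tenc a = tenc b → a = b := fun a b h => Encodable.encode_injective h
    refine ⟨Set.range fun i : ℕ => (fun j => {tenc (ti (i, j))} : Trace ℕ), _, ⟨0, rfl⟩, ?_⟩
    rintro _ ⟨i, rfl⟩
    refine ⟨_, ⟨i + 1, rfl⟩, ?_⟩
    rw [HFormula.sat, tmat_sat]
    refine ⟨?_, ?_⟩
    · intro m
      obtain ⟨j, hj, h⟩ := hr m
      exact ⟨j, hj, by simp [Function.update, h]⟩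
    · intro j
      refine ⟨⟨ti (i, j), hL _, by simp [Function.update]⟩, ?_⟩
      intro τ _ τ' _ h1
      have h1 := hinj _ _ (show tenc τ = tenc (ti (i, j)) from h1)
      subst h1
      refine ⟨fun h2 => ?_, fun h2 => ?_⟩
      · have h2 := hinj _ _ (show tenc τ' = tenc (ti (i, j + 1)) from h2)
        subst h2
        exact hn i j
      · have h2 := hinj _ _ (show tenc τ' = tenc (ti (i + 1, j)) from h2)
        subst h2
        exact he i j

/-- The elements of a finite set of tiles as a list, read off the code of the set. -/
def tlist (s : Finset Tile) : List Tile :=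
  (Encodable.decode (α := List Tile) (Encodable.encode s)).getD []

theorem mem_tlist (s : Finset Tile) (τ : Tile) : τ ∈ tlist s ↔ τ ∈ s := by
  have h : Encodable.decode (α := Multiset Tile) (Encodable.encode s.val) = some s.val :=
    Encodable.encodek _
  have h' : ((↑) : List Tile → Multiset Tile) <$>
      Encodable.decode (α := List Tile) (Encodable.encode s) = some s.val := h
  obtain ⟨l, hl, hl'⟩ := Option.map_eq_some_iff.1 h'
  rw [tlist, hl, Option.getD_some, ← Finset.mem_val, ← hl']
  rfl

theorem tiling_part : ∃ toForm : Finset Tile × Tile → HFormula ℕ,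
      (∀ inst, (toForm inst).IsSentence) ∧
      (∃ f : ℕ → ℕ, Computable f ∧
        ∀ inst : Finset Tile × Tile,
          f (Encodable.encode inst) = HFormula.codeWith id (toForm inst)) ∧
      (∀ (Ti : Finset Tile) (τ₀ : Tile), τ₀ ∈ Ti →
        (HSatisfiable (toForm (Ti, τ₀)) ↔ RecurTiling Ti τ₀)) := by
  refine ⟨fun p => tform (tlist p.1) p.2, fun _ => tform_sentence _ _, ?_, ?_⟩
  · refine ⟨fun n => (fun p : List Tile × Tile => (tform p.1 p.2).codeWith id)
      ((Encodable.decode (α := List Tile) n.unpair.1).getD [],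
        (Encodable.decode (α := Tile) n.unpair.2).getD (0, 0, 0, 0)), ?_, ?_⟩
    · refine (tform_prim.comp (Primrec.pair ?_ ?_)).to_comp
      · exact Primrec.option_getD.comp
          (Primrec.decode.comp (Primrec.fst.comp Primrec.unpair)) (Primrec.const _)
      · exact Primrec.option_getD.comp
          (Primrec.decode.comp (Primrec.snd.comp Primrec.unpair)) (Primrec.const _)
    · rintro ⟨s, τ⟩
      simp only [Encodable.encode_prod_val, Nat.unpair_pair, Encodable.encodek, Option.getD_some]
      rfl
  · intro Ti τ₀ h
    rw [tform_correct _ _ ((mem_tlist _ _).2 h)]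
    simp only [mem_tlist, RecurTiling]

/-! ### Constraint formulas over tuples of natural numbers -/

/-- Constraints between the components (indexed by `κ`) of tuples `W x : κ → ℕ`. -/
inductive CF (κ : Type) : Type where
  | eq : κ → ℕ → κ → ℕ → CF κ
  | succ : κ → ℕ → κ → ℕ → CF κ
  | lt : κ → ℕ → κ → ℕ → CF κ
  | const : ℕ → κ → ℕ → CF κ
  | neg : CF κ → CF κ
  | and : CF κ → CF κ → CF κ
  | tt : CF κ

namespace CF
variable {κ : Type}

def sem : CF κ → (ℕ → κ → ℕ) → Prop
  | .eq a x b y, W => W x a = W y b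
  | .succ a x b y, W => W y b = W x a + 1
  | .lt a x b y, W => W x a < W y b
  | .const n a x, W => W x a = n
  | .neg c, W => ¬ c.sem W
  | .and c d, W => c.sem W ∧ d.sem W
  | .tt, _ => True

def ren (r : ℕ → ℕ) : CF κ → CF κ
  | .eq a x b y => .eq a (r x) b (r y)
  | .succ a x b y => .succ a (r x) b (r y)
  | .lt a x b y => .lt a (r x) b (r y)
  | .const n a x => .const n a (r x)
  | .neg c => .neg (c.ren r)
  | .and c d => .and (c.ren r) (d.ren r)
  | .tt => .tt

theorem sem_ren (r : ℕ → ℕ) (c : CF κ) (W : ℕ → κ → ℕ) :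
    (c.ren r).sem W ↔ c.sem (fun x => W (r x)) := by
  induction c with
  | neg c ih => simp [ren, sem, ih]
  | and c d ih ih' => simp [ren, sem, ih, ih']
  | _ => simp [ren, sem]

/-- The occurring pairs of a trace variable and a component. -/
def atoms : CF κ → List (ℕ × κ)
  | .eq a x b y => [(x, a), (y, b)]
  | .succ a x b y => [(x, a), (y, b)]
  | .lt a x b y => [(x, a), (y, b)]
  | .const _ a x => [(x, a)]
  | .neg c => c.atoms
  | .and c d => c.atoms ++ d.atoms
  | .tt => []

def imp (c d : CF κ) : CF κ := .neg (.and c (.neg d))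
def iff (c d : CF κ) : CF κ := .and (imp c d) (imp d c)
def all (l : List (CF κ)) : CF κ := l.foldr .and .tt

theorem sem_imp (c d : CF κ) (W) : (imp c d).sem W ↔ (c.sem W → d.sem W) := by
  simp only [imp, sem]; tauto

theorem sem_iff (c d : CF κ) (W) : (iff c d).sem W ↔ (c.sem W ↔ d.sem W) := by
  simp only [iff, sem, sem_imp]; tauto

theorem sem_all (l : List (CF κ)) (W) : (all l).sem W ↔ ∀ c ∈ l, c.sem W := by
  induction l with
  | nil => simp [all, sem]
  | cons a l ih =>
    have : all (a :: l) = .and a (all l) := rfl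
    simp [this, sem, ih]

theorem atoms_ren (r : ℕ → ℕ) (c : CF κ) : ∀ p ∈ (c.ren r).atoms, ∃ z, p.1 = r z := by
  induction c with
  | neg c ih => exact ih
  | and c d ih ih' =>
    intro p hp
    rcases List.mem_append.1 hp with h | h
    · exact ih p h
    · exact ih' p h
  | eq a x b y => simp [ren, atoms]
  | succ a x b y => simp [ren, atoms]
  | lt a x b y => simp [ren, atoms]
  | const n a x => simp [ren, atoms]
  | tt => simp [ren, atoms]

theorem atoms_all (l : List (CF κ)) : ∀ p ∈ (all l).atoms, ∃ c ∈ l, p ∈ c.atoms := by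
  induction l with
  | nil => simp [all, atoms]
  | cons a l ih =>
    intro p hp
    have : all (a :: l) = .and a (all l) := rfl
    rw [this, atoms, List.mem_append] at hp
    rcases hp with h | h
    · exact ⟨a, by simp, h⟩
    · obtain ⟨c, hc, h⟩ := ih p h
      exact ⟨c, by simp [hc], h⟩

end CF

/-- The proposition `a` holds exactly once. -/
def qonce (a x : ℕ) : QF ℕ :=
  .untl (.neg (.atom a x)) (qand (.atom a x) (.next (qG (.neg (.atom a x)))))

theorem sat_qonce (a x : ℕ) (As : ℕ → Trace ℕ) :
    (qonce a x).sat As ↔ ∃ k, ∀ i, a ∈ As x i ↔ i = k := by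
  simp only [qonce, QF.sat, sat_qand, sat_qG, shiftAsg_apply, Nat.zero_add]
  constructor
  · rintro ⟨j, ⟨h1, h2⟩, h3⟩
    refine ⟨j, fun i => ⟨fun h => ?_, fun h => h ▸ h1⟩⟩
    rcases lt_trichotomy i j with hij | hij | hij
    · exact absurd h (h3 i hij)
    · exact hij
    · have := h2 (i - (j + 1))
      rw [show i - (j + 1) + 1 + j = i by omega] at this
      exact absurd h this
  · rintro ⟨k, h⟩
    refine ⟨k, ⟨(h k).2 rfl, fun j => ?_⟩, fun j hj => ?_⟩
    · rw [h]; omega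
    · rw [h]; omega

/-- The first position of the proposition `a`. -/
noncomputable def tval (t : Trace ℕ) (a : ℕ) : ℕ := sInf {i | a ∈ t i}

theorem tval_eq {t : Trace ℕ} {a k : ℕ} (h : ∀ i, a ∈ t i ↔ i = k) : tval t a = k := by
  simp [tval, h]

theorem mem_iff_tval {t : Trace ℕ} {a : ℕ} (h : ∃ k, ∀ i, a ∈ t i ↔ i = k) (i : ℕ) :
    a ∈ t i ↔ i = tval t a := by
  obtain ⟨k, h⟩ := h
  rw [tval_eq h, h]

def qiff (a b : QF ℕ) : QF ℕ := .disj (qand a b) (qand (.neg a) (.neg b))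

theorem sat_qiff (a b : QF ℕ) (As) : (qiff a b).sat As ↔ (a.sat As ↔ b.sat As) := by
  simp only [qiff, QF.sat, sat_qand]; tauto

namespace CF
variable {κ : Type} (ι : κ → ℕ)

/-- Translation into HyperLTL, correct if all components occur exactly once. -/
def pre : CF κ → QF ℕ
  | .eq a x b y => qG (qiff (.atom (ι a) x) (.atom (ι b) y))
  | .succ a x b y =>
      qand (.neg (.atom (ι b) y)) (qG (qiff (.atom (ι a) x) (.next (.atom (ι b) y))))
  | .lt a x b y => qF (qand (.atom (ι a) x) (.next (qF (.atom (ι b) y))))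
  | .const n a x => qnextN n (.atom (ι a) x)
  | .neg c => .neg c.pre
  | .and c d => qand c.pre d.pre
  | .tt => qtt

theorem sat_pre (c : CF κ) (As : ℕ → Trace ℕ)
    (h : ∀ p ∈ c.atoms, ∃ k, ∀ i, ι p.2 ∈ As p.1 i ↔ i = k) :
    (c.pre ι).sat As ↔ c.sem (fun x a => tval (As x) (ι a)) := by
  induction c with
  | eq a x b y =>
    simp only [atoms, List.mem_cons, List.not_mem_nil, or_false, forall_eq_or_imp, forall_eq] at h
    simp only [pre, sat_qG, sat_qiff, QF.sat, shiftAsg_apply, mem_iff_tval h.1,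
      mem_iff_tval h.2, sem]
    constructor
    · intro h'
      have := h' (tval (As x) (ι a))
      omega
    · intro h' j
      rw [h']
  | succ a x b y =>
    simp only [atoms, List.mem_cons, List.not_mem_nil, or_false, forall_eq_or_imp, forall_eq] at h
    simp only [pre, sat_qand, sat_qG, sat_qiff, QF.sat, shiftAsg_apply, mem_iff_tval h.1,
      mem_iff_tval h.2, sem]
    constructor
    · rintro ⟨-, h'⟩
      have := h' (tval (As x) (ι a))
      omega
    · intro h'
      exact ⟨by omega, fun j => by omega⟩
  | lt a x b y =>
    simp only [atoms, List.mem_cons, List.not_mem_nil, or_false, forall_eq_or_imp, forall_eq] at h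
    simp only [pre, sat_qand, sat_qF, QF.sat, shiftAsg_apply, mem_iff_tval h.1,
      mem_iff_tval h.2, sem]
    constructor
    · rintro ⟨j, h1, k, h2⟩
      omega
    · intro h'
      exact ⟨tval (As x) (ι a), by omega, tval (As y) (ι b) - (tval (As x) (ι a) + 1), by omega⟩
  | const n a x =>
    simp only [atoms, List.mem_cons, List.not_mem_nil, or_false, forall_eq] at h
    simp only [pre, sat_qnextN, QF.sat, shiftAsg_apply, mem_iff_tval h, sem]
    omega
  | neg c ih => simp only [pre, QF.sat, sem, ih h]
  | and c d ih ih' =>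
    simp only [atoms, List.mem_append] at h
    simp only [pre, sat_qand, sem, ih fun p hp => h p (Or.inl hp),
      ih' fun p hp => h p (Or.inr hp)]
  | tt => simp [pre, sem, sat_qtt]

def tr (c : CF κ) : QF ℕ := qand (qall (c.atoms.map fun p => qonce (ι p.2) p.1)) (c.pre ι)

theorem sat_tr (c : CF κ) (As : ℕ → Trace ℕ) :
    (c.tr ι).sat As ↔ (∀ p ∈ c.atoms, ∃ k, ∀ i, ι p.2 ∈ As p.1 i ↔ i = k) ∧
      c.sem (fun x a => tval (As x) (ι a)) := by
  rw [tr, sat_qand, sat_qall]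
  simp only [List.mem_map, forall_exists_index, and_imp, forall_apply_eq_imp_iff₂, sat_qonce]
  exact and_congr_right fun h => sat_pre ι c As h

end CF

/-- A tuple as a trace. -/
def tupTrace {κ : Type} (ι : κ → ℕ) (w : κ → ℕ) : Trace ℕ := fun i => {n | ∃ a, ι a = n ∧ w a = i}

theorem mem_tupTrace {κ : Type} {ι : κ → ℕ} (hι : ι.Injective) (w : κ → ℕ) (a : κ) (i : ℕ) :
    ι a ∈ tupTrace ι w i ↔ i = w a := by
  simp only [tupTrace, Set.mem_ofPred_eq, hι.eq_iff, exists_eq_left]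
  exact eq_comm

theorem tval_tupTrace {κ : Type} {ι : κ → ℕ} (hι : ι.Injective) (w : κ → ℕ) (a : κ) :
    tval (tupTrace ι w) (ι a) = w a := tval_eq (mem_tupTrace hι w a)

/-! ### Prefixes -/

/-- `k` existential quantifiers over the variables `s, s+1, …`. -/
def exs : ℕ → ℕ → HFormula ℕ → HFormula ℕ
  | _, 0, φ => φ
  | s, k + 1, φ => .ex s (exs (s + 1) k φ)

theorem PH.exs {α : Type} [Primcodable α] {q : α → HFormula ℕ} (h : PH q) (s k : ℕ) :
    PH fun i => exs s k (q i) := by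
  induction k generalizing s with
  | zero => exact h
  | succ k ih => exact PH.ex s (ih (s + 1))

theorem freeVars_exs (s k : ℕ) (φ : HFormula ℕ) (x : ℕ) (hx : x ∈ (exs s k φ).freeVars) :
    x ∈ φ.freeVars ∧ ¬ (s ≤ x ∧ x < s + k) := by
  induction k generalizing s with
  | zero => exact ⟨hx, by omega⟩
  | succ k ih =>
    have h1 : x ≠ s := hx.2
    have := ih (s + 1) hx.1
    exact ⟨this.1, by omega⟩

theorem sat_exs (T : Set (Trace ℕ)) (s k : ℕ) (φ : HFormula ℕ) (As : ℕ → Trace ℕ) :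
    (exs s k φ).sat T As ↔ ∃ As' : ℕ → Trace ℕ, (∀ x, s ≤ x → x < s + k → As' x ∈ T) ∧
      (∀ x, ¬ (s ≤ x ∧ x < s + k) → As' x = As x) ∧ φ.sat T As' := by
  induction k generalizing s As with
  | zero =>
    constructor
    · intro h
      exact ⟨As, fun x h1 h2 => by omega, fun _ _ => rfl, h⟩
    · rintro ⟨As', -, h, h'⟩
      have : As' = As := funext fun x => h x (by omega)
      exact this ▸ h'
  | succ k ih =>
    simp only [exs, HFormula.sat, ih]
    constructor
    · rintro ⟨t, ht, As', h1, h2, h3⟩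
      refine ⟨As', fun x hx hx' => ?_, fun x hx => ?_, h3⟩
      · rcases eq_or_ne x s with rfl | hne
        · rw [h2 x (by omega)]; simpa using ht
        · exact h1 x (by omega) (by omega)
      · rw [h2 x (by omega), Function.update_of_ne (by omega)]
    · rintro ⟨As', h1, h2, h3⟩
      refine ⟨As' s, h1 s le_rfl (by omega), As', fun x hx hx' => h1 x (by omega) (by omega),
        fun x hx => ?_, h3⟩
      rcases eq_or_ne x s with rfl | hne
      · simp
      · rw [Function.update_of_ne hne, h2 x (by omega)]

def sent (m : ℕ) (q : QF ℕ) : HFormula ℕ := .ex 0 (.all 1 (.all 2 (.all 3 (exs 4 m (.qf q)))))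

theorem sent_sentence (m : ℕ) (q : QF ℕ) (h : q.bd ≤ m) : (sent m q).IsSentence := by
  rw [HFormula.IsSentence, Set.eq_empty_iff_forall_notMem]
  intro x hx
  simp only [sent, HFormula.freeVars, Set.mem_sdiff, Set.mem_singleton_iff] at hx
  have h1 := freeVars_exs _ _ _ _ hx.1.1.1.1
  have := QF.lt_bd _ x h1.1
  omega

/-! ### Injectivity of the coding of formulas -/

theorem QF.code_inj : ∀ {q r : QF ℕ}, q.codeWith id = r.codeWith id → q = r := by
  intro q
  induction q with
  | atom a x => intro r h; cases r <;> simp_all [QF.codeWith, Nat.pair_eq_pair]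
  | neg a ih =>
    intro r h
    cases r <;> simp [QF.codeWith, Nat.pair_eq_pair] at h
    rw [ih h]
  | next a ih =>
    intro r h
    cases r <;> simp [QF.codeWith, Nat.pair_eq_pair] at h
    rw [ih h]
  | disj a b ih ih' =>
    intro r h
    cases r <;> simp [QF.codeWith, Nat.pair_eq_pair] at h
    rw [ih h.1, ih' h.2]
  | untl a b ih ih' =>
    intro r h
    cases r <;> simp [QF.codeWith, Nat.pair_eq_pair] at h
    rw [ih h.1, ih' h.2]

theorem HFormula.code_inj : ∀ {q r : HFormula ℕ}, q.codeWith id = r.codeWith id → q = r := by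
  intro q
  induction q with
  | qf a =>
    intro r h
    cases r <;> simp [HFormula.codeWith, Nat.pair_eq_pair] at h
    rw [QF.code_inj h]
  | ex x a ih =>
    intro r h
    cases r <;> simp [HFormula.codeWith, Nat.pair_eq_pair] at h
    rw [h.1, ih h.2]
  | all x a ih =>
    intro r h
    cases r <;> simp [HFormula.codeWith, Nat.pair_eq_pair] at h
    rw [h.1, ih h.2]

/-! ### Satisfiability of constraint systems -/

def tri {κ : Type} (w1 w2 w3 : κ → ℕ) : ℕ → κ → ℕ :=
  fun z => if z = 1 then w1 else if z = 2 then w2 else w3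

def duo {κ : Type} (w1 w : κ → ℕ) : ℕ → κ → ℕ := fun z => if z = 1 then w1 else w

/-- A set `M` of tuples satisfies the constraint system with parameter `n`. -/
def CSat {κ : Type} (X : κ) (root U : CF κ) (E : List (CF κ)) (n : ℕ) (M : Set (κ → ℕ)) : Prop :=
  (∃ w0 ∈ M, w0 X = n ∧ root.sem (fun _ => w0)) ∧
  (∀ w1 ∈ M, ∀ w2 ∈ M, ∀ w3 ∈ M, U.sem (tri w1 w2 w3)) ∧
  (∀ w1 ∈ M, ∀ e ∈ E, ∃ w ∈ M, e.sem (duo w1 w))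

def rest {κ : Type} (root U : CF κ) (E : List (CF κ)) : CF κ :=
  .and (root.ren fun _ => 0) (.and (U.ren fun z => if z = 1 then 1 else if z = 2 then 2 else 3)
    (.all ((List.range E.length).map fun i =>
      (E.getD i .tt).ren fun z => if z = 1 then 1 else 4 + i)))

theorem sem_rest {κ : Type} (root U : CF κ) (E : List (CF κ)) (W : ℕ → κ → ℕ) :
    (rest root U E).sem W ↔ root.sem (fun _ => W 0) ∧ U.sem (tri (W 1) (W 2) (W 3)) ∧
      ∀ i < E.length, (E.getD i .tt).sem (duo (W 1) (W (4 + i))) := by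
  have h1 : ∀ z : ℕ, W (if z = 1 then 1 else if z = 2 then 2 else 3) =
      tri (W 1) (W 2) (W 3) z := by
    intro z; unfold tri; split_ifs <;> rfl
  have h2 : ∀ i z : ℕ, W (if z = 1 then 1 else 4 + i) = duo (W 1) (W (4 + i)) z := by
    intro i z; unfold duo; split_ifs <;> rfl
  simp only [rest, CF.sem, CF.sem_ren, CF.sem_all, List.mem_map, List.mem_range,
    forall_exists_index, and_imp, forall_apply_eq_imp_iff₂, h1, h2]

def cmat {κ : Type} (X : κ) (root U : CF κ) (E : List (CF κ)) (n : ℕ) : CF κ :=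
  .and (.const n X 0) (rest root U E)

theorem atoms_cmat {κ : Type} (X : κ) (root U : CF κ) (E : List (CF κ)) (n : ℕ) :
    ∀ p ∈ (cmat X root U E n).atoms, p.1 < 4 + E.length := by
  intro p hp
  simp only [cmat, rest, CF.atoms, List.mem_append, List.mem_singleton] at hp
  rcases hp with rfl | h | h | h
  · simp
  · obtain ⟨z, hz⟩ := CF.atoms_ren _ _ p h
    omega
  · obtain ⟨z, hz⟩ := CF.atoms_ren _ _ p h
    split_ifs at hz <;> omega
  · obtain ⟨c, hc, h⟩ := CF.atoms_all _ p h
    obtain ⟨i, hi, rfl⟩ := List.mem_map.1 hc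
    obtain ⟨z, hz⟩ := CF.atoms_ren _ _ p h
    have := List.mem_range.1 hi
    split_ifs at hz <;> omega

theorem sent_correct {κ : Type} {ι : κ → ℕ} (hι : ι.Injective) (X : κ) (root U : CF κ)
    (E : List (CF κ)) (n m : ℕ) (hm : E.length ≤ m) :
    HSatisfiable (sent m ((cmat X root U E n).tr ι)) ↔ ∃ M, CSat X root U E n M := by
  constructor
  · rintro ⟨T, t0, ht0, h⟩
    simp only [HFormula.sat, sat_exs, CF.sat_tr, cmat] at h
    have key : ∀ t1 ∈ T, ∀ t2 ∈ T, ∀ t3 ∈ T, ∃ As' : ℕ → Trace ℕ,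
        (∀ x, 4 ≤ x → x < 4 + m → As' x ∈ T) ∧ As' 0 = t0 ∧ As' 1 = t1 ∧ As' 2 = t2 ∧
        As' 3 = t3 ∧ (CF.and (.const n X 0) (rest root U E)).sem
          (fun x a => tval (As' x) (ι a)) := by
      intro t1 h1 t2 h2 t3 h3
      obtain ⟨As', a1, a2, a3, a4⟩ := h t1 h1 t2 h2 t3 h3
      refine ⟨As', a1, ?_, ?_, ?_, ?_, a4⟩
      · rw [a2 0 (by omega)]; simp [Function.update]
      · rw [a2 1 (by omega)]; simp [Function.update]
      · rw [a2 2 (by omega)]; simp [Function.update]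
      · rw [a2 3 (by omega)]; simp [Function.update]
    refine ⟨(fun t a => tval t (ι a)) '' T, ⟨_, ⟨t0, ht0, rfl⟩, ?_⟩, ?_, ?_⟩
    · obtain ⟨As', -, b0, -, -, -, hs⟩ := key t0 ht0 t0 ht0 t0 ht0
      rw [CF.sem, sem_rest] at hs
      simp only [CF.sem, b0] at hs
      exact ⟨hs.1, hs.2.1⟩
    · rintro _ ⟨t1, h1, rfl⟩ _ ⟨t2, h2, rfl⟩ _ ⟨t3, h3, rfl⟩
      obtain ⟨As', -, b0, b1, b2, b3, hs⟩ := key t1 h1 t2 h2 t3 h3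
      rw [CF.sem, sem_rest] at hs
      simp only [b1, b2, b3] at hs
      exact hs.2.2.1
    · rintro _ ⟨t1, h1, rfl⟩ e he
      obtain ⟨As', c, b0, b1, b2, b3, hs⟩ := key t1 h1 t1 h1 t1 h1
      rw [CF.sem, sem_rest] at hs
      simp only [b1, b2, b3] at hs
      obtain ⟨i, hi, rfl⟩ := List.mem_iff_getElem.1 he
      have := hs.2.2.2 i hi
      refine ⟨_, ⟨As' (4 + i), c _ (by omega) (by omega), rfl⟩, ?_⟩
      rwa [List.getD_eq_getElem _ _ hi] at this
  · rintro ⟨M, ⟨w0, hw0, hX, hr⟩, hU, hE⟩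
    refine ⟨tupTrace ι '' M, tupTrace ι w0, ⟨w0, hw0, rfl⟩, ?_⟩
    rintro _ ⟨w1, h1, rfl⟩ _ ⟨w2, h2, rfl⟩ _ ⟨w3, h3, rfl⟩
    have hE' : ∀ i : ℕ, ∃ w ∈ M, i < E.length → (E.getD i .tt).sem (duo w1 w) := by
      intro i
      by_cases hi : i < E.length
      · obtain ⟨w, hw, hs⟩ := hE w1 h1 E[i] (List.getElem_mem hi)
        exact ⟨w, hw, fun _ => by rwa [List.getD_eq_getElem _ _ hi]⟩
      · exact ⟨w0, hw0, fun h => absurd h hi⟩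
    choose wit hwit hsem using hE'
    rw [sat_exs]
    let W : ℕ → κ → ℕ := fun x => if x = 0 then w0 else if x = 1 then w1 else if x = 2 then w2
      else if x = 3 then w3 else if x < 4 + m then wit (x - 4) else fun _ => 0
    refine ⟨fun x => if x < 4 + m then tupTrace ι (W x) else fun _ => ∅, ?_, ?_, ?_⟩
    · intro x hx hx'
      simp only [hx', if_true]
      refine ⟨_, hwit (x - 4), ?_⟩
      simp only [W]
      rw [if_neg (by omega), if_neg (by omega), if_neg (by omega), if_neg (by omega), if_pos hx']
    · intro x hx
      by_cases hx' : x < 4 + m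
      · have : x = 0 ∨ x = 1 ∨ x = 2 ∨ x = 3 := by omega
        rcases this with rfl | rfl | rfl | rfl <;> simp [hx', W, Function.update]
      · have : x ≠ 0 ∧ x ≠ 1 ∧ x ≠ 2 ∧ x ≠ 3 := by omega
        simp [hx', this]
    · rw [HFormula.sat, CF.sat_tr]
      refine ⟨fun p hp => ⟨W p.1 p.2, fun i => ?_⟩, ?_⟩
      · have := atoms_cmat X root U E n p hp
        rw [if_pos (by omega), mem_tupTrace hι]
      · have hW : ∀ x < 4 + m, (fun a => tval (if x < 4 + m then tupTrace ι (W x)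
            else fun _ => ∅) (ι a)) = W x := by
          intro x hx
          funext a
          rw [if_pos hx, tval_tupTrace hι]
        have hWi : ∀ i < E.length, W (4 + i) = wit i := by
          intro i hi
          simp only [W]
          rw [if_neg (by omega), if_neg (by omega), if_neg (by omega), if_neg (by omega),
            if_pos (by omega)]
          congr 1
          omega
        rw [cmat, CF.sem, sem_rest, hW 0 (by omega), hW 1 (by omega), hW 2 (by omega),
          hW 3 (by omega)]
        refine ⟨?_, hr, hU w1 h1 w2 h2 w3 h3, fun i hi => ?_⟩
        · exact (congrFun (hW 0 (by omega)) X).trans hX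
        · rw [hW (4 + i) (by omega), hWi i hi]
          exact hsem i hi

theorem cmat_prim {κ : Type} (ι : κ → ℕ) (X : κ) (root U : CF κ) (E : List (CF κ)) :
    PQ fun n => (cmat X root U E n).tr ι := by
  have h : ∀ n, (cmat X root U E n).tr ι =
      qand (qall ((cmat X root U E 0).atoms.map fun p => qonce (ι p.2) p.1))
        (qand (qnextN n (.atom (ι X) 0)) ((rest root U E).pre ι)) := fun _ => rfl
  simp only [h]
  exact PQ.qand (PQ.const _) (PQ.qand (PQ.qnextN _) (PQ.const _))

theorem csat_reduce {κ : Type} {ι : κ → ℕ} (hι : ι.Injective) (X : κ) (root U : CF κ)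
    (E : List (CF κ)) (N : Set ℕ) (hN : ∀ n, n ∈ N ↔ ∃ M, CSat X root U E n M) :
    ManyOneRed N {n : ℕ | ∃ φ : HFormula ℕ, φ.IsSentence ∧
        HFormula.codeWith id φ = n ∧ HSatisfiable φ} := by
  obtain ⟨m, hm⟩ : ∃ m, m = E.length + ((cmat X root U E 0).tr ι).bd := ⟨_, rfl⟩
  have hbd : ∀ n, ((cmat X root U E n).tr ι).bd = ((cmat X root U E 0).tr ι).bd := by
    intro n
    have h : (cmat X root U E n).atoms = (cmat X root U E 0).atoms := rfl
    simp only [CF.tr, h, bd_qand]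
    simp only [cmat, CF.pre, bd_qand, bd_qnextN]
  refine ⟨fun n => (sent m ((cmat X root U E n).tr ι)).codeWith id, ?_, ?_⟩
  · refine Primrec.to_comp ?_
    refine PH.ex 0 (PH.all 1 (PH.all 2 (PH.all 3 (PH.exs (PH.qf ?_) 4 m))))
    exact cmat_prim _ _ _ _ _
  · intro n
    rw [hN, ← sent_correct hι X root U E n m (by omega)]
    constructor
    · intro h
      exact ⟨_, sent_sentence _ _ (by rw [hbd]; omega), rfl, h⟩
    · rintro ⟨φ, -, hc, hs⟩
      rwa [← HFormula.code_inj hc]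

/-! ### Arithmetic as a constraint system -/

def ATerm.cd : ATerm → ℕ
  | .var x => Nat.pair 0 x
  | .zero => Nat.pair 1 0
  | .one => Nat.pair 2 0
  | .add s t => Nat.pair 3 (Nat.pair s.cd t.cd)
  | .mul s t => Nat.pair 4 (Nat.pair s.cd t.cd)
  | .app f t => Nat.pair 5 (Nat.pair f t.cd)

theorem ATerm.cd_inj : ∀ {q r : ATerm}, q.cd = r.cd → q = r := by
  intro q
  induction q with
  | var x => intro r h; cases r <;> simp_all [ATerm.cd, Nat.pair_eq_pair]
  | zero => intro r h; cases r <;> simp_all [ATerm.cd, Nat.pair_eq_pair]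
  | one => intro r h; cases r <;> simp_all [ATerm.cd, Nat.pair_eq_pair]
  | add a b ih ih' =>
    intro r h
    cases r <;> simp [ATerm.cd, Nat.pair_eq_pair] at h
    rw [ih h.1, ih' h.2]
  | mul a b ih ih' =>
    intro r h
    cases r <;> simp [ATerm.cd, Nat.pair_eq_pair] at h
    rw [ih h.1, ih' h.2]
  | app f a ih =>
    intro r h
    cases r <;> simp [ATerm.cd, Nat.pair_eq_pair] at h
    rw [h.1, ih h.2]

def AForm.cd : AForm → ℕ
  | .eq s t => Nat.pair 0 (Nat.pair s.cd t.cd)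
  | .lt s t => Nat.pair 1 (Nat.pair s.cd t.cd)
  | .neg φ => Nat.pair 2 φ.cd
  | .disj φ ψ => Nat.pair 3 (Nat.pair φ.cd ψ.cd)
  | .exN x φ => Nat.pair 4 (Nat.pair x φ.cd)
  | .allN x φ => Nat.pair 5 (Nat.pair x φ.cd)

theorem AForm.cd_inj : ∀ {q r : AForm}, q.cd = r.cd → q = r := by
  intro q
  induction q with
  | eq s t =>
    intro r h
    cases r <;> simp [AForm.cd, Nat.pair_eq_pair] at h
    rw [ATerm.cd_inj h.1, ATerm.cd_inj h.2]
  | lt s t =>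
    intro r h
    cases r <;> simp [AForm.cd, Nat.pair_eq_pair] at h
    rw [ATerm.cd_inj h.1, ATerm.cd_inj h.2]
  | neg a ih =>
    intro r h
    cases r <;> simp [AForm.cd, Nat.pair_eq_pair] at h
    rw [ih h]
  | disj a b ih ih' =>
    intro r h
    cases r <;> simp [AForm.cd, Nat.pair_eq_pair] at h
    rw [ih h.1, ih' h.2]
  | exN x a ih =>
    intro r h
    cases r <;> simp [AForm.cd, Nat.pair_eq_pair] at h
    rw [h.1, ih h.2]
  | allN x a ih =>
    intro r h
    cases r <;> simp [AForm.cd, Nat.pair_eq_pair] at h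
    rw [h.1, ih h.2]

/-- The components of a tuple: values of the number variables, two auxiliary arguments,
their sum and product, the input, the values of the functions at the first auxiliary
argument, the values of terms and the truth values of formulas (`0` means true). -/
inductive Comp : Type where
  | var : ℕ → Comp
  | argA : Comp
  | argB : Comp
  | sum : Comp
  | prod : Comp
  | inp : Comp
  | fn : ℕ → Comp
  | tm : ATerm → Comp
  | fm : AForm → Comp

def Comp.cd : Comp → ℕ
  | .var x => Nat.pair 0 x
  | .argA => Nat.pair 1 0
  | .argB => Nat.pair 2 0
  | .sum => Nat.pair 3 0
  | .prod => Nat.pair 4 0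
  | .inp => Nat.pair 5 0
  | .fn f => Nat.pair 6 f
  | .tm s => Nat.pair 7 s.cd
  | .fm φ => Nat.pair 8 φ.cd

theorem Comp.cd_inj : Function.Injective Comp.cd := by
  intro a b h
  cases a <;> cases b <;> simp [Comp.cd, Nat.pair_eq_pair] at h ⊢
  · exact h
  · exact h
  · exact ATerm.cd_inj h
  · exact AForm.cd_inj h

open Classical in
/-- Tuples `1` and `2` agree on the components in `l` except for `c`. -/
noncomputable def agreeOff (l : List Comp) (c : Comp) : CF Comp :=
  .all ((l.filter fun d => d ≠ c).map fun d => .eq d 1 d 2)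

theorem sem_agreeOff (l : List Comp) (c : Comp) (W) :
    (agreeOff l c).sem W ↔ ∀ d ∈ l, d ≠ c → W 1 d = W 2 d := by
  simp [agreeOff, CF.sem_all]
  constructor
  · intro h d hd hne; exact h _ d hd hne rfl
  · rintro h _ d hd hne rfl; exact h d hd hne

/-- The variables of a formula that have to be tracked (quantified or in a term). -/
def ATerm.vs : ATerm → List ℕ
  | .var x => [x]
  | .zero => []
  | .one => []
  | .add s t => s.vs ++ t.vs
  | .mul s t => s.vs ++ t.vs
  | .app _ t => t.vs

def AForm.vs : AForm → List ℕ
  | .eq s t => s.vs ++ t.vs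
  | .lt s t => s.vs ++ t.vs
  | .neg φ => φ.vs
  | .disj φ ψ => φ.vs ++ ψ.vs
  | .exN x φ => x :: φ.vs
  | .allN x φ => x :: φ.vs

/-- Constraints for the values of a term and its subterms. -/
def termC : ATerm → CF Comp
  | .var x => .eq (.tm (.var x)) 1 (.var x) 1
  | .zero => .const 0 (.tm .zero) 1
  | .one => .const 1 (.tm .one) 1
  | .add s t => .and (.imp (.and (.eq .argA 2 (.tm s) 1) (.eq .argB 2 (.tm t) 1))
      (.eq (.tm (.add s t)) 1 .sum 2)) (.and (termC s) (termC t))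
  | .mul s t => .and (.imp (.and (.eq .argA 2 (.tm s) 1) (.eq .argB 2 (.tm t) 1))
      (.eq (.tm (.mul s t)) 1 .prod 2)) (.and (termC s) (termC t))
  | .app f t => .and (.imp (.eq .argA 2 (.tm t) 1)
      (.eq (.tm (.app f t)) 1 (.fn f) 2)) (termC t)

/-- Universal constraints for the truth values of a formula and its subformulas. -/
noncomputable def formC (l : List Comp) : AForm → CF Comp
  | .eq s t => .and (.iff (.const 0 (.fm (.eq s t)) 1) (.eq (.tm s) 1 (.tm t) 1))
      (.and (termC s) (termC t))
  | .lt s t => .and (.iff (.const 0 (.fm (.lt s t)) 1) (.lt (.tm s) 1 (.tm t) 1))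
      (.and (termC s) (termC t))
  | .neg φ => .and (.iff (.const 0 (.fm (.neg φ)) 1) (.neg (.const 0 (.fm φ) 1))) (formC l φ)
  | .disj φ ψ => .and (.iff (.neg (.const 0 (.fm (.disj φ ψ)) 1))
      (.and (.neg (.const 0 (.fm φ) 1)) (.neg (.const 0 (.fm ψ) 1))))
      (.and (formC l φ) (formC l ψ))
  | .exN x φ => .and (.imp (.and (agreeOff l (.var x)) (.const 0 (.fm φ) 2))
      (.const 0 (.fm (.exN x φ)) 1)) (formC l φ)
  | .allN x φ => .and (.imp (.and (agreeOff l (.var x)) (.const 0 (.fm (.allN x φ)) 1))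
      (.const 0 (.fm φ) 2)) (formC l φ)

/-- Existential constraints for the truth values of a formula and its subformulas. -/
noncomputable def formE (l : List Comp) : AForm → List (CF Comp)
  | .eq _ _ => []
  | .lt _ _ => []
  | .neg φ => formE l φ
  | .disj φ ψ => formE l φ ++ formE l ψ
  | .exN x φ => .imp (.const 0 (.fm (.exN x φ)) 1)
      (.and (agreeOff l (.var x)) (.const 0 (.fm φ) 2)) :: formE l φ
  | .allN x φ => .imp (.neg (.const 0 (.fm (.allN x φ)) 1))
      (.and (agreeOff l (.var x)) (.neg (.const 0 (.fm φ) 2))) :: formE l φ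

/-- Recursion equations of addition and multiplication. -/
def arithC : CF Comp :=
  .and (.imp (.const 0 .argA 1) (.eq .sum 1 .argB 1)) <|
  .and (.imp (.and (.succ .argA 1 .argA 2) (.eq .argB 1 .argB 2)) (.succ .sum 1 .sum 2)) <|
  .and (.imp (.const 0 .argA 1) (.const 0 .prod 1))
    (.imp (.and (.and (.succ .argA 1 .argA 2) (.eq .argB 1 .argB 2))
      (.and (.eq .argA 3 .prod 1) (.eq .argB 3 .argB 1))) (.eq .prod 2 .sum 3))

/-- Closure of the set of tuples under changing the independent components. -/
noncomputable def closE (l : List Comp) : List (CF Comp) :=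
  (l.map fun c => .and (agreeOff l c) (.const 0 c 2)) ++
  (l.map fun c => .and (agreeOff l c) (.succ c 1 c 2))

def vcomp (V : List ℕ) : List Comp := V.map .var
def coords (V : List ℕ) : List Comp := .argA :: .argB :: vcomp V

noncomputable def rootC (ψ : AForm) : CF Comp :=
  .and (.const 0 (.fm ψ) 0) (.all (ψ.vs.map fun i => .eq (.var i) 0 .inp 0))

section
variable {M : Set (Comp → ℕ)}

theorem tri_one (w1 w2 w3 : Comp → ℕ) : tri w1 w2 w3 1 = w1 := rfl
theorem tri_two (w1 w2 w3 : Comp → ℕ) : tri w1 w2 w3 2 = w2 := rfl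
theorem tri_three (w1 w2 w3 : Comp → ℕ) : tri w1 w2 w3 3 = w3 := rfl
theorem duo_one (w1 w2 : Comp → ℕ) : duo w1 w2 1 = w1 := rfl
theorem duo_two (w1 w2 : Comp → ℕ) : duo w1 w2 2 = w2 := rfl

/-- Universal validity of a constraint in `M`. -/
def UV (M : Set (Comp → ℕ)) (c : CF Comp) : Prop :=
  ∀ w1 ∈ M, ∀ w2 ∈ M, ∀ w3 ∈ M, c.sem (tri w1 w2 w3)

/-- Validity of an existential constraint in `M`. -/
def EV (M : Set (Comp → ℕ)) (e : CF Comp) : Prop := ∀ w1 ∈ M, ∃ w ∈ M, e.sem (duo w1 w)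

theorem UV_and (c d : CF Comp) : UV M (.and c d) ↔ UV M c ∧ UV M d := by
  simp only [UV, CF.sem]
  exact ⟨fun h => ⟨fun a ha b hb c hc => (h a ha b hb c hc).1,
    fun a ha b hb c hc => (h a ha b hb c hc).2⟩,
    fun h a ha b hb c hc => ⟨h.1 a ha b hb c hc, h.2 a ha b hb c hc⟩⟩

theorem complete_aux (l : List Comp) (hE : ∀ e ∈ closE l, EV M e) (c : Comp) (hc : c ∈ l) (n : ℕ) :
    ∀ w ∈ M, ∃ w' ∈ M, w' c = n ∧ ∀ d ∈ l, d ≠ c → w' d = w d := by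
  intro w hw
  induction n with
  | zero =>
    obtain ⟨w', hw', h⟩ := hE (.and (agreeOff l c) (.const 0 c 2))
      (List.mem_append_left _ (List.mem_map.2 ⟨c, hc, rfl⟩)) w hw
    simp only [CF.sem, sem_agreeOff, duo_one, duo_two] at h
    exact ⟨w', hw', h.2, fun d hd hne => (h.1 d hd hne).symm⟩
  | succ n ih =>
    obtain ⟨w1, hw1, h1, h1'⟩ := ih
    obtain ⟨w', hw', h⟩ := hE (.and (agreeOff l c) (.succ c 1 c 2))
      (List.mem_append_right _ (List.mem_map.2 ⟨c, hc, rfl⟩)) w1 hw1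
    simp only [CF.sem, sem_agreeOff, duo_one, duo_two] at h
    exact ⟨w', hw', by omega, fun d hd hne => (h.1 d hd hne).symm.trans (h1' d hd hne)⟩

theorem complete (l : List Comp) (hM : M.Nonempty) (hE : ∀ e ∈ closE l, EV M e) (g : Comp → ℕ) :
    ∃ w ∈ M, ∀ c ∈ l, w c = g c := by
  suffices h : ∀ l' : List Comp, l' ⊆ l → ∃ w ∈ M, ∀ c ∈ l', w c = g c from h l (List.Subset.refl _)
  intro l'
  induction l' with
  | nil =>
    obtain ⟨w, hw⟩ := hM
    exact fun _ => ⟨w, hw, by simp⟩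
  | cons c l' ih =>
    intro hsub
    obtain ⟨w, hw, h⟩ := ih fun d hd => hsub (List.mem_cons_of_mem _ hd)
    obtain ⟨w', hw', h1, h2⟩ := complete_aux l hE c (hsub List.mem_cons_self) (g c) w hw
    refine ⟨w', hw', fun d hd => ?_⟩
    by_cases hdc : d = c
    · rw [hdc, h1]
    · have hd' : d ∈ l' := by simpa [hdc] using hd
      rw [h2 d (hsub hd) hdc, h d hd']

/-- All values of the independent components are realised. -/
def Full (M : Set (Comp → ℕ)) (V : List ℕ) : Prop :=
  ∀ (v : ℕ → ℕ) (a b : ℕ), ∃ w ∈ M, w .argA = a ∧ w .argB = b ∧ ∀ i ∈ V, w (.var i) = v i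

theorem full_of (V : List ℕ) (hM : M.Nonempty) (hE : ∀ e ∈ closE (coords V), EV M e) :
    Full M V := by
  intro v a b
  obtain ⟨w, hw, h⟩ := complete _ hM hE
    (fun c => match c with | .argA => a | .argB => b | .var i => v i | _ => 0)
  refine ⟨w, hw, h .argA (by simp [coords]), h .argB (by simp [coords]), fun i hi => ?_⟩
  exact h (.var i) (by simp [coords, vcomp, hi])

variable {V : List ℕ}

theorem sum_correct (hV : Full M V) (hU : UV M arithC) :
    ∀ w ∈ M, w .sum = w .argA + w .argB := by
  suffices h : ∀ a, ∀ w ∈ M, w .argA = a → w .sum = a + w .argB from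
    fun w hw => h _ w hw rfl
  intro a
  induction a with
  | zero =>
    intro w hw ha
    have h := hU w hw w hw w hw
    simp only [arithC, CF.sem, CF.sem_imp, tri_one, tri_two, tri_three] at h
    rw [h.1 ha, Nat.zero_add]
  | succ a ih =>
    intro w hw ha
    obtain ⟨w1, hw1, e1, e2, -⟩ := hV (fun _ => 0) a (w .argB)
    have h := hU w1 hw1 w hw w hw
    simp only [arithC, CF.sem, CF.sem_imp, tri_one, tri_two, tri_three] at h
    rw [h.2.1 ⟨by omega, e2⟩, ih w1 hw1 e1, e2]
    omega

theorem prod_correct (hV : Full M V) (hU : UV M arithC) :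
    ∀ w ∈ M, w .prod = w .argA * w .argB := by
  suffices h : ∀ a, ∀ w ∈ M, w .argA = a → w .prod = a * w .argB from
    fun w hw => h _ w hw rfl
  intro a
  induction a with
  | zero =>
    intro w hw ha
    have h := hU w hw w hw w hw
    simp only [arithC, CF.sem, CF.sem_imp, tri_one, tri_two, tri_three] at h
    rw [h.2.2.1 ha, Nat.zero_mul]
  | succ a ih =>
    intro w hw ha
    obtain ⟨w1, hw1, e1, e2, -⟩ := hV (fun _ => 0) a (w .argB)
    obtain ⟨w2, hw2, f1, f2, -⟩ := hV (fun _ => 0) (w1 .prod) (w1 .argB)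
    have h := hU w1 hw1 w hw w2 hw2
    simp only [arithC, CF.sem, CF.sem_imp, tri_one, tri_two, tri_three] at h
    rw [h.2.2.2 ⟨⟨by omega, e2⟩, f1, f2⟩, sum_correct hV hU w2 hw2, f1, f2, ih w1 hw1 e1, e2,
      Nat.succ_mul]

/-- `F` describes the function components of `M`. -/
def FnOk (M : Set (Comp → ℕ)) (F : ℕ → ℕ → ℕ) : Prop :=
  ∀ f n, ∃ w ∈ M, w .argA = n ∧ w (.fn f) = F f n

theorem term_correct (hV : Full M V) (hU : UV M arithC) {F : ℕ → ℕ → ℕ} (hF : FnOk M F)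
    (s : ATerm) (hs : UV M (termC s)) (hsub : s.vs ⊆ V) :
    ∀ w ∈ M, ∀ v : ℕ → ℕ, (∀ i ∈ V, w (.var i) = v i) → w (.tm s) = s.eval v F := by
  induction s with
  | var x =>
    intro w hw v hv
    have h := hs w hw w hw w hw
    simp only [termC, CF.sem, tri_one] at h
    rw [h, hv x (hsub (by simp [ATerm.vs])), ATerm.eval]
  | zero =>
    intro w hw v hv
    exact hs w hw w hw w hw
  | one =>
    intro w hw v hv
    exact hs w hw w hw w hw
  | add s t ihs iht =>
    intro w hw v hv
    simp only [termC, UV_and] at hs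
    obtain ⟨h, h1, h2⟩ := hs
    have a1 := ihs h1 (fun i hi => hsub (by simp [ATerm.vs, hi])) w hw v hv
    have a2 := iht h2 (fun i hi => hsub (by simp [ATerm.vs, hi])) w hw v hv
    obtain ⟨w2, hw2, f1, f2, -⟩ := hV (fun _ => 0) (w (.tm s)) (w (.tm t))
    have h := h w hw w2 hw2 w hw
    simp only [CF.sem, CF.sem_imp, tri_one, tri_two] at h
    rw [h ⟨f1, f2⟩, sum_correct hV hU w2 hw2, f1, f2, a1, a2, ATerm.eval]
  | mul s t ihs iht =>
    intro w hw v hv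
    simp only [termC, UV_and] at hs
    obtain ⟨h, h1, h2⟩ := hs
    have a1 := ihs h1 (fun i hi => hsub (by simp [ATerm.vs, hi])) w hw v hv
    have a2 := iht h2 (fun i hi => hsub (by simp [ATerm.vs, hi])) w hw v hv
    obtain ⟨w2, hw2, f1, f2, -⟩ := hV (fun _ => 0) (w (.tm s)) (w (.tm t))
    have h := h w hw w2 hw2 w hw
    simp only [CF.sem, CF.sem_imp, tri_one, tri_two] at h
    rw [h ⟨f1, f2⟩, prod_correct hV hU w2 hw2, f1, f2, a1, a2, ATerm.eval]
  | app f t iht =>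
    intro w hw v hv
    simp only [termC, UV_and] at hs
    obtain ⟨h, h2⟩ := hs
    have a2 := iht h2 hsub w hw v hv
    obtain ⟨w2, hw2, f1, f2⟩ := hF f (w (.tm t))
    have h := h w hw w2 hw2 w hw
    simp only [CF.sem, CF.sem_imp, tri_one, tri_two] at h
    rw [h f1, f2, a2, ATerm.eval]

theorem form_correct (hV : Full M V) (hU : UV M arithC) {F : ℕ → ℕ → ℕ} (hF : FnOk M F)
    (φ : AForm) (hs : UV M (formC (vcomp V) φ)) (he : ∀ e ∈ formE (vcomp V) φ, EV M e)
    (hsub : φ.vs ⊆ V) :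
    ∀ w ∈ M, ∀ v : ℕ → ℕ, (∀ i ∈ V, w (.var i) = v i) → (w (.fm φ) = 0 ↔ φ.sat v F) := by
  have hag : ∀ (w w' : Comp → ℕ) (x : ℕ), (∀ d ∈ vcomp V, d ≠ .var x → w d = w' d) ↔
      ∀ i ∈ V, i ≠ x → w (.var i) = w' (.var i) := by
    intro w w' x
    simp [vcomp]
  have hup : ∀ (v : ℕ → ℕ) (x n : ℕ) (w w' : Comp → ℕ), (∀ i ∈ V, w (.var i) = v i) →
      (∀ i ∈ V, w' (.var i) = Function.update v x n i) →
      ∀ i ∈ V, i ≠ x → w (.var i) = w' (.var i) := by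
    intro v x n w w' h h' i hi hne
    rw [h i hi, h' i hi, Function.update_of_ne hne]
  have hup' : ∀ (v : ℕ → ℕ) (x : ℕ) (w w' : Comp → ℕ), (∀ i ∈ V, w (.var i) = v i) →
      (∀ i ∈ V, i ≠ x → w (.var i) = w' (.var i)) →
      ∀ i ∈ V, w' (.var i) = Function.update v x (w' (.var x)) i := by
    intro v x w w' h h' i hi
    by_cases hne : i = x
    · subst hne; simp
    · rw [Function.update_of_ne hne, ← h' i hi hne, h i hi]
  induction φ with
  | eq s t =>
    intro w hw v hv
    simp only [formC, UV_and] at hs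
    obtain ⟨h, h1, h2⟩ := hs
    have h := h w hw w hw w hw
    simp only [CF.sem, CF.sem_iff, tri_one] at h
    rw [h, term_correct hV hU hF s h1 (fun i hi => hsub (by simp [AForm.vs, hi])) w hw v hv,
      term_correct hV hU hF t h2 (fun i hi => hsub (by simp [AForm.vs, hi])) w hw v hv, AForm.sat]
  | lt s t =>
    intro w hw v hv
    simp only [formC, UV_and] at hs
    obtain ⟨h, h1, h2⟩ := hs
    have h := h w hw w hw w hw
    simp only [CF.sem, CF.sem_iff, tri_one] at h
    rw [h, term_correct hV hU hF s h1 (fun i hi => hsub (by simp [AForm.vs, hi])) w hw v hv,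
      term_correct hV hU hF t h2 (fun i hi => hsub (by simp [AForm.vs, hi])) w hw v hv, AForm.sat]
  | neg φ ih =>
    intro w hw v hv
    simp only [formC, UV_and] at hs
    obtain ⟨h, h1⟩ := hs
    have h := h w hw w hw w hw
    simp only [CF.sem, CF.sem_iff, tri_one] at h
    rw [h, ih h1 he hsub w hw v hv, AForm.sat]
  | disj φ ψ ih ih' =>
    intro w hw v hv
    simp only [formC, UV_and] at hs
    obtain ⟨h, h1, h2⟩ := hs
    have h := h w hw w hw w hw
    simp only [CF.sem, CF.sem_iff, tri_one] at h
    rw [ih h1 (fun e h => he e (List.mem_append_left _ h))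
        (fun i hi => hsub (by simp [AForm.vs, hi])) w hw v hv,
      ih' h2 (fun e h => he e (List.mem_append_right _ h))
        (fun i hi => hsub (by simp [AForm.vs, hi])) w hw v hv] at h
    rw [AForm.sat]
    tauto
  | exN x φ ih =>
    intro w hw v hv
    simp only [formC, UV_and] at hs
    obtain ⟨h, h1⟩ := hs
    have ih := ih h1 (fun e h => he e (List.mem_cons_of_mem _ h))
      (fun i hi => hsub (by simp [AForm.vs, hi]))
    rw [AForm.sat]
    constructor
    · intro h0
      obtain ⟨w', hw', h'⟩ := he _ List.mem_cons_self w hw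
      simp only [CF.sem, CF.sem_imp, sem_agreeOff, duo_one, duo_two, hag] at h'
      obtain ⟨g1, g2⟩ := h' h0
      exact ⟨w' (.var x), (ih w' hw' _ (hup' v x w w' hv g1)).1 g2⟩
    · rintro ⟨n, hn⟩
      obtain ⟨w', hw', -, -, g⟩ := hV (Function.update v x n) 0 0
      have h := h w hw w' hw' w hw
      simp only [CF.sem, CF.sem_imp, sem_agreeOff, tri_one, tri_two, hag] at h
      exact h ⟨hup v x n w w' hv g, (ih w' hw' _ g).2 hn⟩
  | allN x φ ih =>
    intro w hw v hv
    simp only [formC, UV_and] at hs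
    obtain ⟨h, h1⟩ := hs
    have ih := ih h1 (fun e h => he e (List.mem_cons_of_mem _ h))
      (fun i hi => hsub (by simp [AForm.vs, hi]))
    rw [AForm.sat]
    constructor
    · intro h0 n
      obtain ⟨w', hw', -, -, g⟩ := hV (Function.update v x n) 0 0
      have h := h w hw w' hw' w hw
      simp only [CF.sem, CF.sem_imp, sem_agreeOff, tri_one, tri_two, hag] at h
      exact (ih w' hw' _ g).1 (h ⟨hup v x n w w' hv g, h0⟩)
    · intro hn
      by_contra h0
      obtain ⟨w', hw', h'⟩ := he _ List.mem_cons_self w hw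
      simp only [CF.sem, CF.sem_imp, sem_agreeOff, duo_one, duo_two, hag] at h'
      obtain ⟨g1, g2⟩ := h' h0
      exact g2 ((ih w' hw' _ (hup' v x w w' hv g1)).2 (hn _))

end

/-! ### The intended set of tuples -/

open Classical in
/-- The tuple belonging to an assignment and two auxiliary arguments. -/
noncomputable def stdW (n : ℕ) (F : ℕ → ℕ → ℕ) (v : ℕ → ℕ) (a b : ℕ) : Comp → ℕ
  | .var i => v i
  | .argA => a
  | .argB => b
  | .sum => a + b
  | .prod => a * b
  | .inp => n
  | .fn f => F f a
  | .tm s => s.eval v F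
  | .fm φ => if φ.sat v F then 0 else 1

def stdM (n : ℕ) (F : ℕ → ℕ → ℕ) : Set (Comp → ℕ) := {w | ∃ v a b, w = stdW n F v a b}

theorem stdW_fm (n F v a b φ) : stdW n F v a b (.fm φ) = 0 ↔ φ.sat v F := by
  simp [stdW]

theorem std_arith (n F) : UV (stdM n F) arithC := by
  rintro _ ⟨v1, a1, b1, rfl⟩ _ ⟨v2, a2, b2, rfl⟩ _ ⟨v3, a3, b3, rfl⟩
  simp only [arithC, CF.sem, CF.sem_imp, tri_one, tri_two, tri_three, stdW]
  refine ⟨by omega, by omega, ?_, ?_⟩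
  · rintro rfl; simp
  · rintro ⟨⟨rfl, rfl⟩, rfl, rfl⟩
    ring

theorem std_term (n F) (s : ATerm) : UV (stdM n F) (termC s) := by
  induction s with
  | add s t ih ih' =>
    simp only [termC, UV_and]
    refine ⟨?_, ih, ih'⟩
    rintro _ ⟨v1, a1, b1, rfl⟩ _ ⟨v2, a2, b2, rfl⟩ _ ⟨v3, a3, b3, rfl⟩
    simp only [CF.sem, CF.sem_imp, tri_one, tri_two, stdW, ATerm.eval]
    rintro ⟨rfl, rfl⟩; rfl
  | mul s t ih ih' =>
    simp only [termC, UV_and]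
    refine ⟨?_, ih, ih'⟩
    rintro _ ⟨v1, a1, b1, rfl⟩ _ ⟨v2, a2, b2, rfl⟩ _ ⟨v3, a3, b3, rfl⟩
    simp only [CF.sem, CF.sem_imp, tri_one, tri_two, stdW, ATerm.eval]
    rintro ⟨rfl, rfl⟩; rfl
  | app f t ih =>
    simp only [termC, UV_and]
    refine ⟨?_, ih⟩
    rintro _ ⟨v1, a1, b1, rfl⟩ _ ⟨v2, a2, b2, rfl⟩ _ ⟨v3, a3, b3, rfl⟩
    simp only [CF.sem, CF.sem_imp, tri_one, tri_two, stdW, ATerm.eval]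
    rintro rfl; rfl
  | _ =>
    rintro _ ⟨v1, a1, b1, rfl⟩ _ ⟨v2, a2, b2, rfl⟩ _ ⟨v3, a3, b3, rfl⟩
    simp only [termC, CF.sem, tri_one, stdW, ATerm.eval]

/-- Truth of a formula depends only on its tracked variables. -/
theorem ATerm.eval_congr (F : ℕ → ℕ → ℕ) (s : ATerm) (v v' : ℕ → ℕ) (h : ∀ i ∈ s.vs, v i = v' i) :
    s.eval v F = s.eval v' F := by
  induction s with
  | var x => exact h x (by simp [ATerm.vs])
  | zero => rfl
  | one => rfl
  | add s t ih ih' =>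
    simp only [ATerm.eval]
    rw [ih fun i hi => h i (by simp [ATerm.vs, hi]), ih' fun i hi => h i (by simp [ATerm.vs, hi])]
  | mul s t ih ih' =>
    simp only [ATerm.eval]
    rw [ih fun i hi => h i (by simp [ATerm.vs, hi]), ih' fun i hi => h i (by simp [ATerm.vs, hi])]
  | app f t ih =>
    simp only [ATerm.eval]
    rw [ih h]

theorem AForm.sat_congr (F : ℕ → ℕ → ℕ) (φ : AForm) (v v' : ℕ → ℕ) (h : ∀ i ∈ φ.vs, v i = v' i) :
    φ.sat v F ↔ φ.sat v' F := by
  have hup : ∀ (l : List ℕ) (x n : ℕ) (v v' : ℕ → ℕ), (∀ i ∈ x :: l, v i = v' i) → ∀ i ∈ l,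
      Function.update v x n i = Function.update v' x n i := by
    intro l x n v v' h i hi
    by_cases hix : i = x
    · subst hix; simp
    · rw [Function.update_of_ne hix, Function.update_of_ne hix, h i (List.mem_cons_of_mem _ hi)]
  induction φ generalizing v v' with
  | eq s t =>
    simp only [AForm.sat]
    rw [s.eval_congr F v v' fun i hi => h i (by simp [AForm.vs, hi]),
      t.eval_congr F v v' fun i hi => h i (by simp [AForm.vs, hi])]
  | lt s t =>
    simp only [AForm.sat]
    rw [s.eval_congr F v v' fun i hi => h i (by simp [AForm.vs, hi]),
      t.eval_congr F v v' fun i hi => h i (by simp [AForm.vs, hi])]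
  | neg φ ih =>
    simp only [AForm.sat]
    exact not_congr (ih v v' h)
  | disj φ ψ ih ih' =>
    simp only [AForm.sat]
    exact or_congr (ih v v' fun i hi => h i (by simp [AForm.vs, hi]))
      (ih' v v' fun i hi => h i (by simp [AForm.vs, hi]))
  | exN x φ ih =>
    simp only [AForm.sat]
    exact exists_congr fun n => ih _ _ (hup _ x n v v' h)
  | allN x φ ih =>
    simp only [AForm.sat]
    exact forall_congr' fun n => ih _ _ (hup _ x n v v' h)

theorem sat_of_agree (V : List ℕ) (F : ℕ → ℕ → ℕ) (φ : AForm) (hsub : φ.vs ⊆ V) (x : ℕ)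
    (v v' : ℕ → ℕ) (h : ∀ i ∈ V, i ≠ x → v i = v' i) :
    φ.sat v' F ↔ φ.sat (Function.update v x (v' x)) F := by
  apply AForm.sat_congr
  intro i hi
  by_cases hix : i = x
  · subst hix; simp
  · rw [Function.update_of_ne hix, h i (hsub hi) hix]

theorem std_form (V : List ℕ) (n F) (φ : AForm) (hsub : φ.vs ⊆ V) :
    UV (stdM n F) (formC (vcomp V) φ) ∧ ∀ e ∈ formE (vcomp V) φ, EV (stdM n F) e := by
  have hag : ∀ (v v' : ℕ → ℕ) (a b a' b' x : ℕ), (∀ d ∈ vcomp V, d ≠ .var x →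
      stdW n F v a b d = stdW n F v' a' b' d) ↔ ∀ i ∈ V, i ≠ x → v i = v' i := by
    intros
    simp [vcomp, stdW]
  induction φ with
  | eq s t =>
    refine ⟨?_, by simp [formE]⟩
    simp only [formC, UV_and]
    refine ⟨?_, std_term _ _ _, std_term _ _ _⟩
    rintro _ ⟨v1, a1, b1, rfl⟩ _ ⟨v2, a2, b2, rfl⟩ _ ⟨v3, a3, b3, rfl⟩
    simp only [CF.sem, CF.sem_iff, tri_one, stdW_fm, AForm.sat]
    rfl
  | lt s t =>
    refine ⟨?_, by simp [formE]⟩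
    simp only [formC, UV_and]
    refine ⟨?_, std_term _ _ _, std_term _ _ _⟩
    rintro _ ⟨v1, a1, b1, rfl⟩ _ ⟨v2, a2, b2, rfl⟩ _ ⟨v3, a3, b3, rfl⟩
    simp only [CF.sem, CF.sem_iff, tri_one, stdW_fm, AForm.sat]
    rfl
  | neg φ ih =>
    obtain ⟨ih1, ih2⟩ := ih hsub
    refine ⟨?_, ih2⟩
    simp only [formC, UV_and]
    refine ⟨?_, ih1⟩
    rintro _ ⟨v1, a1, b1, rfl⟩ _ ⟨v2, a2, b2, rfl⟩ _ ⟨v3, a3, b3, rfl⟩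
    simp only [CF.sem, CF.sem_iff, tri_one, stdW_fm, AForm.sat]
  | disj φ ψ ih ih' =>
    obtain ⟨ih1, ih2⟩ := ih fun i hi => hsub (by simp [AForm.vs, hi])
    obtain ⟨jh1, jh2⟩ := ih' fun i hi => hsub (by simp [AForm.vs, hi])
    refine ⟨?_, fun e he => (List.mem_append.1 he).elim (ih2 e) (jh2 e)⟩
    simp only [formC, UV_and]
    refine ⟨?_, ih1, jh1⟩
    rintro _ ⟨v1, a1, b1, rfl⟩ _ ⟨v2, a2, b2, rfl⟩ _ ⟨v3, a3, b3, rfl⟩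
    simp only [CF.sem, CF.sem_iff, tri_one, stdW_fm, AForm.sat]
    tauto
  | exN x φ ih =>
    have hsub' : φ.vs ⊆ V := fun i hi => hsub (by simp [AForm.vs, hi])
    obtain ⟨ih1, ih2⟩ := ih hsub'
    constructor
    · simp only [formC, UV_and]
      refine ⟨?_, ih1⟩
      rintro _ ⟨v1, a1, b1, rfl⟩ _ ⟨v2, a2, b2, rfl⟩ _ ⟨v3, a3, b3, rfl⟩
      simp only [CF.sem, CF.sem_imp, sem_agreeOff, tri_one, tri_two, stdW_fm, AForm.sat, hag]
      rintro ⟨h1, h2⟩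
      exact ⟨v2 x, (sat_of_agree V F φ hsub' x v1 v2 h1).1 h2⟩
    · intro e he
      rcases List.mem_cons.1 he with rfl | he
      · rintro _ ⟨v, a, b, rfl⟩
        by_cases h : (AForm.exN x φ).sat v F
        · obtain ⟨k, hk⟩ := h
          refine ⟨_, ⟨Function.update v x k, a, b, rfl⟩, ?_⟩
          simp only [CF.sem, CF.sem_imp, sem_agreeOff, duo_one, duo_two, stdW_fm, hag]
          exact fun _ => ⟨fun i _ hne => (Function.update_of_ne hne _ _).symm, hk⟩
        · refine ⟨_, ⟨v, a, b, rfl⟩, ?_⟩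
          simp only [CF.sem, CF.sem_imp, sem_agreeOff, duo_one, duo_two, stdW_fm, hag]
          exact fun h' => absurd h' h
      · exact ih2 e he
  | allN x φ ih =>
    have hsub' : φ.vs ⊆ V := fun i hi => hsub (by simp [AForm.vs, hi])
    obtain ⟨ih1, ih2⟩ := ih hsub'
    constructor
    · simp only [formC, UV_and]
      refine ⟨?_, ih1⟩
      rintro _ ⟨v1, a1, b1, rfl⟩ _ ⟨v2, a2, b2, rfl⟩ _ ⟨v3, a3, b3, rfl⟩
      simp only [CF.sem, CF.sem_imp, sem_agreeOff, tri_one, tri_two, stdW_fm, AForm.sat, hag]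
      rintro ⟨h1, h2⟩
      exact (sat_of_agree V F φ hsub' x v1 v2 h1).2 (h2 _)
    · intro e he
      rcases List.mem_cons.1 he with rfl | he
      · rintro _ ⟨v, a, b, rfl⟩
        by_cases h : (AForm.allN x φ).sat v F
        · refine ⟨_, ⟨v, a, b, rfl⟩, ?_⟩
          simp only [CF.sem, CF.sem_imp, sem_agreeOff, duo_one, duo_two, stdW_fm, hag]
          exact fun h' => absurd h h'
        · have h' := h
          simp only [AForm.sat, not_forall] at h'
          obtain ⟨k, hk⟩ := h'
          refine ⟨_, ⟨Function.update v x k, a, b, rfl⟩, ?_⟩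
          simp only [CF.sem, CF.sem_imp, sem_agreeOff, duo_one, duo_two, stdW_fm, hag]
          exact fun _ => ⟨fun i _ hne => (Function.update_of_ne hne _ _).symm, hk⟩
      · exact ih2 e he

theorem std_clos (V : List ℕ) (n F) : ∀ e ∈ closE (coords V), EV (stdM n F) e := by
  have key : ∀ c ∈ coords V, ∀ w ∈ stdM n F, ∀ k, ∃ w' ∈ stdM n F,
      (∀ d ∈ coords V, d ≠ c → w d = w' d) ∧ w' c = k := by
    rintro c hc _ ⟨v, a, b, rfl⟩ k
    simp only [coords, vcomp, List.mem_cons, List.mem_map] at hc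
    rcases hc with rfl | rfl | ⟨i, hi, rfl⟩
    · refine ⟨_, ⟨v, k, b, rfl⟩, ?_, rfl⟩
      simp [coords, vcomp, stdW]
    · refine ⟨_, ⟨v, a, k, rfl⟩, ?_, rfl⟩
      simp [coords, vcomp, stdW]
    · refine ⟨_, ⟨Function.update v i k, a, b, rfl⟩, ?_, by simp [stdW]⟩
      simp only [coords, vcomp, List.mem_cons, List.mem_map]
      rintro d (rfl | rfl | ⟨j, hj, rfl⟩) hne
      · rfl
      · rfl
      · have : j ≠ i := fun h => hne (by rw [h])
        simp [stdW, this]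
  intro e he w hw
  simp only [closE, List.mem_append, List.mem_map] at he
  rcases he with ⟨c, hc, rfl⟩ | ⟨c, hc, rfl⟩
  · obtain ⟨w', hw', h1, h2⟩ := key c hc w hw 0
    refine ⟨w', hw', ?_⟩
    simp only [CF.sem, sem_agreeOff, duo_one, duo_two]
    exact ⟨h1, h2⟩
  · obtain ⟨w', hw', h1, h2⟩ := key c hc w hw (w c + 1)
    refine ⟨w', hw', ?_⟩
    simp only [CF.sem, sem_agreeOff, duo_one, duo_two]
    exact ⟨h1, h2⟩

theorem csat_iff (ψ : AForm) (n : ℕ) :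
    (∃ F : ℕ → ℕ → ℕ, ψ.sat (fun _ => n) F) ↔
      ∃ M, CSat Comp.inp (rootC ψ) (.and arithC (formC (vcomp ψ.vs) ψ))
        (closE (coords ψ.vs) ++ formE (vcomp ψ.vs) ψ) n M := by
  constructor
  · rintro ⟨F, hF⟩
    obtain ⟨h1, h2⟩ := std_form ψ.vs n F ψ (List.Subset.refl _)
    refine ⟨stdM n F, ⟨_, ⟨fun _ => n, 0, 0, rfl⟩, rfl, ?_⟩, ?_, ?_⟩
    · simp only [rootC, CF.sem, stdW_fm, CF.sem_all, List.mem_map, forall_exists_index, and_imp,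
        forall_apply_eq_imp_iff₂]
      exact ⟨hF, fun _ _ => rfl⟩
    · exact (UV_and _ _).2 ⟨std_arith n F, h1⟩
    · intro w hw e he
      rcases List.mem_append.1 he with he | he
      · exact std_clos _ n F e he w hw
      · exact h2 e he w hw
  · rintro ⟨M, ⟨w0, hw0, hX, hr⟩, hU, hE⟩
    obtain ⟨hA, hφ⟩ := (UV_and _ _).1 hU
    have hV : Full M ψ.vs := full_of _ ⟨w0, hw0⟩
      fun e he w hw => hE w hw e (List.mem_append_left _ he)
    have hex : ∀ k, ∃ w ∈ M, w .argA = k := fun k => by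
      obtain ⟨w, hw, h, -⟩ := hV (fun _ => 0) k 0
      exact ⟨w, hw, h⟩
    choose g hg hgA using hex
    simp only [rootC, CF.sem, CF.sem_all, List.mem_map, forall_exists_index, and_imp,
      forall_apply_eq_imp_iff₂] at hr
    refine ⟨fun f k => g k (.fn f), ?_⟩
    refine (form_correct hV hA (fun f k => ⟨g k, hg k, hgA k, rfl⟩) ψ hφ
      (fun e he w hw => hE w hw e (List.mem_append_right _ he)) (List.Subset.refl _) w0 hw0 _
      ?_).1 hr.1
    intro i hi
    rw [hr.2 i hi, hX]

/-- **Σ¹₁-hardness of HyperLTL satisfiability via the recurring tiling problem**: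
there is a total computable function mapping every finite set `Ti` of tiles with
designated tile `τ₀ ∈ Ti` to a HyperLTL sentence `φ_Ti` that is satisfiable iff
there is a recurrent tiling of the positive quadrant; consequently every Σ¹₁ set
many-one reduces to HyperLTL satisfiability via a total computable function. -/
theorem hyperltl_sat_Sigma11_hard :
    (∃ toForm : Finset Tile × Tile → HFormula ℕ,
      (∀ inst, (toForm inst).IsSentence) ∧
      (∃ f : ℕ → ℕ, Computable f ∧
        ∀ inst : Finset Tile × Tile,
          f (Encodable.encode inst) = HFormula.codeWith id (toForm inst)) ∧
      (∀ (Ti : Finset Tile) (τ₀ : Tile), τ₀ ∈ Ti →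
        (HSatisfiable (toForm (Ti, τ₀)) ↔ RecurTiling Ti τ₀))) ∧
    ∀ N : Set ℕ, Sigma11 N →
      ManyOneRed N {n : ℕ | ∃ φ : HFormula ℕ, φ.IsSentence ∧
        HFormula.codeWith id φ = n ∧ HSatisfiable φ} := by
  refine ⟨tiling_part, ?_⟩
  rintro N ⟨ψ, hψ⟩
  exact csat_reduce Comp.cd_inj _ _ _ _ N fun n => (hψ n).trans (csat_iff ψ n)
end

section
/- HyperLTL satisfiability restricted to sets of ultimately periodic traces is Σ¹₁-complete: under a fixed computable injective encoding of HyperLTL sentences as natural numbers, the set of codes of HyperLTL sentences that have a model consisting only of ultimately periodic traces is Σ¹₁, and every Σ¹₁ set many-one reduces to it via a total computable function. -/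
/-- A trace is ultimately periodic. -/
def UltPeriodic {AP : Type} (t : Trace AP) : Prop :=
  ∃ s p : ℕ, 1 ≤ s ∧ 1 ≤ p ∧ ∀ n, s ≤ n → t (n + p) = t n

/-- The set of codes of HyperLTL sentences having a model that consists only of
ultimately periodic traces. -/
def UPSatCodes : Set ℕ :=
  {n : ℕ | ∃ φ : HFormula ℕ, φ.IsSentence ∧ HFormula.codeWith id φ = n ∧
    ∃ T : Set (Trace ℕ), (∀ t ∈ T, UltPeriodic t) ∧ HModels T φ}

namespace HUP

/-! ### Codes of terms and formulas -/

def cT0 : ATerm → ℕ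
  | .var x => Nat.pair 0 x
  | .zero => Nat.pair 1 0
  | .one => Nat.pair 2 0
  | .add s t => Nat.pair 3 (Nat.pair (cT0 s) (cT0 t))
  | .mul s t => Nat.pair 4 (Nat.pair (cT0 s) (cT0 t))
  | .app f s => Nat.pair 5 (Nat.pair f (cT0 s))

theorem cT0_inj : ∀ {s t : ATerm}, cT0 s = cT0 t → s = t := by
  intro s
  induction s <;> intro t h <;> cases t <;> simp_all [cT0, Nat.pair_eq_pair] <;> grind

def cF0 : AForm → ℕ
  | .eq s t => Nat.pair 0 (Nat.pair (cT0 s) (cT0 t))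
  | .lt s t => Nat.pair 1 (Nat.pair (cT0 s) (cT0 t))
  | .neg φ => Nat.pair 2 (cF0 φ)
  | .disj φ χ => Nat.pair 3 (Nat.pair (cF0 φ) (cF0 χ))
  | .exN x φ => Nat.pair 4 (Nat.pair x (cF0 φ))
  | .allN x φ => Nat.pair 5 (Nat.pair x (cF0 φ))

theorem cF0_inj : ∀ {s t : AForm}, cF0 s = cF0 t → s = t := by
  intro s
  induction s <;> intro t h <;> cases t <;> simp_all [cF0, Nat.pair_eq_pair] <;>
    grind [cT0_inj]

/-- proposition marking the value of a term -/
def cT (s : ATerm) : ℕ := 2 * cT0 s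
/-- proposition marking the truth value of a formula -/
def cF (s : AForm) : ℕ := 2 * cF0 s + 1

theorem cT_inj {s t : ATerm} : cT s = cT t ↔ s = t :=
  ⟨fun h => cT0_inj (by unfold cT at h; omega), fun h => by rw [h]⟩
theorem cF_inj {s t : AForm} : cF s = cF t ↔ s = t :=
  ⟨fun h => cF0_inj (by unfold cF at h; omega), fun h => by rw [h]⟩
theorem cT_ne_cF {s : ATerm} {t : AForm} : cT s ≠ cF t := by unfold cT cF; omega
theorem cF_ne_cT {s : ATerm} {t : AForm} : cF t ≠ cT s := by unfold cT cF; omega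

/-! ### LTL combinators -/

abbrev Asg := ℕ → Trace ℕ

@[simp] theorem atom_sat (a x : ℕ) (As : Asg) : (QF.atom a x).sat As ↔ a ∈ As x 0 := Iff.rfl
@[simp] theorem shift_at (As : Asg) (j x i : ℕ) : shiftAsg As j x i = As x (i + j) := rfl
@[simp] theorem neg_sat (q : QF ℕ) (As : Asg) : (QF.neg q).sat As ↔ ¬ q.sat As := Iff.rfl
@[simp] theorem disj_sat (q r : QF ℕ) (As : Asg) :
    (QF.disj q r).sat As ↔ (q.sat As ∨ r.sat As) := Iff.rfl
@[simp] theorem next_sat (q : QF ℕ) (As : Asg) :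
    (QF.next q).sat As ↔ q.sat (shiftAsg As 1) := Iff.rfl

def tt : QF ℕ := .disj (.atom 0 0) (.neg (.atom 0 0))
def cj (a b : QF ℕ) : QF ℕ := .neg (.disj (.neg a) (.neg b))
def imp (a b : QF ℕ) : QF ℕ := .disj (.neg a) b
def ev (a : QF ℕ) : QF ℕ := .untl tt a
def bigAnd : List (QF ℕ) → QF ℕ
  | [] => tt
  | q :: l => cj q (bigAnd l)
def nextN : ℕ → QF ℕ → QF ℕ
  | 0, q => q
  | n + 1, q => .next (nextN n q)

@[simp] theorem tt_sat (As : Asg) : tt.sat As := by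
  simp only [tt, disj_sat, neg_sat]; exact em _
@[simp] theorem cj_sat (a b : QF ℕ) (As : Asg) : (cj a b).sat As ↔ a.sat As ∧ b.sat As := by
  simp only [cj, disj_sat, neg_sat]; tauto
@[simp] theorem imp_sat (a b : QF ℕ) (As : Asg) : (imp a b).sat As ↔ (a.sat As → b.sat As) := by
  simp only [imp, disj_sat, neg_sat]; tauto
@[simp] theorem ev_sat (a : QF ℕ) (As : Asg) :
    (ev a).sat As ↔ ∃ j, a.sat (shiftAsg As j) := by
  simp [ev, QF.sat]
@[simp] theorem bigAnd_sat (l : List (QF ℕ)) (As : Asg) :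
    (bigAnd l).sat As ↔ ∀ q ∈ l, q.sat As := by
  induction l with
  | nil => simp [bigAnd]
  | cons q l ih => simp [bigAnd, ih]
theorem nextN_sat (n : ℕ) (q : QF ℕ) : ∀ (As : Asg),
    (nextN n q).sat As ↔ q.sat (shiftAsg As n) := by
  induction n with
  | zero => intro As; exact Iff.rfl
  | succ n ih =>
    intro As
    have : shiftAsg (shiftAsg As 1) n = shiftAsg As (n+1) := by
      funext x i; simp [shiftAsg, Trace.shift]; congr 1
    simp [nextN, ih, this]

def EqQ (a x b y : ℕ) : QF ℕ := ev (cj (.atom a x) (.atom b y))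
def SuccQ (a x b y : ℕ) : QF ℕ := ev (cj (.atom a x) (.next (.atom b y)))
def LtQ (a x b y : ℕ) : QF ℕ := ev (cj (.atom a x) (.next (ev (.atom b y))))
def UniqQ (a x : ℕ) : QF ℕ := cj (ev (.atom a x)) (.neg (LtQ a x a x))

@[simp] theorem EqQ_sat (a x b y : ℕ) (As : Asg) :
    (EqQ a x b y).sat As ↔ ∃ i, a ∈ As x i ∧ b ∈ As y i := by simp [EqQ]
@[simp] theorem SuccQ_sat (a x b y : ℕ) (As : Asg) :
    (SuccQ a x b y).sat As ↔ ∃ i, a ∈ As x i ∧ b ∈ As y (i + 1) := by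
  simp [SuccQ, add_comm]
@[simp] theorem LtQ_sat (a x b y : ℕ) (As : Asg) :
    (LtQ a x b y).sat As ↔ ∃ i j, i < j ∧ a ∈ As x i ∧ b ∈ As y j := by
  simp only [LtQ, ev_sat, cj_sat, atom_sat, next_sat, shift_at]
  constructor
  · rintro ⟨i, h, j, h'⟩
    exact ⟨i, _, by omega, by simpa using h, h'⟩
  · rintro ⟨i, j, hij, h, h'⟩
    refine ⟨i, by simpa using h, j - (i + 1), ?_⟩
    convert h' using 2
    omega
@[simp] theorem UniqQ_sat (a x : ℕ) (As : Asg) :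
    (UniqQ a x).sat As ↔ ∃! i, a ∈ As x i := by
  simp only [UniqQ, cj_sat, ev_sat, neg_sat, LtQ_sat, atom_sat, shift_at, zero_add]
  constructor
  · rintro ⟨⟨i, hi⟩, h⟩
    refine ⟨i, hi, fun j hj => ?_⟩
    by_contra hne
    rcases lt_or_gt_of_ne hne with h1 | h1
    · exact h ⟨j, i, h1, hj, hi⟩
    · exact h ⟨i, j, h1, hi, hj⟩
  · rintro ⟨i, hi, hu⟩
    refine ⟨⟨i, hi⟩, ?_⟩
    rintro ⟨j, k, hjk, hj, hk⟩
    have := hu j hj; have := hu k hk; omega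

/-! ### free variables -/

theorem sat_congr (q : QF ℕ) : ∀ (As As' : Asg), (∀ x ∈ q.freeVars, As x = As' x) →
    (q.sat As ↔ q.sat As') := by
  induction q with
  | atom a x => intro As As' h; simp [h x (by simp [QF.freeVars])]
  | neg q ih => intro As As' h; simp [ih As As' h]
  | disj q r ihq ihr =>
    intro As As' h
    simp [ihq As As' (fun x hx => h x (Or.inl hx)), ihr As As' (fun x hx => h x (Or.inr hx))]
  | next q ih =>
    intro As As' h
    exact ih _ _ (fun x hx => by simp [shiftAsg, h x hx])
  | untl q r ihq ihr =>
    intro As As' h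
    have h1 : ∀ j, q.sat (shiftAsg As j) ↔ q.sat (shiftAsg As' j) := fun j =>
      ihq _ _ (fun x hx => by simp [shiftAsg, h x (Or.inl hx)])
    have h2 : ∀ j, r.sat (shiftAsg As j) ↔ r.sat (shiftAsg As' j) := fun j =>
      ihr _ _ (fun x hx => by simp [shiftAsg, h x (Or.inr hx)])
    simp [QF.sat, h1, h2]

/-- all free variables are among `0,…,3` or `k` -/
def Bd (k : ℕ) (q : QF ℕ) : Prop := ∀ x ∈ q.freeVars, x < 4 ∨ x = k

theorem Bd_atom {k a x : ℕ} (h : x < 4 ∨ x = k) : Bd k (.atom a x) := by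
  intro y hy; simp [QF.freeVars] at hy; subst hy; exact h
theorem Bd_neg {k : ℕ} {q : QF ℕ} (h : Bd k q) : Bd k (.neg q) := h
theorem Bd_next {k : ℕ} {q : QF ℕ} (h : Bd k q) : Bd k (.next q) := h
theorem Bd_disj {k : ℕ} {q r : QF ℕ} (h : Bd k q) (h' : Bd k r) : Bd k (.disj q r) := by
  rintro x (hx | hx)
  exacts [h x hx, h' x hx]
theorem Bd_untl {k : ℕ} {q r : QF ℕ} (h : Bd k q) (h' : Bd k r) : Bd k (.untl q r) := by
  rintro x (hx | hx)
  exacts [h x hx, h' x hx]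
theorem Bd_tt {k : ℕ} : Bd k tt := Bd_disj (Bd_atom (by simp)) (Bd_neg (Bd_atom (by simp)))
theorem Bd_cj {k : ℕ} {q r : QF ℕ} (h : Bd k q) (h' : Bd k r) : Bd k (cj q r) :=
  Bd_neg (Bd_disj (Bd_neg h) (Bd_neg h'))
theorem Bd_imp {k : ℕ} {q r : QF ℕ} (h : Bd k q) (h' : Bd k r) : Bd k (imp q r) :=
  Bd_disj (Bd_neg h) h'
theorem Bd_ev {k : ℕ} {q : QF ℕ} (h : Bd k q) : Bd k (ev q) := Bd_untl Bd_tt h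
theorem Bd_bigAnd {k : ℕ} {l : List (QF ℕ)} (h : ∀ q ∈ l, Bd k q) : Bd k (bigAnd l) := by
  induction l with
  | nil => exact Bd_tt
  | cons q l ih => 
    exact Bd_cj (h q (by simp)) (ih fun r hr => h r (by simp [hr]))
theorem Bd_nextN {k n : ℕ} {q : QF ℕ} (h : Bd k q) : Bd k (nextN n q) := by
  induction n with
  | zero => exact h
  | succ n ih => exact ih
theorem Bd_EqQ {k a x b y : ℕ} (h : x < 4 ∨ x = k) (h' : y < 4 ∨ y = k) : Bd k (EqQ a x b y) :=
  Bd_ev (Bd_cj (Bd_atom h) (Bd_atom h'))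
theorem Bd_SuccQ {k a x b y : ℕ} (h : x < 4 ∨ x = k) (h' : y < 4 ∨ y = k) :
    Bd k (SuccQ a x b y) :=
  Bd_ev (Bd_cj (Bd_atom h) (Bd_next (Bd_atom h')))
theorem Bd_LtQ {k a x b y : ℕ} (h : x < 4 ∨ x = k) (h' : y < 4 ∨ y = k) :
    Bd k (LtQ a x b y) :=
  Bd_ev (Bd_cj (Bd_atom h) (Bd_next (Bd_ev (Bd_atom h'))))
theorem Bd_UniqQ {k a x : ℕ} (h : x < 4 ∨ x = k) : Bd k (UniqQ a x) :=
  Bd_cj (Bd_ev (Bd_atom h)) (Bd_neg (Bd_LtQ h h))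

/-! ### A block of existential quantifiers -/

def build : ℕ → QF ℕ → List (ℕ → QF ℕ) → HFormula ℕ
  | _, acc, [] => .qf acc
  | k, acc, C :: Cs => .ex k (build (k + 1) (cj acc (C k)) Cs)

theorem build_sat (T : Set (Trace ℕ)) (Sem : (ℕ → QF ℕ) → Trace ℕ → Trace ℕ → Prop)
    (Cs : List (ℕ → QF ℕ)) : ∀ (k : ℕ) (acc : QF ℕ) (As : Asg), 4 ≤ k →
    (∀ x ∈ acc.freeVars, x < k) → (∀ C ∈ Cs, ∀ k, 4 ≤ k → Bd k (C k)) →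
    (∀ C ∈ Cs, ∀ k, 4 ≤ k → ∀ As : Asg, (C k).sat As ↔ Sem C (As 1) (As k)) →
    ((build k acc Cs).sat T As ↔ acc.sat As ∧ ∀ C ∈ Cs, ∃ y ∈ T, Sem C (As 1) y) := by
  induction Cs with
  | nil => intro k acc As _ _ _ _; simp [build, HFormula.sat]
  | cons C Cs ih =>
    intro k acc As hk hacc hB hS
    have hfv : ∀ x ∈ (cj acc (C k)).freeVars, x < k + 1 := by
      rintro x (hx | hx)
      · have := hacc x hx; omega
      · have := hB C (by simp) k hk x hx; omega
    have key : ∀ t, (acc.sat (Function.update As k t) ↔ acc.sat As) := fun t =>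
      sat_congr _ _ _ (fun x hx => by
        have := hacc x hx
        rw [Function.update_of_ne (by omega)])
    simp only [build, HFormula.sat]
    have := fun t => ih (k+1) (cj acc (C k)) (Function.update As k t) (by omega) hfv
      (fun C' h => hB C' (by simp [h])) (fun C' h => hS C' (by simp [h]))
    simp only [this, cj_sat, key, hS C (by simp) k hk, Function.update_self,
      Function.update_of_ne (show (1:ℕ) ≠ k by omega), List.mem_cons, forall_eq_or_imp]
    constructor
    · rintro ⟨t, ht, ⟨h1, h2⟩, h3⟩
      exact ⟨h1, ⟨t, ht, h2⟩, h3⟩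
    · rintro ⟨h1, ⟨t, ht, h2⟩, h3⟩
      exact ⟨t, ht, ⟨h1, h2⟩, h3⟩

theorem build_fv (Cs : List (ℕ → QF ℕ)) : ∀ (k : ℕ) (acc : QF ℕ), 4 ≤ k →
    (∀ x ∈ acc.freeVars, x < k) → (∀ C ∈ Cs, ∀ k, 4 ≤ k → Bd k (C k)) →
    ∀ x ∈ (build k acc Cs).freeVars, x < k := by
  induction Cs with
  | nil => intro k acc _ h _; exact h
  | cons C Cs ih =>
    intro k acc hk hacc hB x hx
    have hfv : ∀ x ∈ (cj acc (C k)).freeVars, x < k + 1 := by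
      rintro x (hx | hx)
      · have := hacc x hx; omega
      · have := hB C (by simp) k hk x hx; omega
    obtain ⟨h1, h2⟩ := hx
    have := ih (k+1) _ (by omega) hfv (fun C' h => hB C' (by simp [h])) x h1
    simp at h2
    omega

theorem build_code (Cs : List (ℕ → QF ℕ)) : ∀ (k : ℕ),
    ∃ g : ℕ → ℕ, Primrec g ∧ ∀ acc, (build k acc Cs).codeWith id = g (acc.codeWith id) := by
  induction Cs with
  | nil =>
    intro k
    exact ⟨fun n => Nat.pair 2 n, Primrec₂.natPair.comp (Primrec.const 2) Primrec.id,
      fun acc => rfl⟩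
  | cons C Cs ih =>
    intro k
    obtain ⟨g, hg, h⟩ := ih (k+1)
    refine ⟨fun n => Nat.pair 0 (Nat.pair k (g (Nat.pair 1 (Nat.pair 2 (Nat.pair (Nat.pair 1 n)
      (Nat.pair 1 ((C k).codeWith id))))))), ?_, fun acc => ?_⟩
    · refine Primrec₂.natPair.comp (Primrec.const _) (Primrec₂.natPair.comp (Primrec.const _)
        (hg.comp (Primrec₂.natPair.comp (Primrec.const _) (Primrec₂.natPair.comp (Primrec.const _)
        (Primrec₂.natPair.comp (Primrec₂.natPair.comp (Primrec.const _) Primrec.id)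
          (Primrec.const _))))))
    · simp only [build, HFormula.codeWith, h]; rfl

theorem nextN_code (q : QF ℕ) : ∀ n, (nextN n q).codeWith id =
    (fun m => Nat.pair 3 m)^[n] (q.codeWith id) := by
  intro n
  induction n with
  | zero => rfl
  | succ n ih => rw [Function.iterate_succ_apply', ← ih]; rfl

end HUP

namespace HUP

/-! ### The sentence -/

def agreeQ (K j x y : ℕ) : QF ℕ :=
  bigAnd ((List.range K).map fun k =>
    if k = j then tt else EqQ (cT (.var k)) x (cT (.var k)) y)

@[simp] theorem agreeQ_sat (K j x y : ℕ) (As : Asg) : (agreeQ K j x y).sat As ↔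
    ∀ k < K, k ≠ j → ∃ i, cT (.var k) ∈ As x i ∧ cT (.var k) ∈ As y i := by
  simp only [agreeQ, bigAnd_sat, List.mem_map, List.mem_range, forall_exists_index, and_imp,
    forall_apply_eq_imp_iff₂]
  refine forall₂_congr fun k hk => ?_
  by_cases h : k = j <;> simp [h]

theorem Bd_agreeQ {K j x y k : ℕ} (h : x < 4 ∨ x = k) (h' : y < 4 ∨ y = k) :
    Bd k (agreeQ K j x y) := by
  apply Bd_bigAnd
  intro q hq
  simp only [List.mem_map] at hq
  obtain ⟨i, -, rfl⟩ := hq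
  split_ifs
  exacts [Bd_tt, Bd_EqQ h h']

abbrev tA (K : ℕ) : ATerm := .var K
abbrev tB (K : ℕ) : ATerm := .var (K + 1)
abbrev tS (K : ℕ) : ATerm := .add (tA K) (tB K)
abbrev tM (K : ℕ) : ATerm := .mul (tA K) (tB K)

def uT (K : ℕ) : ATerm → QF ℕ
  | .zero => .atom (cT .zero) 1
  | .one => .next (.atom (cT .one) 1)
  | .add s u => imp (cj (EqQ (cT (tA K)) 2 (cT s) 1) (EqQ (cT (tB K)) 2 (cT u) 1))
      (EqQ (cT (.add s u)) 1 (cT (tS K)) 2)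
  | .mul s u => imp (cj (EqQ (cT (tA K)) 2 (cT s) 1) (EqQ (cT (tB K)) 2 (cT u) 1))
      (EqQ (cT (.mul s u)) 1 (cT (tM K)) 2)
  | _ => tt

def uTT : ATerm → ATerm → QF ℕ
  | .app f s, .app g u =>
      if f = g then imp (EqQ (cT s) 1 (cT u) 2) (EqQ (cT (.app f s)) 1 (cT (.app g u)) 2) else tt
  | _, _ => tt

def iffQ (a b : QF ℕ) : QF ℕ := cj (imp a b) (imp b a)
@[simp] theorem iffQ_sat (a b : QF ℕ) (As : Asg) :
    (iffQ a b).sat As ↔ (a.sat As ↔ b.sat As) := by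
  simp only [iffQ, cj_sat, imp_sat]; tauto
theorem Bd_iffQ {k : ℕ} {q r : QF ℕ} (h : Bd k q) (h' : Bd k r) : Bd k (iffQ q r) :=
  Bd_cj (Bd_imp h h') (Bd_imp h' h)

def uF (K : ℕ) : AForm → QF ℕ
  | .eq s u => iffQ (.atom (cF (.eq s u)) 1) (EqQ (cT s) 1 (cT u) 1)
  | .lt s u => iffQ (.atom (cF (.lt s u)) 1) (LtQ (cT s) 1 (cT u) 1)
  | .neg φ => iffQ (.atom (cF (.neg φ)) 1) (.neg (.atom (cF φ) 1))
  | .disj φ χ => iffQ (.atom (cF (.disj φ χ)) 1) (.disj (.atom (cF φ) 1) (.atom (cF χ) 1))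
  | .exN j φ => imp (cj (agreeQ K j 1 2) (.atom (cF φ) 2)) (.atom (cF (.exN j φ)) 1)
  | .allN j φ => imp (cj (agreeQ K j 1 2) (.atom (cF (.allN j φ)) 1)) (.atom (cF φ) 2)

def eF (K : ℕ) : AForm → ℕ → QF ℕ
  | .exN j φ, k => imp (.atom (cF (.exN j φ)) 1) (cj (agreeQ K j 1 k) (.atom (cF φ) k))
  | .allN j φ, k =>
      imp (.neg (.atom (cF (.allN j φ)) 1)) (cj (agreeQ K j 1 k) (.neg (.atom (cF φ) k)))
  | _, _ => tt

def eSucc (K j k : ℕ) : QF ℕ := cj (agreeQ K j 1 k) (SuccQ (cT (.var j)) 1 (cT (.var j)) k)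
def eZero (K j k : ℕ) : QF ℕ := cj (agreeQ K j 1 k) (.atom (cT (.var j)) k)

/-- recursion equations for addition and multiplication -/
def uA (K : ℕ) : QF ℕ :=
  cj (imp (.atom (cT (tB K)) 1) (cj (EqQ (cT (tS K)) 1 (cT (tA K)) 1) (.atom (cT (tM K)) 1)))
   (imp (cj (EqQ (cT (tA K)) 1 (cT (tA K)) 2) (SuccQ (cT (tB K)) 1 (cT (tB K)) 2))
    (cj (SuccQ (cT (tS K)) 1 (cT (tS K)) 2)
     (imp (cj (EqQ (cT (tM K)) 1 (cT (tA K)) 3) (EqQ (cT (tA K)) 1 (cT (tB K)) 3))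
        (EqQ (cT (tM K)) 2 (cT (tS K)) 3))))

def startQ (K : ℕ) (ψ : AForm) (x : ℕ) : QF ℕ :=
  cj (nextN x (bigAnd ((List.range (K + 2)).map fun j => .atom (cT (.var j)) 0)))
    (.atom (cF ψ) 0)

def restQ (K : ℕ) (S : List ATerm) (P : List AForm) : QF ℕ :=
  cj (bigAnd (S.map fun s => UniqQ (cT s) 1)) (cj (bigAnd (S.map (uT K)))
    (cj (bigAnd (S.map fun s => bigAnd (S.map (uTT s)))) (cj (bigAnd (P.map (uF (K + 2))))
      (uA K))))

def exC (K : ℕ) (P : List AForm) : List (ℕ → QF ℕ) :=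
  P.map (eF (K + 2)) ++ ((List.range (K + 2)).map (eSucc (K + 2)) ++
    (List.range (K + 2)).map (eZero (K + 2)))

def phi (K : ℕ) (S : List ATerm) (P : List AForm) (ψ : AForm) (x : ℕ) : HFormula ℕ :=
  .ex 0 (.all 1 (.all 2 (.all 3
    (build 4 (cj (startQ K ψ x) (restQ K S P)) (exC K P)))))

theorem Bd_uT {K : ℕ} (s : ATerm) : Bd 0 (uT K s) := by
  cases s <;> simp only [uT] <;>
    first
    | exact Bd_tt
    | exact Bd_atom (by simp)
    | exact Bd_next (Bd_atom (by simp))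
    | exact Bd_imp (Bd_cj (Bd_EqQ (by simp) (by simp)) (Bd_EqQ (by simp) (by simp)))
        (Bd_EqQ (by simp) (by simp))

theorem Bd_uTT (s u : ATerm) : Bd 0 (uTT s u) := by
  unfold uTT
  split
  · split_ifs
    · exact Bd_imp (Bd_EqQ (by simp) (by simp)) (Bd_EqQ (by simp) (by simp))
    · exact Bd_tt
  · exact Bd_tt

theorem Bd_uF {K : ℕ} (φ : AForm) : Bd 0 (uF K φ) := by
  cases φ <;> simp only [uF] <;>
    first
    | exact Bd_iffQ (Bd_atom (by simp)) (Bd_EqQ (by simp) (by simp))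
    | exact Bd_iffQ (Bd_atom (by simp)) (Bd_LtQ (by simp) (by simp))
    | exact Bd_iffQ (Bd_atom (by simp)) (Bd_neg (Bd_atom (by simp)))
    | exact Bd_iffQ (Bd_atom (by simp)) (Bd_disj (Bd_atom (by simp)) (Bd_atom (by simp)))
    | exact Bd_imp (Bd_cj (Bd_agreeQ (by simp) (by simp)) (Bd_atom (by simp))) (Bd_atom (by simp))

theorem Bd_eF {K k : ℕ} (φ : AForm) : Bd k (eF K φ k) := by
  cases φ <;> simp only [eF] <;>
    first
    | exact Bd_tt
    | exact Bd_imp (Bd_atom (by simp)) (Bd_cj (Bd_agreeQ (by simp) (by simp)) (Bd_atom (by simp)))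
    | exact Bd_imp (Bd_neg (Bd_atom (by simp)))
        (Bd_cj (Bd_agreeQ (by simp) (by simp)) (Bd_neg (Bd_atom (by simp))))

theorem Bd_exC {K : ℕ} {P : List AForm} : ∀ C ∈ exC K P, ∀ k, 4 ≤ k → Bd k (C k) := by
  intro C hC k _
  simp only [exC, List.mem_append, List.mem_map] at hC
  rcases hC with ⟨φ, -, rfl⟩ | ⟨φ, -, rfl⟩ | ⟨φ, -, rfl⟩
  · exact Bd_eF φ
  · exact Bd_cj (Bd_agreeQ (by simp) (by simp)) (Bd_SuccQ (by simp) (by simp))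
  · exact Bd_cj (Bd_agreeQ (by simp) (by simp)) (Bd_atom (by simp))

theorem Bd_uA {K : ℕ} : Bd 0 (uA K) := by
  unfold uA
  repeat' first
    | apply Bd_cj
    | apply Bd_imp
    | exact Bd_EqQ (by simp) (by simp)
    | exact Bd_SuccQ (by simp) (by simp)
    | exact Bd_atom (by simp)

theorem acc_fv (K : ℕ) (S : List ATerm) (P : List AForm) (ψ : AForm) (x : ℕ) :
    ∀ y ∈ (cj (startQ K ψ x) (restQ K S P)).freeVars, y < 4 := by
  have : Bd 0 (cj (startQ K ψ x) (restQ K S P)) := by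
    refine Bd_cj (Bd_cj (Bd_nextN (Bd_bigAnd ?_)) (Bd_atom (by simp)))
      (Bd_cj (Bd_bigAnd ?_) (Bd_cj (Bd_bigAnd ?_) (Bd_cj (Bd_bigAnd ?_) (Bd_cj (Bd_bigAnd ?_)
        Bd_uA))))
    · intro q hq
      simp only [List.mem_map] at hq
      obtain ⟨j, -, rfl⟩ := hq
      exact Bd_atom (by simp)
    · intro q hq
      simp only [List.mem_map] at hq
      obtain ⟨j, -, rfl⟩ := hq
      exact Bd_UniqQ (by simp)
    · intro q hq
      simp only [List.mem_map] at hq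
      obtain ⟨j, -, rfl⟩ := hq
      exact Bd_uT _
    · intro q hq
      simp only [List.mem_map] at hq
      obtain ⟨j, -, rfl⟩ := hq
      refine Bd_bigAnd ?_
      intro q hq
      simp only [List.mem_map] at hq
      obtain ⟨j, -, rfl⟩ := hq
      exact Bd_uTT _ _
    · intro q hq
      simp only [List.mem_map] at hq
      obtain ⟨j, -, rfl⟩ := hq
      exact Bd_uF _
  intro y hy
  rcases this y hy with h | h <;> omega

end HUP

namespace HUP

theorem phi_sentence (K : ℕ) (S : List ATerm) (P : List AForm) (ψ : AForm) (x : ℕ) :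
    (phi K S P ψ x).IsSentence := by
  have := build_fv (exC K P) 4 _ le_rfl (acc_fv K S P ψ x) Bd_exC
  unfold HFormula.IsSentence
  ext y
  simp only [phi, HFormula.freeVars, Set.mem_sdiff, Set.mem_singleton_iff, Set.mem_empty_iff_false,
    iff_false]
  rintro ⟨⟨⟨⟨h, h3⟩, h2⟩, h1⟩, h0⟩
  have := this y h
  omega

theorem phi_computable (K : ℕ) (S : List ATerm) (P : List AForm) (ψ : AForm) :
    Computable (fun x => (phi K S P ψ x).codeWith id) := by
  obtain ⟨g, hg, h⟩ := build_code (exC K P) 4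
  have hp : ∀ {f g : ℕ → ℕ}, Primrec f → Primrec g → Primrec fun x => Nat.pair (f x) (g x) :=
    fun hf hg => Primrec₂.natPair.comp hf hg
  have hc : ∀ n : ℕ, Primrec fun _ : ℕ => n := fun n => Primrec.const n
  have hit : ∀ c : ℕ, Primrec fun x : ℕ => (fun m => Nat.pair 3 m)^[x] c := by
    intro c
    refine Primrec.nat_iterate Primrec.id (Primrec.const c) ?_
    exact Primrec₂.natPair.comp (Primrec.const 3) Primrec.snd
  apply Primrec.to_comp
  simp only [phi, HFormula.codeWith, h]
  simp only [cj, startQ, QF.codeWith, nextN_code]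
  exact hp (hc _) (hp (hc _) (hp (hc _) (hp (hc _) (hp (hc _) (hp (hc _) (hp (hc _)
    (hp (hc _) (hg.comp (hp (hc _) (hp (hc _) (hp (hp (hc _)
      (hp (hc _) (hp (hc _) (hp (hp (hc _) (hit _)) (hc _))))) (hc _))))))))))))

def asg4 (z a b c : Trace ℕ) : Asg
  | 0 => z
  | 1 => a
  | 2 => b
  | 3 => c
  | _ => fun _ => ∅

@[simp] theorem asg4_0 (z a b c : Trace ℕ) : asg4 z a b c 0 = z := rfl
@[simp] theorem asg4_1 (z a b c : Trace ℕ) : asg4 z a b c 1 = a := rfl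
@[simp] theorem asg4_2 (z a b c : Trace ℕ) : asg4 z a b c 2 = b := rfl
@[simp] theorem asg4_3 (z a b c : Trace ℕ) : asg4 z a b c 3 = c := rfl

def Sem (C : ℕ → QF ℕ) (t y : Trace ℕ) : Prop := (C 4).sat (fun x => if x = 4 then y else t)

theorem Sem_eF (K : ℕ) (φ : AForm) (k : ℕ) (As : Asg) :
    (eF K φ k).sat As ↔ Sem (eF K φ) (As 1) (As k) := by
  unfold Sem
  cases φ <;> simp [eF]
theorem Sem_eSucc (K j k : ℕ) (As : Asg) :
    (eSucc K j k).sat As ↔ Sem (eSucc K j) (As 1) (As k) := by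
  unfold Sem; simp [eSucc]
theorem Sem_eZero (K j k : ℕ) (As : Asg) :
    (eZero K j k).sat As ↔ Sem (eZero K j) (As 1) (As k) := by
  unfold Sem; simp [eZero]

theorem phi_models (K : ℕ) (S : List ATerm) (P : List AForm) (ψ : AForm) (x : ℕ)
    (T : Set (Trace ℕ)) : HModels T (phi K S P ψ x) ↔
    ∃ z ∈ T, ∀ a ∈ T, ∀ b ∈ T, ∀ c ∈ T, ((startQ K ψ x).sat (asg4 z a b c) ∧
      (restQ K S P).sat (asg4 z a b c)) ∧ 
      (∀ φ ∈ P, ∃ y ∈ T, Sem (eF (K + 2) φ) a y) ∧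
      (∀ j < K + 2, ∃ y ∈ T, Sem (eSucc (K + 2) j) a y) ∧
      (∀ j < K + 2, ∃ y ∈ T, Sem (eZero (K + 2) j) a y) := by
  have h := fun As => build_sat T Sem (exC K P) 4 _ As le_rfl (acc_fv K S P ψ x) Bd_exC (by
    intro C hC k _
    simp only [exC, List.mem_append, List.mem_map] at hC
    rcases hC with ⟨φ, -, rfl⟩ | ⟨φ, -, rfl⟩ | ⟨φ, -, rfl⟩
    · exact Sem_eF _ _ k
    · exact Sem_eSucc _ _ k
    · exact Sem_eZero _ _ k)
  have hA : ∀ z a b c : Trace ℕ, Function.update (Function.update (Function.update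
      (Function.update (fun _ _ => ∅ : Asg) 0 z) 1 a) 2 b) 3 c = asg4 z a b c := by
    intro z a b c
    funext i
    match i with
    | 0 | 1 | 2 | 3 => simp [Function.update]
    | n + 4 => simp [Function.update, asg4]
  simp only [HModels, phi, HFormula.sat, h, hA, cj_sat, asg4_1]
  simp only [exC, List.mem_append, or_imp, forall_and, List.mem_map, List.mem_range,
    forall_exists_index, and_imp, forall_apply_eq_imp_iff₂]

/-! ### Subterms and subformulas -/

def subsT : ATerm → List ATerm
  | .var x => [.var x]
  | .zero => [.zero]
  | .one => [.one]
  | .add s t => .add s t :: (subsT s ++ subsT t)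
  | .mul s t => .mul s t :: (subsT s ++ subsT t)
  | .app f s => .app f s :: subsT s

def bdT : ATerm → ℕ
  | .var x => x + 1
  | .zero => 0
  | .one => 0
  | .add s t => max (bdT s) (bdT t)
  | .mul s t => max (bdT s) (bdT t)
  | .app _ s => bdT s

def termsF : AForm → List ATerm
  | .eq s t => subsT s ++ subsT t
  | .lt s t => subsT s ++ subsT t
  | .neg φ => termsF φ
  | .disj φ χ => termsF φ ++ termsF χ
  | .exN _ φ => termsF φ
  | .allN _ φ => termsF φ

def bdF : AForm → ℕ
  | .eq s t => max (bdT s) (bdT t)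
  | .lt s t => max (bdT s) (bdT t)
  | .neg φ => bdF φ
  | .disj φ χ => max (bdF φ) (bdF χ)
  | .exN j φ => max (j + 1) (bdF φ)
  | .allN j φ => max (j + 1) (bdF φ)

def subsF : AForm → List AForm
  | .eq s t => [.eq s t]
  | .lt s t => [.lt s t]
  | .neg φ => .neg φ :: subsF φ
  | .disj φ χ => .disj φ χ :: (subsF φ ++ subsF χ)
  | .exN j φ => .exN j φ :: subsF φ
  | .allN j φ => .allN j φ :: subsF φ

theorem self_subsT (s : ATerm) : s ∈ subsT s := by cases s <;> simp [subsT]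
theorem self_subsF (s : AForm) : s ∈ subsF s := by cases s <;> simp [subsF]

theorem sub_eq {s t : ATerm} : ∀ {φ : AForm}, AForm.eq s t ∈ subsF φ →
    s ∈ termsF φ ∧ t ∈ termsF φ := by
  intro φ
  induction φ <;> simp_all [subsF, termsF]
  · simp [self_subsT]
  · tauto
theorem sub_lt {s t : ATerm} : ∀ {φ : AForm}, AForm.lt s t ∈ subsF φ →
    s ∈ termsF φ ∧ t ∈ termsF φ := by
  intro φ
  induction φ <;> simp_all [subsF, termsF]
  · simp [self_subsT]
  · tauto
theorem sub_ex {j : ℕ} {χ : AForm} : ∀ {φ : AForm}, AForm.exN j χ ∈ subsF φ → j < bdF φ := by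
  intro φ
  induction φ <;> simp_all [subsF, bdF] <;> grind
theorem sub_all {j : ℕ} {χ : AForm} : ∀ {φ : AForm}, AForm.allN j χ ∈ subsF φ → j < bdF φ := by
  intro φ
  induction φ <;> simp_all [subsF, bdF] <;> grind

def allTerms (ψ : AForm) : List ATerm :=
  (termsF ψ ++ (List.range (bdF ψ + 2)).map ATerm.var) ++ [tS (bdF ψ), tM (bdF ψ)]

/-- the reduction -/
def red (ψ : AForm) (x : ℕ) : HFormula ℕ := phi (bdF ψ) (allTerms ψ) (subsF ψ) ψ x

theorem var_mem {ψ : AForm} {j : ℕ} (h : j < bdF ψ + 2) : ATerm.var j ∈ allTerms ψ := by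
  simp [allTerms, h]

/-! ### From a model of arithmetic to a set of traces -/

def tr (S : List ATerm) (F : ℕ → ℕ → ℕ) (v : ℕ → ℕ) : Trace ℕ := fun i =>
  {a | (∃ s ∈ S, a = cT s ∧ s.eval v F = i) ∨ (i = 0 ∧ ∃ φ : AForm, a = cF φ ∧ φ.sat v F)}

@[simp] theorem tr_T (S : List ATerm) (F : ℕ → ℕ → ℕ) (v : ℕ → ℕ) (s : ATerm) (i : ℕ) :
    cT s ∈ tr S F v i ↔ s ∈ S ∧ s.eval v F = i := by
  simp only [tr, Set.mem_ofPred_eq, cT_inj, cT_ne_cF, false_and, exists_false, and_false, or_false]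
  constructor
  · rintro ⟨u, hu, rfl, h⟩; exact ⟨hu, h⟩
  · rintro ⟨h, h'⟩; exact ⟨s, h, rfl, h'⟩

@[simp] theorem tr_F (S : List ATerm) (F : ℕ → ℕ → ℕ) (v : ℕ → ℕ) (φ : AForm) :
    cF φ ∈ tr S F v 0 ↔ φ.sat v F := by
  simp [tr, cF_ne_cT, cF_inj]

theorem tr_up (S : List ATerm) (F : ℕ → ℕ → ℕ) (v : ℕ → ℕ) : UltPeriodic (tr S F v) := by
  obtain ⟨M, hM⟩ : ∃ M, ∀ s ∈ S, s.eval v F < M := by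
    induction S with
    | nil => exact ⟨0, by simp⟩
    | cons s S ih =>
      obtain ⟨M, hM⟩ := ih
      refine ⟨max M (s.eval v F + 1), fun u hu => ?_⟩
      rcases List.mem_cons.1 hu with rfl | h
      · omega
      · have := hM u h; omega
  have hempty : ∀ n, M + 1 ≤ n → tr S F v n = ∅ := by
    intro n hn
    ext a
    simp only [tr, Set.mem_ofPred_eq, Set.mem_empty_iff_false, iff_false]
    rintro (⟨s, hs, -, h⟩ | ⟨h, -⟩)
    · have := hM s hs; omega
    · omega
  exact ⟨M + 1, 1, by omega, le_rfl, fun n hn => by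
    rw [hempty n hn, hempty (n + 1) (by omega)]⟩

theorem complete (ψ : AForm) (x : ℕ) (F : ℕ → ℕ → ℕ) (h : ψ.sat (fun _ => x) F) :
    ∃ T : Set (Trace ℕ), (∀ t ∈ T, UltPeriodic t) ∧ HModels T (red ψ x) := by
  set K := bdF ψ with hK
  set S := allTerms ψ with hS
  refine ⟨{t | ∃ v : ℕ → ℕ, (∀ k, K + 2 ≤ k → v k = x) ∧ t = tr S F v}, ?_, ?_⟩
  · rintro t ⟨v, -, rfl⟩; exact tr_up _ _ _
  have hvar : ∀ j, j < K + 2 → ATerm.var j ∈ S := fun j hj => var_mem hj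
  have hSm : tS K ∈ S := by simp [hS, allTerms, hK]
  have hMm : tM K ∈ S := by simp [hS, allTerms, hK]
  have hAm : tA K ∈ S := hvar K (by omega)
  have hBm : tB K ∈ S := hvar (K+1) (by omega)
  -- updates
  have hupd : ∀ v : ℕ → ℕ, (∀ k, K + 2 ≤ k → v k = x) → ∀ j < K + 2, ∀ n,
      ∀ k, K + 2 ≤ k → Function.update v j n k = x := by
    intro v hv j hj n k hk
    rw [Function.update_of_ne (by omega)]; exact hv k hk
  have hag : ∀ v w : ℕ → ℕ, (∀ k, K + 2 ≤ k → v k = x) → (∀ k, K + 2 ≤ k → w k = x) → ∀ j,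
      (∀ k < K + 2, k ≠ j → ∃ i, (ATerm.var k ∈ S ∧ v k = i) ∧ ATerm.var k ∈ S ∧ w k = i) →
      w = Function.update v j (w j) := by
    intro v w hv hw j hh
    funext k
    by_cases hkj : k = j
    · subst hkj; simp
    · rw [Function.update_of_ne hkj]
      by_cases hk : k < K + 2
      · obtain ⟨i, ⟨-, h1⟩, -, h2⟩ := hh k hk hkj; omega
      · rw [hv k (by omega), hw k (by omega)]
  have hag' : ∀ (v : ℕ → ℕ) j n,
      (∀ k < K + 2, k ≠ j → ∃ i, (ATerm.var k ∈ S ∧ v k = i) ∧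
        ATerm.var k ∈ S ∧ Function.update v j n k = i) := by
    intro v j n k hk hkj
    exact ⟨v k, ⟨hvar k hk, rfl⟩, hvar k hk, by rw [Function.update_of_ne hkj]⟩
  rw [red, phi_models]
  refine ⟨_, ⟨fun _ => x, fun _ _ => rfl, rfl⟩, ?_⟩
  rintro _ ⟨a, ha, rfl⟩ _ ⟨b, hb, rfl⟩ _ ⟨c, hc, rfl⟩
  refine ⟨⟨?_, ?_⟩, ?_, ?_, ?_⟩
  · simp only [startQ, cj_sat, nextN_sat, bigAnd_sat, List.mem_map, List.mem_range,
      forall_exists_index, and_imp, forall_apply_eq_imp_iff₂, atom_sat, shift_at, asg4_0, zero_add,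
      tr_F, tr_T]
    exact ⟨fun j hj => ⟨hvar j hj, rfl⟩, h⟩
  · simp only [restQ, cj_sat, bigAnd_sat, List.mem_map, 
      forall_exists_index, and_imp, forall_apply_eq_imp_iff₂]
    refine ⟨?_, ?_, ?_, ?_, ?_⟩
    · intro s hs
      simp only [UniqQ_sat, asg4_1, tr_T]
      exact ⟨_, ⟨hs, rfl⟩, fun y hy => hy.2.symm⟩
    · intro s hs
      cases s with
      | var j => simp [uT]
      | zero => simpa [uT, ATerm.eval] using hs
      | one => simpa [uT, ATerm.eval] using hs
      | add s u =>
        simp only [uT, imp_sat, cj_sat, EqQ_sat, asg4_1, asg4_2, tr_T, ATerm.eval]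
        rintro ⟨⟨i, h1, h2⟩, ⟨j, h3, h4⟩⟩
        exact ⟨_, ⟨hs, rfl⟩, hSm, by omega⟩
      | mul s u =>
        simp only [uT, imp_sat, cj_sat, EqQ_sat, asg4_1, asg4_2, tr_T, ATerm.eval]
        rintro ⟨⟨i, h1, h2⟩, ⟨j, h3, h4⟩⟩
        exact ⟨_, ⟨hs, rfl⟩, hMm, by rw [h1.2, h2.2, h3.2, h4.2]⟩
      | app f s => simp [uT]
    · intro s hs u hu
      unfold uTT
      split
      · split_ifs with hfg
        · subst hfg
          simp only [imp_sat, EqQ_sat, asg4_1, asg4_2, tr_T, ATerm.eval]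
          rintro ⟨i, h1, h2⟩
          exact ⟨_, ⟨hs, rfl⟩, hu, by rw [h1.2, h2.2]⟩
        · exact tt_sat _
      · exact tt_sat _
    · intro φ hφ
      cases φ with
      | eq s u =>
        have := sub_eq hφ
        have h1 : s ∈ S := by simp [hS, allTerms, this]
        have h2 : u ∈ S := by simp [hS, allTerms, this]
        simp [uF, AForm.sat, h1, h2, eq_comm]
      | lt s u =>
        have := sub_lt hφ
        have h1 : s ∈ S := by simp [hS, allTerms, this]
        have h2 : u ∈ S := by simp [hS, allTerms, this]
        simp only [uF, iffQ_sat, atom_sat, LtQ_sat, asg4_1, tr_F, tr_T, AForm.sat, h1, h2, true_and]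
        constructor
        · intro hl; exact ⟨_, _, hl, rfl, rfl⟩
        · rintro ⟨i, j, hij, rfl, rfl⟩; exact hij
      | neg φ => simp [uF, AForm.sat]
      | disj φ χ => simp [uF, AForm.sat]
      | exN j φ =>
        simp only [uF, imp_sat, cj_sat, agreeQ_sat, asg4_1, asg4_2, tr_T, tr_F, atom_sat,
          AForm.sat, ATerm.eval]
        rintro ⟨h1, h2⟩
        rw [hag a b ha hb j h1] at h2
        exact ⟨_, h2⟩
      | allN j φ =>
        simp only [uF, imp_sat, cj_sat, agreeQ_sat, asg4_1, asg4_2, tr_T, tr_F, atom_sat,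
          AForm.sat, ATerm.eval]
        rintro ⟨h1, h2⟩
        rw [hag a b ha hb j h1]
        exact h2 _
    · simp only [uA, imp_sat, cj_sat, atom_sat, EqQ_sat, SuccQ_sat, asg4_1, asg4_2, asg4_3, tr_T,
        ← hK, ← hS, hSm, hMm, hAm, hBm, true_and, ATerm.eval]
      refine ⟨fun h0 => ⟨⟨_, rfl, by omega⟩, by simp [h0]⟩, ?_⟩
      rintro ⟨⟨i, h1, h2⟩, j, h3, h4⟩
      refine ⟨⟨_, rfl, by omega⟩, ?_⟩
      rintro ⟨⟨k, h5, h6⟩, l, h7, h8⟩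
      refine ⟨_, rfl, ?_⟩
      rw [h6, h8, h2, h4, ← h5, ← h7, ← h3, ← h1]; ring
  · intro φ hφ
    unfold Sem
    cases φ with
    | exN j φ =>
      have hj : j < K + 2 := by have := sub_ex hφ; omega
      simp only [eF, imp_sat, cj_sat, agreeQ_sat, atom_sat]
      by_cases hs : (AForm.exN j φ).sat a F
      · obtain ⟨n, hn⟩ := hs
        refine ⟨_, ⟨Function.update a j n, hupd a ha j hj n, rfl⟩, fun _ => ⟨?_, ?_⟩⟩
        · exact fun k hk hkj => by
            obtain ⟨i, h1, h2⟩ := hag' a j n k hk hkj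
            exact ⟨i, by simpa [ATerm.eval] using h1, by simpa [ATerm.eval] using h2⟩
        · simpa using hn
      · refine ⟨_, ⟨a, ha, rfl⟩, fun h => absurd ?_ hs⟩
        simpa using h
    | allN j φ =>
      have hj : j < K + 2 := by have := sub_all hφ; omega
      simp only [eF, imp_sat, cj_sat, agreeQ_sat, atom_sat, neg_sat]
      by_cases hs : (AForm.allN j φ).sat a F
      · refine ⟨_, ⟨a, ha, rfl⟩, fun h => absurd hs ?_⟩
        simpa using h
      · simp only [AForm.sat, not_forall] at hs
        obtain ⟨n, hn⟩ := hs
        refine ⟨_, ⟨Function.update a j n, hupd a ha j hj n, rfl⟩, fun _ => ⟨?_, ?_⟩⟩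
        · exact fun k hk hkj => by
            obtain ⟨i, h1, h2⟩ := hag' a j n k hk hkj
            exact ⟨i, by simpa [ATerm.eval] using h1, by simpa [ATerm.eval] using h2⟩
        · simpa using hn
    | _ => exact ⟨_, ⟨a, ha, rfl⟩, by simp [eF]⟩
  · intro j hj
    refine ⟨_, ⟨Function.update a j (a j + 1), hupd a ha j hj _, rfl⟩, ?_⟩
    simp only [Sem, eSucc, cj_sat, agreeQ_sat, SuccQ_sat]
    refine ⟨fun k hk hkj => by
            obtain ⟨i, h1, h2⟩ := hag' a j (a j + 1) k hk hkj
            exact ⟨i, by simpa [ATerm.eval] using h1, by simpa [ATerm.eval] using h2⟩, a j, ?_⟩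
    simp [hvar j hj, ATerm.eval, ← hS]
  · intro j hj
    refine ⟨_, ⟨Function.update a j 0, hupd a ha j hj _, rfl⟩, ?_⟩
    simp only [Sem, eZero, cj_sat, agreeQ_sat, atom_sat]
    refine ⟨fun k hk hkj => by
            obtain ⟨i, h1, h2⟩ := hag' a j 0 k hk hkj
            exact ⟨i, by simpa [ATerm.eval] using h1, by simpa [ATerm.eval] using h2⟩, ?_⟩
    simp [hvar j hj, ATerm.eval, ← hS]

end HUP

namespace HUP

/-! ### From a set of traces to a model of arithmetic -/

theorem sound (ψ : AForm) (x : ℕ) (T : Set (Trace ℕ)) (hT : HModels T (red ψ x)) :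
    ∃ F : ℕ → ℕ → ℕ, ψ.sat (fun _ => x) F := by
  classical
  rw [red, phi_models] at hT
  set K := bdF ψ with hK
  set S := allTerms ψ with hS
  have hvar : ∀ j, j < K + 2 → ATerm.var j ∈ S := fun j hj => var_mem hj
  have hSm : tS K ∈ S := by simp [hS, allTerms, hK]
  have hMm : tM K ∈ S := by simp [hS, allTerms, hK]
  have hAm : tA K ∈ S := hvar K (by omega)
  have hBm : tB K ∈ S := hvar (K+1) (by omega)
  obtain ⟨z, hz, H⟩ := hT
  have hstart := (H z hz z hz z hz).1.1
  have hrest := fun a ha b hb c hc => (H a ha b hb c hc).1.2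
  have hE1 := fun a ha => (H a ha z hz z hz).2.1
  have hE2 := fun a ha => (H a ha z hz z hz).2.2.1
  have hE3 := fun a ha => (H a ha z hz z hz).2.2.2
  clear H
  simp only [startQ, cj_sat, nextN_sat, bigAnd_sat, List.mem_map, List.mem_range,
      forall_exists_index, and_imp, forall_apply_eq_imp_iff₂, atom_sat, shift_at, asg4_0,
      zero_add] at hstart
  simp only [restQ, cj_sat, bigAnd_sat, List.mem_map, 
      forall_exists_index, and_imp, forall_apply_eq_imp_iff₂] at hrest
  -- values
  have hU : ∀ t ∈ T, ∀ s ∈ S, ∃! i, cT s ∈ t i := by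
    intro t ht s hs
    simpa using (hrest t ht z hz z hz).1 s hs
  let val : ATerm → Trace ℕ → ℕ := fun s t => if h : ∃ i, cT s ∈ t i then h.choose else 0
  have hv : ∀ t ∈ T, ∀ s ∈ S, ∀ i, cT s ∈ t i ↔ val s t = i := by
    intro t ht s hs i
    obtain ⟨k, hk, hu⟩ := hU t ht s hs
    have he : ∃ i, cT s ∈ t i := ⟨k, hk⟩
    have h1 : cT s ∈ t (val s t) := by
      simp only [val, dif_pos he]; exact he.choose_spec
    constructor
    · intro hi; rw [hu i hi, hu _ h1]
    · rintro rfl; exact h1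
  let env : Trace ℕ → ℕ → ℕ := fun t j => if j < K + 2 then val (.var j) t else x
  have henv : ∀ t j, j < K + 2 → env t j = val (.var j) t := fun t j hj => by simp [env, hj]
  have hag : ∀ a ∈ T, ∀ b ∈ T, ∀ j, j < K + 2 → 
      ((∀ k < K + 2, k ≠ j → ∃ i, cT (.var k) ∈ a i ∧ cT (.var k) ∈ b i) ↔
      env b = Function.update (env a) j (val (.var j) b)) := by
    intro a ha b hb j hj
    constructor
    · intro h
      funext k
      by_cases hkj : k = j
      · subst hkj; simp [henv b k hj]
      · rw [Function.update_of_ne hkj]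
        by_cases hk : k < K + 2
        · obtain ⟨i, h1, h2⟩ := h k hk hkj
          rw [hv a ha _ (hvar k hk)] at h1
          rw [hv b hb _ (hvar k hk)] at h2
          rw [henv _ _ hk, henv _ _ hk, h1, h2]
        · simp [env, hk]
    · intro h k hk hkj
      have h1 := congrFun h k
      rw [Function.update_of_ne hkj, henv _ _ hk, henv _ _ hk] at h1
      exact ⟨val (.var k) a, (hv a ha _ (hvar k hk) _).2 rfl, (hv b hb _ (hvar k hk) _).2 h1⟩
  -- all updates exist
  have htot : ∀ j < K + 2, ∀ n, ∀ t ∈ T, ∃ y ∈ T, env y = Function.update (env t) j n := by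
    intro j hj n
    induction n with
    | zero =>
      intro t ht
      obtain ⟨y, hy, h⟩ := hE3 t ht j hj
      simp only [Sem, eZero, cj_sat, agreeQ_sat, atom_sat, if_true, if_neg (show ¬ (1 = 4) by omega)]
        at h
      refine ⟨y, hy, ?_⟩
      rw [(hag t ht y hy j hj).1 h.1, (hv y hy _ (hvar j hj) 0).1 h.2]
    | succ n ih =>
      intro t ht
      obtain ⟨u, hu, hut⟩ := ih t ht
      obtain ⟨y, hy, h⟩ := hE2 u hu j hj
      simp only [Sem, eSucc, cj_sat, agreeQ_sat, SuccQ_sat, if_true,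
        if_neg (show ¬ (1 = 4) by omega)] at h
      refine ⟨y, hy, ?_⟩
      obtain ⟨h1, i, h2, h3⟩ := h
      rw [(hag u hu y hy j hj).1 h1, (hv y hy _ (hvar j hj) _).1 h3, hut,
        Function.update_idem]
      have := (hv u hu _ (hvar j hj) _).1 h2
      rw [← henv u j hj, hut, Function.update_self] at this
      rw [this]
  -- arithmetic
  have hAr := fun a ha b hb c hc => (hrest a ha b hb c hc).2.2.2.2
  simp only [uA, imp_sat, cj_sat, atom_sat, EqQ_sat, SuccQ_sat, asg4_1, asg4_2, asg4_3] at hAr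
  have hpair : ∀ m n, ∃ y ∈ T, val (tA K) y = m ∧ val (tB K) y = n := by
    intro m n
    obtain ⟨y, hy, h1⟩ := htot K (by omega) m z hz
    obtain ⟨w, hw, h2⟩ := htot (K+1) (by omega) n y hy
    refine ⟨w, hw, ?_, ?_⟩
    · rw [← henv w K (by omega), h2, Function.update_of_ne (by omega), h1, Function.update_self]
    · rw [← henv w (K+1) (by omega), h2, Function.update_self]
  have hadd : ∀ n, ∀ t ∈ T, val (tB K) t = n → val (tS K) t = val (tA K) t + n := by
    intro n
    induction n with
    | zero =>
      intro t ht h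
      obtain ⟨⟨i, h1, h2⟩, -⟩ := (hAr t ht t ht t ht).1 ((hv t ht _ hBm 0).2 h)
      rw [(hv t ht _ hSm _).1 h1, (hv t ht _ hAm _).1 h2]; rfl
    | succ n ih =>
      intro t ht h
      obtain ⟨u, hu, h1, h2⟩ := hpair (val (tA K) t) n
      obtain ⟨⟨i, h3, h4⟩, -⟩ := (hAr u hu t ht t ht).2
        ⟨⟨val (tA K) t, (hv u hu _ hAm _).2 h1, (hv t ht _ hAm _).2 rfl⟩,
          n, (hv u hu _ hBm _).2 h2, (hv t ht _ hBm _).2 h⟩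
      rw [(hv t ht _ hSm _).1 h4, ← (hv u hu _ hSm _).1 h3, ih u hu h2, h1]; rfl
  have hmul : ∀ n, ∀ t ∈ T, val (tB K) t = n → val (tM K) t = val (tA K) t * n := by
    intro n
    induction n with
    | zero =>
      intro t ht h
      obtain ⟨-, h2⟩ := (hAr t ht t ht t ht).1 ((hv t ht _ hBm 0).2 h)
      rw [(hv t ht _ hMm _).1 h2]; rfl
    | succ n ih =>
      intro t ht h
      obtain ⟨u, hu, h1, h2⟩ := hpair (val (tA K) t) n
      obtain ⟨w, hw, h5, h6⟩ := hpair (val (tM K) u) (val (tA K) t)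
      obtain ⟨i, h3, h4⟩ := ((hAr u hu t ht w hw).2
        ⟨⟨val (tA K) t, (hv u hu _ hAm _).2 h1, (hv t ht _ hAm _).2 rfl⟩,
          n, (hv u hu _ hBm _).2 h2, (hv t ht _ hBm _).2 h⟩).2
          ⟨⟨_, (hv u hu _ hMm _).2 rfl, (hv w hw _ hAm _).2 h5⟩,
           _, (hv u hu _ hAm _).2 h1, (hv w hw _ hBm _).2 h6⟩
      rw [(hv t ht _ hMm _).1 h3, ← (hv w hw _ hSm _).1 h4, hadd _ w hw h6, h5, ih u hu h2, h1]
      ring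
  -- functions
  let R : ℕ → ℕ → ℕ → Prop := fun f n m => ∃ t ∈ T, ∃ s, ATerm.app f s ∈ S ∧ cT s ∈ t n ∧
    cT (.app f s) ∈ t m
  have hR : ∀ f n m m', R f n m → R f n m' → m = m' := by
    rintro f n m m' ⟨t, ht, s, hs, h1, h2⟩ ⟨t', ht', s', hs', h1', h2'⟩
    have := (hrest t ht t' ht' z hz).2.2.1 _ hs _ hs'
    simp only [uTT, if_true, imp_sat, EqQ_sat, asg4_1, asg4_2] at this
    obtain ⟨i, h3, h4⟩ := this ⟨n, h1, h1'⟩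
    rw [hv t ht _ hs] at h2 h3
    rw [hv t' ht' _ hs'] at h2' h4
    omega
  let F : ℕ → ℕ → ℕ := fun f n => if h : ∃ m, R f n m then h.choose else 0
  have hF : ∀ f n m, R f n m → F f n = m := by
    intro f n m h
    have he : ∃ m, R f n m := ⟨m, h⟩
    simp only [F, dif_pos he]
    exact hR _ _ _ _ he.choose_spec h
  -- terms
  have heval : ∀ s, bdT s ≤ K → subsT s ⊆ S → ∀ t ∈ T, s.eval (env t) F = val s t := by
    intro s
    induction s with
    | var j =>
      intro hb hs t ht
      simp only [bdT] at hb
      exact henv t j (by omega)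
    | zero =>
      intro hb hs t ht
      have hm : ATerm.zero ∈ S := hs (self_subsT _)
      have := (hrest t ht z hz z hz).2.1 _ hm
      exact ((hv t ht _ hm 0).1 (by simpa [uT] using this)).symm
    | one =>
      intro hb hs t ht
      have hm : ATerm.one ∈ S := hs (self_subsT _)
      have := (hrest t ht z hz z hz).2.1 _ hm
      exact ((hv t ht _ hm 1).1 (by simpa [uT] using this)).symm
    | add s u ihs ihu =>
      intro hb hs t ht
      have hm : ATerm.add s u ∈ S := hs (self_subsT _)
      simp only [bdT, max_le_iff] at hb
      simp only [subsT, List.cons_subset, List.append_subset] at hs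
      obtain ⟨w, hw, h1, h2⟩ := hpair (val s t) (val u t)
      have := (hrest t ht w hw z hz).2.1 _ hm
      simp only [uT, imp_sat, cj_sat, EqQ_sat, asg4_1, asg4_2] at this
      obtain ⟨i, h3, h4⟩ := this ⟨⟨_, (hv w hw _ hAm _).2 h1,
          (hv t ht _ (hs.2.1 (self_subsT _)) _).2 rfl⟩, _, (hv w hw _ hBm _).2 h2,
          (hv t ht _ (hs.2.2 (self_subsT _)) _).2 rfl⟩
      simp only [ATerm.eval, ihs hb.1 hs.2.1 t ht, ihu hb.2 hs.2.2 t ht]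
      rw [(hv t ht _ hm _).1 h3, ← (hv w hw _ hSm _).1 h4, hadd _ w hw h2, h1]
    | mul s u ihs ihu =>
      intro hb hs t ht
      have hm : ATerm.mul s u ∈ S := hs (self_subsT _)
      simp only [bdT, max_le_iff] at hb
      simp only [subsT, List.cons_subset, List.append_subset] at hs
      obtain ⟨w, hw, h1, h2⟩ := hpair (val s t) (val u t)
      have := (hrest t ht w hw z hz).2.1 _ hm
      simp only [uT, imp_sat, cj_sat, EqQ_sat, asg4_1, asg4_2] at this
      obtain ⟨i, h3, h4⟩ := this ⟨⟨_, (hv w hw _ hAm _).2 h1,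
          (hv t ht _ (hs.2.1 (self_subsT _)) _).2 rfl⟩, _, (hv w hw _ hBm _).2 h2,
          (hv t ht _ (hs.2.2 (self_subsT _)) _).2 rfl⟩
      simp only [ATerm.eval, ihs hb.1 hs.2.1 t ht, ihu hb.2 hs.2.2 t ht]
      rw [(hv t ht _ hm _).1 h3, ← (hv w hw _ hMm _).1 h4, hmul _ w hw h2, h1]
    | app f s ih =>
      intro hb hs t ht
      have hm : ATerm.app f s ∈ S := hs (self_subsT _)
      simp only [bdT] at hb
      simp only [subsT, List.cons_subset] at hs
      simp only [ATerm.eval, ih hb hs.2 t ht]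
      exact hF _ _ _ ⟨t, ht, s, hm, (hv t ht _ (hs.2 (self_subsT _)) _).2 rfl,
        (hv t ht _ hm _).2 rfl⟩
  -- formulas
  have hsat : ∀ φ, bdF φ ≤ K → termsF φ ⊆ S → subsF φ ⊆ subsF ψ → ∀ t ∈ T,
      (φ.sat (env t) F ↔ cF φ ∈ t 0) := by
    intro φ
    induction φ with
    | eq s u =>
      intro hb hs hp t ht
      simp only [bdF, max_le_iff] at hb
      simp only [termsF, List.append_subset] at hs
      have := (hrest t ht z hz z hz).2.2.2.1 _ (hp (self_subsF _))
      simp only [uF, iffQ_sat, atom_sat, EqQ_sat, asg4_1, hv t ht _ (hs.1 (self_subsT _)),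
        hv t ht _ (hs.2 (self_subsT _))] at this
      rw [this]
      simp only [AForm.sat, heval s hb.1 hs.1 t ht, heval u hb.2 hs.2 t ht]
      constructor
      · intro h; exact ⟨_, rfl, h.symm⟩
      · rintro ⟨i, h1, h2⟩; omega
    | lt s u =>
      intro hb hs hp t ht
      simp only [bdF, max_le_iff] at hb
      simp only [termsF, List.append_subset] at hs
      have := (hrest t ht z hz z hz).2.2.2.1 _ (hp (self_subsF _))
      simp only [uF, iffQ_sat, atom_sat, LtQ_sat, asg4_1, hv t ht _ (hs.1 (self_subsT _)),
        hv t ht _ (hs.2 (self_subsT _))] at this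
      rw [this]
      simp only [AForm.sat, heval s hb.1 hs.1 t ht, heval u hb.2 hs.2 t ht]
      constructor
      · intro h; exact ⟨_, _, h, rfl, rfl⟩
      · rintro ⟨i, j, h, h1, h2⟩; omega
    | neg φ ih =>
      intro hb hs hp t ht
      have := (hrest t ht z hz z hz).2.2.2.1 _ (hp (self_subsF _))
      simp only [subsF, List.cons_subset] at hp
      simp only [uF, iffQ_sat, atom_sat, neg_sat, asg4_1] at this
      rw [this, AForm.sat, ih hb hs hp.2 t ht]
    | disj φ χ ih ih' =>
      intro hb hs hp t ht
      have := (hrest t ht z hz z hz).2.2.2.1 _ (hp (self_subsF _))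
      simp only [bdF, max_le_iff] at hb
      simp only [termsF, List.append_subset] at hs
      simp only [subsF, List.cons_subset, List.append_subset] at hp
      simp only [uF, iffQ_sat, atom_sat, disj_sat, asg4_1] at this
      rw [this, AForm.sat, ih hb.1 hs.1 hp.2.1 t ht, ih' hb.2 hs.2 hp.2.2 t ht]
    | exN j φ ih =>
      intro hb hs hp t ht
      have hm := hp (self_subsF _)
      have hu := fun u hu => (hrest t ht u hu z hz).2.2.2.1 _ hm
      simp only [bdF, max_le_iff] at hb
      simp only [subsF, List.cons_subset] at hp
      have ih := ih hb.2 hs hp.2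
      have hj : j < K + 2 := by omega
      simp only [uF, imp_sat, cj_sat, atom_sat, agreeQ_sat, asg4_1, asg4_2] at hu
      simp only [AForm.sat]
      constructor
      · rintro ⟨n, hn⟩
        obtain ⟨y, hy, hyt⟩ := htot j hj n t ht
        rw [← hyt, ih y hy] at hn
        refine hu y hy ⟨(hag t ht y hy j hj).2 ?_, hn⟩
        rw [← henv y j hj, hyt, Function.update_self]
      · intro h
        obtain ⟨y, hy, h'⟩ := hE1 t ht _ hm
        simp only [Sem, eF, imp_sat, cj_sat, agreeQ_sat, atom_sat, if_true,
          if_neg (show ¬ (1 = 4) by omega)] at h'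
        obtain ⟨h1, h2⟩ := h' h
        rw [hag t ht y hy j hj] at h1
        exact ⟨_, by rw [← h1, ih y hy]; exact h2⟩
    | allN j φ ih =>
      intro hb hs hp t ht
      have hm := hp (self_subsF _)
      have hu := fun u hu => (hrest t ht u hu z hz).2.2.2.1 _ hm
      simp only [bdF, max_le_iff] at hb
      simp only [subsF, List.cons_subset] at hp
      have ih := ih hb.2 hs hp.2
      have hj : j < K + 2 := by omega
      simp only [uF, imp_sat, cj_sat, atom_sat, agreeQ_sat, asg4_1, asg4_2] at hu
      simp only [AForm.sat]
      constructor
      · intro h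
        by_contra hc
        obtain ⟨y, hy, h'⟩ := hE1 t ht _ hm
        simp only [Sem, eF, imp_sat, cj_sat, agreeQ_sat, atom_sat, neg_sat, if_true,
          if_neg (show ¬ (1 = 4) by omega)] at h'
        obtain ⟨h1, h2⟩ := h' hc
        rw [hag t ht y hy j hj] at h1
        apply h2
        rw [← ih y hy, h1]
        exact h _
      · intro h n
        obtain ⟨y, hy, hyt⟩ := htot j hj n t ht
        rw [← hyt, ih y hy]
        refine hu y hy ⟨(hag t ht y hy j hj).2 ?_, h⟩
        rw [← henv y j hj, hyt, Function.update_self]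
  refine ⟨F, ?_⟩
  have hz' : env z = fun _ => x := by
    funext j
    by_cases hj : j < K + 2
    · rw [henv z j hj]
      exact (hv z hz _ (hvar j hj) x).1 (hstart.1 j hj)
    · simp [env, hj]
  rw [← hz']
  refine (hsat ψ le_rfl ?_ (List.Subset.refl _) z hz).2 hstart.2
  intro s hs
  simp [hS, allTerms, hs]

theorem code_q_inj : ∀ {p q : QF ℕ}, p.codeWith id = q.codeWith id → p = q := by
  intro p
  induction p <;> intro q h <;> cases q <;> simp_all [QF.codeWith, Nat.pair_eq_pair] <;> grind

theorem code_h_inj : ∀ {p q : HFormula ℕ}, p.codeWith id = q.codeWith id → p = q := by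
  intro p
  induction p <;> intro q h <;> cases q <;> simp_all [HFormula.codeWith, Nat.pair_eq_pair] <;>
    grind [code_q_inj]

theorem hard (N : Set ℕ) (hN : Sigma11 N) : ManyOneRed N UPSatCodes := by
  obtain ⟨ψ, hψ⟩ := hN
  refine ⟨_, phi_computable (bdF ψ) (allTerms ψ) (subsF ψ) ψ, fun x => ?_⟩
  rw [hψ]
  constructor
  · rintro ⟨F, hF⟩
    exact ⟨red ψ x, phi_sentence _ _ _ _ _, rfl, complete ψ x F hF⟩
  · rintro ⟨φ, -, hc, T, -, hT⟩
    have := code_h_inj hc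
    subst this
    exact sound ψ x T hT

end HUP

namespace HUP

/-! ### Membership in Σ¹₁ -/

/-- an injective polynomial pairing -/
def pp (a b : ℕ) : ℕ := (a + b) * (a + b) + a

theorem pp_inj {a b c d : ℕ} (h : pp a b = pp c d) : a = c ∧ b = d := by
  unfold pp at h
  have h1 : a + b = c + d := by
    rcases lt_trichotomy (a + b) (c + d) with h1 | h1 | h1
    · nlinarith
    · exact h1
    · nlinarith
  rw [h1] at h
  omega

def fI (a b : AForm) : AForm := .disj (.neg a) b
def fA (a b : AForm) : AForm := .neg (.disj (.neg a) (.neg b))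
def fE (a b : AForm) : AForm := fA (fI a b) (fI b a)

theorem fI_sat (a b : AForm) (v F) : (fI a b).sat v F ↔ (a.sat v F → b.sat v F) := by
  simp only [fI, AForm.sat]; tauto
theorem fA_sat (a b : AForm) (v F) : (fA a b).sat v F ↔ (a.sat v F ∧ b.sat v F) := by
  simp only [fA, AForm.sat]; tauto
theorem fE_sat (a b : AForm) (v F) : (fE a b).sat v F ↔ (a.sat v F ↔ b.sat v F) := by
  simp only [fE, fA_sat, fI_sat]; tauto

def tpp (a b : ATerm) : ATerm := .add (.mul (.add a b) (.add a b)) a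
def tn : ℕ → ATerm
  | 0 => .zero
  | n + 1 => .add (tn n) .one

theorem tpp_eval (a b : ATerm) (v F) : (tpp a b).eval v F = pp (a.eval v F) (b.eval v F) := rfl
theorem tn_eval (n : ℕ) (v F) : (tn n).eval v F = n := by
  induction n with
  | zero => rfl
  | succ n ih => simp only [tn, ATerm.eval, ih]

abbrev vr (n : ℕ) : ATerm := .var n
/-- predicates of arity 1, 2, 3 -/
def p1 (f : ℕ) (a : ATerm) : AForm := .eq (.app f a) .one
def p2 (f : ℕ) (a b : ATerm) : AForm := .eq (.app f (tpp a b)) .one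
def p3 (f : ℕ) (a b c : ATerm) : AForm := .eq (.app f (tpp (tpp a b) c)) .one
/-- functions -/
def g2 (f : ℕ) (a b : ATerm) : ATerm := .app f (tpp a b)
def g3 (f : ℕ) (a b c : ATerm) : ATerm := .app f (tpp (tpp a b) c)
/-- the term for `Nat.pair` -/
abbrev pr (a b : ATerm) : ATerm := g2 10 a b

abbrev Vq := p1 0
abbrev Vh := p1 1
abbrev Fq := p2 2
abbrev Fh := p2 3
abbrev Sq := p3 4
abbrev Sh := p2 5
abbrev Mm := p3 6
abbrev Dd := p1 7
abbrev Ll := g2 8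
abbrev Uu := g3 9
abbrev A0 : ATerm := .app 11 .zero

def c1 : AForm := .allN 1 (.allN 2 (fA
  (fI (.lt (vr 1) (vr 2)) (.eq (pr (vr 1) (vr 2)) (.add (.mul (vr 2) (vr 2)) (vr 1))))
  (fI (.neg (.lt (vr 1) (vr 2)))
    (.eq (pr (vr 1) (vr 2)) (.add (.add (.mul (vr 1) (vr 1)) (vr 1)) (vr 2))))))

def c2 : AForm := .allN 1 (fE (Vq (vr 1))
  (.disj (.exN 2 (.exN 3 (.eq (vr 1) (pr (tn 0) (pr (vr 2) (vr 3))))))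
  (.disj (.exN 2 (fA (.eq (vr 1) (pr (tn 1) (vr 2))) (Vq (vr 2))))
  (.disj (.exN 2 (.exN 3 (fA (.eq (vr 1) (pr (tn 2) (pr (vr 2) (vr 3))))
      (fA (Vq (vr 2)) (Vq (vr 3))))))
  (.disj (.exN 2 (fA (.eq (vr 1) (pr (tn 3) (vr 2))) (Vq (vr 2))))
   (.exN 2 (.exN 3 (fA (.eq (vr 1) (pr (tn 4) (pr (vr 2) (vr 3))))
      (fA (Vq (vr 2)) (Vq (vr 3)))))))))))

def c3 : AForm := .allN 1 (fE (Vh (vr 1)) (fA (.lt .one (vr 1))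
  (.disj (.exN 2 (.exN 3 (fA (.eq (vr 1) (pr (tn 0) (pr (vr 2) (vr 3)))) (Vh (vr 3)))))
  (.disj (.exN 2 (.exN 3 (fA (.eq (vr 1) (pr (tn 1) (pr (vr 2) (vr 3)))) (Vh (vr 3)))))
   (.exN 2 (fA (.eq (vr 1) (pr (tn 2) (vr 2))) (Vq (vr 2))))))))

def c4 : AForm := .allN 1 (.allN 2 (.allN 3
  (fA (Fq (pr (tn 0) (pr (vr 1) (vr 3))) (vr 3))
  (fA (fI (Fq (vr 1) (vr 3)) (Fq (pr (tn 1) (vr 1)) (vr 3)))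
  (fA (fI (.disj (Fq (vr 1) (vr 3)) (Fq (vr 2) (vr 3))) (Fq (pr (tn 2) (pr (vr 1) (vr 2))) (vr 3)))
  (fA (fI (Fq (vr 1) (vr 3)) (Fq (pr (tn 3) (vr 1)) (vr 3)))
  (fI (.disj (Fq (vr 1) (vr 3)) (Fq (vr 2) (vr 3)))
    (Fq (pr (tn 4) (pr (vr 1) (vr 2))) (vr 3)))))))))

def c5 : AForm := .allN 1 (.allN 2 (.allN 3
  (fA (fI (.neg (.eq (vr 3) (vr 1))) (fI (Fh (vr 2) (vr 3))
    (Fh (pr (tn 0) (pr (vr 1) (vr 2))) (vr 3))))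
  (fA (fI (.neg (.eq (vr 3) (vr 1))) (fI (Fh (vr 2) (vr 3))
    (Fh (pr (tn 1) (pr (vr 1) (vr 2))) (vr 3))))
  (fI (Fq (vr 2) (vr 3)) (Fh (pr (tn 2) (vr 2)) (vr 3)))))))

def c6 : AForm := .allN 1 (.allN 2 (.allN 3 (.allN 4
  (fA (fE (Sq (pr (tn 0) (pr (vr 1) (vr 2))) (vr 3) (vr 4)) (Mm (Ll (vr 3) (vr 2)) (vr 4) (vr 1)))
  (fI (Vq (vr 1))
   (fA (fE (Sq (pr (tn 1) (vr 1)) (vr 3) (vr 4)) (.neg (Sq (vr 1) (vr 3) (vr 4))))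
   (fA (fE (Sq (pr (tn 3) (vr 1)) (vr 3) (vr 4)) (Sq (vr 1) (vr 3) (.add (vr 4) .one)))
   (fI (Vq (vr 2))
   (fA (fE (Sq (pr (tn 2) (pr (vr 1) (vr 2))) (vr 3) (vr 4))
      (.disj (Sq (vr 1) (vr 3) (vr 4)) (Sq (vr 2) (vr 3) (vr 4))))
    (fE (Sq (pr (tn 4) (pr (vr 1) (vr 2))) (vr 3) (vr 4))
      (.exN 5 (fA (Sq (vr 2) (vr 3) (.add (vr 4) (vr 5))) (.allN 6 (fI (.lt (vr 6) (vr 5))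
        (Sq (vr 1) (vr 3) (.add (vr 4) (vr 6))))))))))))))))) 

def c7 : AForm := .allN 1 (.allN 2 (.allN 3
  (fA (fI (Vh (vr 2)) (fA
    (fE (Sh (pr (tn 0) (pr (vr 1) (vr 2))) (vr 3))
      (.exN 4 (fA (Dd (vr 4)) (Sh (vr 2) (Uu (vr 3) (vr 1) (vr 4))))))
    (fE (Sh (pr (tn 1) (pr (vr 1) (vr 2))) (vr 3))
      (.allN 4 (fI (Dd (vr 4)) (Sh (vr 2) (Uu (vr 3) (vr 1) (vr 4))))))))
   (fI (Vq (vr 2)) (fE (Sh (pr (tn 2) (vr 2)) (vr 3)) (Sq (vr 2) (vr 3) .zero))))))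

def c8 : AForm := fA
  (.allN 1 (.allN 2 (.allN 3 (fA (.eq (Ll (Uu (vr 1) (vr 2) (vr 3)) (vr 2)) (vr 3))
    (.allN 4 (fI (.neg (.eq (vr 4) (vr 2)))
      (.eq (Ll (Uu (vr 1) (vr 2) (vr 3)) (vr 4)) (Ll (vr 1) (vr 4)))))))))
  (.allN 1 (.allN 2 (fA (.eq (Ll A0 (vr 1)) .zero) (.neg (Mm .zero (vr 1) (vr 2))))))

def c9 : AForm := .allN 1 (fI (Dd (vr 1)) (.exN 2 (.exN 3 (fA (.lt .zero (vr 2))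
  (fA (.lt .zero (vr 3)) (.allN 4 (fI (.neg (.lt (vr 4) (vr 2))) (.allN 5
    (fE (Mm (vr 1) (.add (vr 4) (vr 3)) (vr 5)) (Mm (vr 1) (vr 4) (vr 5)))))))))))

def c10 : AForm := fA (Vh (vr 0)) (fA (.allN 1 (.neg (Fh (vr 0) (vr 1)))) (Sh (vr 0) A0))

def cAll : AForm := fA c1 (fA c2 (fA c3 (fA c4 (fA c5 (fA c6 (fA c7 (fA c8 (fA c9 c10))))))))

/-- the semantic content of `cAll` -/
structure Ax (n : ℕ) (Vq Vh : ℕ → Prop) (Fq Fh : ℕ → ℕ → Prop) (Sq : ℕ → ℕ → ℕ → Prop)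
    (Sh : ℕ → ℕ → Prop) (M : ℕ → ℕ → ℕ → Prop) (D : ℕ → Prop) (L : ℕ → ℕ → ℕ)
    (U : ℕ → ℕ → ℕ → ℕ) (pr : ℕ → ℕ → ℕ) (A0 : ℕ) : Prop where
  c1 : ∀ a b, (a < b → pr a b = b * b + a) ∧ (¬ a < b → pr a b = a * a + a + b)
  c2 : ∀ c, Vq c ↔ (∃ a x, c = pr 0 (pr a x)) ∨ (∃ d, c = pr 1 d ∧ Vq d) ∨
    (∃ d e, c = pr 2 (pr d e) ∧ Vq d ∧ Vq e) ∨ (∃ d, c = pr 3 d ∧ Vq d) ∨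
    (∃ d e, c = pr 4 (pr d e) ∧ Vq d ∧ Vq e)
  c3 : ∀ c, Vh c ↔ 1 < c ∧ ((∃ x d, c = pr 0 (pr x d) ∧ Vh d) ∨
    (∃ x d, c = pr 1 (pr x d) ∧ Vh d) ∨ (∃ d, c = pr 2 d ∧ Vq d))
  c4 : ∀ d e x, Fq (pr 0 (pr d x)) x ∧ (Fq d x → Fq (pr 1 d) x) ∧
    (Fq d x ∨ Fq e x → Fq (pr 2 (pr d e)) x) ∧ (Fq d x → Fq (pr 3 d) x) ∧
    (Fq d x ∨ Fq e x → Fq (pr 4 (pr d e)) x)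
  c5 : ∀ y d x, (¬ x = y → Fh d x → Fh (pr 0 (pr y d)) x) ∧
    (¬ x = y → Fh d x → Fh (pr 1 (pr y d)) x) ∧ (Fq d x → Fh (pr 2 d) x)
  c6 : ∀ d e A i, (Sq (pr 0 (pr d e)) A i ↔ M (L A e) i d) ∧ (Vq d →
    (Sq (pr 1 d) A i ↔ ¬ Sq d A i) ∧ (Sq (pr 3 d) A i ↔ Sq d A (i + 1)) ∧ (Vq e →
      (Sq (pr 2 (pr d e)) A i ↔ Sq d A i ∨ Sq e A i) ∧
      (Sq (pr 4 (pr d e)) A i ↔ ∃ j, Sq e A (i + j) ∧ ∀ k, k < j → Sq d A (i + k))))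
  c7 : ∀ x d A, (Vh d → (Sh (pr 0 (pr x d)) A ↔ ∃ t, D t ∧ Sh d (U A x t)) ∧
     (Sh (pr 1 (pr x d)) A ↔ ∀ t, D t → Sh d (U A x t))) ∧ (Vq d → (Sh (pr 2 d) A ↔ Sq d A 0))
  c8 : (∀ A x t, L (U A x t) x = t ∧ ∀ y, ¬ y = x → L (U A x t) y = L A y) ∧
    ∀ i a, L A0 i = 0 ∧ ¬ M 0 i a
  c9 : ∀ t, D t → ∃ s p, 0 < s ∧ 0 < p ∧ ∀ n, ¬ n < s → ∀ a, M t (n + p) a ↔ M t n a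
  c10 : Vh n ∧ (∀ x, ¬ Fh n x) ∧ Sh n A0

def AxF (n : ℕ) (F : ℕ → ℕ → ℕ) : Prop :=
  Ax n (fun a => F 0 a = 1) (fun a => F 1 a = 1) (fun a b => F 2 (pp a b) = 1)
    (fun a b => F 3 (pp a b) = 1) (fun a b c => F 4 (pp (pp a b) c) = 1)
    (fun a b => F 5 (pp a b) = 1) (fun a b c => F 6 (pp (pp a b) c) = 1) (fun a => F 7 a = 1)
    (fun a b => F 8 (pp a b)) (fun a b c => F 9 (pp (pp a b) c)) (fun a b => F 10 (pp a b)) (F 11 0)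

theorem cAll_sat (n : ℕ) (F : ℕ → ℕ → ℕ) : cAll.sat (fun _ => n) F ↔ AxF n F := by
  simp only [cAll, c1, c2, c3, c4, c5, c6, c7, c8, c9, c10, p1, p2, p3, g2, g3, fA_sat, fI_sat,
    fE_sat, AForm.sat, ATerm.eval, tpp_eval, tn_eval]
  constructor
  · rintro ⟨a1, a2, a3, a4, a5, a6, a7, a8, a9, a10⟩
    exact ⟨a1, a2, a3, a4, a5, a6, a7, a8, a9, a10⟩
  · rintro ⟨a1, a2, a3, a4, a5, a6, a7, a8, a9, a10⟩
    exact ⟨a1, a2, a3, a4, a5, a6, a7, a8, a9, a10⟩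

theorem exists_F (n : ℕ) : (∃ F, AxF n F) ↔
    ∃ Vq Vh Fq Fh Sq Sh M D L U pr A0, Ax n Vq Vh Fq Fh Sq Sh M D L U pr A0 := by
  classical
  constructor
  · rintro ⟨F, h⟩; exact ⟨_, _, _, _, _, _, _, _, _, _, _, _, h⟩
  · rintro ⟨Vq, Vh, Fq, Fh, Sq, Sh, M, D, L, U, pr, A0, h⟩
    have hinj : Function.Injective (fun p : ℕ × ℕ => pp p.1 p.2) := by
      rintro ⟨a, b⟩ ⟨c, d⟩ h
      have := pp_inj h
      simpa using this
    obtain ⟨q, hq⟩ := hinj.hasLeftInverse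
    have hq1 : ∀ a b, (q (pp a b)).1 = a := fun a b => by rw [hq (a, b)]
    have hq2 : ∀ a b, (q (pp a b)).2 = b := fun a b => by rw [hq (a, b)]
    let I : Prop → ℕ := fun p => if p then 1 else 0
    have hI : ∀ p, (I p = 1) = p := fun p => by simp [I]
    let F : ℕ → ℕ → ℕ := fun i m => match i with
      | 0 => I (Vq m)
      | 1 => I (Vh m)
      | 2 => I (Fq (q m).1 (q m).2)
      | 3 => I (Fh (q m).1 (q m).2)
      | 4 => I (Sq (q (q m).1).1 (q (q m).1).2 (q m).2)
      | 5 => I (Sh (q m).1 (q m).2)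
      | 6 => I (M (q (q m).1).1 (q (q m).1).2 (q m).2)
      | 7 => I (D m)
      | 8 => L (q m).1 (q m).2
      | 9 => U (q (q m).1).1 (q (q m).1).2 (q m).2
      | 10 => pr (q m).1 (q m).2
      | _ => A0
    refine ⟨F, ?_⟩
    unfold AxF
    simp only [F, hq1, hq2, hI]
    exact h

end HUP

namespace HUP

theorem shiftAsg_add (As : Asg) (i j : ℕ) :
    shiftAsg (shiftAsg As i) j = shiftAsg As (i + j) := by
  funext x n
  simp only [shiftAsg, Trace.shift]
  congr 1
  omega

theorem shiftAsg_zero (As : Asg) : shiftAsg As 0 = As := rfl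

/-- unfolded semantics of until after a shift -/
theorem untl_shift (p q : QF ℕ) (As : Asg) (i : ℕ) : (QF.untl p q).sat (shiftAsg As i) ↔
    ∃ j, q.sat (shiftAsg As (i + j)) ∧ ∀ k, k < j → p.sat (shiftAsg As (i + k)) := by
  simp only [QF.sat, shiftAsg_add]

theorem next_shift (p : QF ℕ) (As : Asg) (i : ℕ) : (QF.next p).sat (shiftAsg As i) ↔
    p.sat (shiftAsg As (i + 1)) := by
  simp only [QF.sat, shiftAsg_add]

theorem atom_shift (a x : ℕ) (As : Asg) (i : ℕ) : (QF.atom a x).sat (shiftAsg As i) ↔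
    a ∈ As x i := by
  simp [QF.sat, shiftAsg, Trace.shift]

theorem lt_pair_right (k d : ℕ) (hk : 1 ≤ k) : d < Nat.pair k d := by
  unfold Nat.pair
  split_ifs <;> nlinarith

theorem le_sq_pair (d : ℕ) : Nat.pair 0 d = d * d := by
  unfold Nat.pair
  split_ifs with h
  · simp
  · have : d = 0 := by omega
    subst this; rfl

theorem code_h_gt (φ : HFormula ℕ) : 1 < φ.codeWith id := by
  induction φ with
  | ex x φ ih =>
    have h1 := Nat.right_le_pair x (φ.codeWith id)
    simp only [HFormula.codeWith, le_sq_pair]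
    nlinarith
  | all x φ ih =>
    have h1 := Nat.right_le_pair x (φ.codeWith id)
    have h2 := Nat.right_le_pair 1 (Nat.pair x (φ.codeWith id))
    simp only [HFormula.codeWith]
    omega
  | qf p =>
    have := Nat.left_le_pair 2 (p.codeWith id)
    simp only [HFormula.codeWith]
    omega

section Back
variable {n : ℕ} {Vq Vh : ℕ → Prop} {Fq Fh : ℕ → ℕ → Prop} {Sq : ℕ → ℕ → ℕ → Prop}
    {Sh : ℕ → ℕ → Prop} {M : ℕ → ℕ → ℕ → Prop} {D : ℕ → Prop} {L : ℕ → ℕ → ℕ}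
    {U : ℕ → ℕ → ℕ → ℕ} {A0 : ℕ}

theorem Vq_sound (h : Ax n Vq Vh Fq Fh Sq Sh M D L U Nat.pair A0) (c : ℕ) :
    Vq c → ∃ p : QF ℕ, p.codeWith id = c := by
  induction c using Nat.strong_induction_on with
  | _ c ih =>
    intro hc
    rcases (h.c2 c).1 hc with ⟨a, x, rfl⟩ | ⟨d, rfl, hd⟩ | ⟨d, e, rfl, hd, he⟩ | ⟨d, rfl, hd⟩ |
      ⟨d, e, rfl, hd, he⟩
    · exact ⟨.atom a x, rfl⟩
    · obtain ⟨p, rfl⟩ := ih d (lt_pair_right _ _ (by omega)) hd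
      exact ⟨.neg p, rfl⟩
    · have := lt_pair_right 2 (Nat.pair d e) (by omega)
      have h1 := Nat.left_le_pair d e
      have h2 := Nat.right_le_pair d e
      obtain ⟨p, rfl⟩ := ih d (by omega) hd
      obtain ⟨q, rfl⟩ := ih e (by omega) he
      exact ⟨.disj p q, rfl⟩
    · obtain ⟨p, rfl⟩ := ih d (lt_pair_right _ _ (by omega)) hd
      exact ⟨.next p, rfl⟩
    · have := lt_pair_right 4 (Nat.pair d e) (by omega)
      have h1 := Nat.left_le_pair d e
      have h2 := Nat.right_le_pair d e
      obtain ⟨p, rfl⟩ := ih d (by omega) hd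
      obtain ⟨q, rfl⟩ := ih e (by omega) he
      exact ⟨.untl p q, rfl⟩

theorem Vq_complete (h : Ax n Vq Vh Fq Fh Sq Sh M D L U Nat.pair A0) (p : QF ℕ) :
    Vq (p.codeWith id) := by
  induction p with
  | atom a x => exact (h.c2 _).2 (Or.inl ⟨a, x, rfl⟩)
  | neg p ih => exact (h.c2 _).2 (Or.inr (Or.inl ⟨_, rfl, ih⟩))
  | disj p q ih1 ih2 => exact (h.c2 _).2 (Or.inr (Or.inr (Or.inl ⟨_, _, rfl, ih1, ih2⟩)))
  | next p ih => exact (h.c2 _).2 (Or.inr (Or.inr (Or.inr (Or.inl ⟨_, rfl, ih⟩))))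
  | untl p q ih1 ih2 =>
    exact (h.c2 _).2 (Or.inr (Or.inr (Or.inr (Or.inr ⟨_, _, rfl, ih1, ih2⟩))))

theorem Vh_sound (h : Ax n Vq Vh Fq Fh Sq Sh M D L U Nat.pair A0) (c : ℕ) :
    Vh c → ∃ p : HFormula ℕ, p.codeWith id = c := by
  induction c using Nat.strong_induction_on with
  | _ c ih =>
    intro hc
    rcases (h.c3 c).1 hc with ⟨-, ⟨x, d, rfl, hd⟩ | ⟨x, d, rfl, hd⟩ | ⟨d, rfl, hd⟩⟩
    · have h1 := ((h.c3 d).1 hd).1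
      have h2 := Nat.right_le_pair x d
      obtain ⟨p, rfl⟩ := ih d (by rw [le_sq_pair]; nlinarith) hd
      exact ⟨.ex x p, rfl⟩
    · have := lt_pair_right 1 (Nat.pair x d) (by omega)
      have h2 := Nat.right_le_pair x d
      obtain ⟨p, rfl⟩ := ih d (by omega) hd
      exact ⟨.all x p, rfl⟩
    · obtain ⟨p, rfl⟩ := Vq_sound h d hd
      exact ⟨.qf p, rfl⟩

theorem Vh_complete (h : Ax n Vq Vh Fq Fh Sq Sh M D L U Nat.pair A0) (p : HFormula ℕ) :
    Vh (p.codeWith id) := by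
  induction p with
  | ex x p ih => exact (h.c3 _).2 ⟨code_h_gt (.ex x p), Or.inl ⟨_, _, rfl, ih⟩⟩
  | all x p ih => exact (h.c3 _).2 ⟨code_h_gt (.all x p), Or.inr (Or.inl ⟨_, _, rfl, ih⟩)⟩
  | qf p => exact (h.c3 _).2 ⟨code_h_gt (.qf p), Or.inr (Or.inr ⟨_, rfl, Vq_complete h p⟩)⟩

theorem Fq_sup (h : Ax n Vq Vh Fq Fh Sq Sh M D L U Nat.pair A0) (p : QF ℕ) (x : ℕ) :
    x ∈ p.freeVars → Fq (p.codeWith id) x := by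
  induction p with
  | atom a y =>
    intro hx
    have : x = y := hx
    subst this
    exact (h.c4 a 0 x).1
  | neg p ih => intro hx; exact (h.c4 _ 0 x).2.1 (ih hx)
  | disj p q ih1 ih2 => intro hx; exact (h.c4 _ _ x).2.2.1 (hx.imp ih1 ih2)
  | next p ih => intro hx; exact (h.c4 _ 0 x).2.2.2.1 (ih hx)
  | untl p q ih1 ih2 => intro hx; exact (h.c4 _ _ x).2.2.2.2 (hx.imp ih1 ih2)

theorem Fh_sup (h : Ax n Vq Vh Fq Fh Sq Sh M D L U Nat.pair A0) (p : HFormula ℕ) (x : ℕ) :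
    x ∈ p.freeVars → Fh (p.codeWith id) x := by
  induction p with
  | ex y p ih => intro hx; exact (h.c5 _ _ x).1 hx.2 (ih hx.1)
  | all y p ih => intro hx; exact (h.c5 _ _ x).2.1 hx.2 (ih hx.1)
  | qf p => intro hx; exact (h.c5 0 _ x).2.2 (Fq_sup h p x hx)

def dec (M : ℕ → ℕ → ℕ → Prop) (t : ℕ) : Trace ℕ := fun i => {a | M t i a}

theorem Sq_iff (h : Ax n Vq Vh Fq Fh Sq Sh M D L U Nat.pair A0) (p : QF ℕ) (A i : ℕ) :
    Sq (p.codeWith id) A i ↔ p.sat (shiftAsg (fun x => dec M (L A x)) i) := by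
  induction p generalizing i with
  | atom a x => rw [atom_shift]; exact (h.c6 a x A i).1
  | neg p ih =>
    have := ((h.c6 _ 0 A i).2 (Vq_complete h p)).1
    exact this.trans (not_congr (ih i))
  | disj p q ih1 ih2 =>
    have := (((h.c6 _ _ A i).2 (Vq_complete h p)).2.2 (Vq_complete h q)).1
    exact this.trans (or_congr (ih1 i) (ih2 i))
  | next p ih =>
    have := ((h.c6 _ 0 A i).2 (Vq_complete h p)).2.1
    rw [next_shift]
    exact this.trans (ih _)
  | untl p q ih1 ih2 =>
    have := (((h.c6 _ _ A i).2 (Vq_complete h p)).2.2 (Vq_complete h q)).2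
    rw [untl_shift]
    refine this.trans ?_
    simp only [ih1, ih2]

theorem dec_update (h : Ax n Vq Vh Fq Fh Sq Sh M D L U Nat.pair A0) (A x t : ℕ) :
    (fun y => dec M (L (U A x t) y)) = Function.update (fun y => dec M (L A y)) x (dec M t) := by
  funext y
  by_cases hy : y = x
  · subst hy; simp [(h.c8.1 A y t).1]
  · simp [hy, (h.c8.1 A x t).2 y hy]

theorem Sh_iff (h : Ax n Vq Vh Fq Fh Sq Sh M D L U Nat.pair A0) (p : HFormula ℕ) (A : ℕ) :
    Sh (p.codeWith id) A ↔ p.sat (dec M '' {t | D t}) (fun x => dec M (L A x)) := by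
  induction p generalizing A with
  | ex x p ih =>
    refine ((h.c7 x _ A).1 (Vh_complete h p)).1.trans ?_
    simp only [ih, dec_update h, HFormula.sat, Set.exists_mem_image, Set.mem_ofPred_eq]
  | all x p ih =>
    refine ((h.c7 x _ A).1 (Vh_complete h p)).2.trans ?_
    simp only [ih, dec_update h, HFormula.sat, Set.forall_mem_image, Set.mem_ofPred_eq]
  | qf p =>
    refine ((h.c7 0 _ A).2 (Vq_complete h p)).trans ?_
    rw [Sq_iff h, shiftAsg_zero]
    rfl

theorem back (h : Ax n Vq Vh Fq Fh Sq Sh M D L U Nat.pair A0) : n ∈ UPSatCodes := by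
  obtain ⟨p, rfl⟩ := Vh_sound h n h.c10.1
  refine ⟨p, ?_, rfl, dec M '' {t | D t}, ?_, ?_⟩
  · refine Set.eq_empty_iff_forall_notMem.2 fun x hx => h.c10.2.1 x (Fh_sup h p x hx)
  · rintro _ ⟨t, ht, rfl⟩
    obtain ⟨s, q, hs, hq, hh⟩ := h.c9 t ht
    refine ⟨s, q, hs, hq, fun m hm => ?_⟩
    ext a
    exact hh m (by omega) a
  · have := (Sh_iff h p A0).1 h.c10.2.2
    have e : (fun x => dec M (L A0 x)) = (fun _ _ => ∅ : Asg) := by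
      funext x i
      rw [(h.c8.2 x 0).1]
      ext a
      simpa [dec] using (h.c8.2 i a).2
    rw [e] at this
    exact this

end Back

theorem pr_eq {pr : ℕ → ℕ → ℕ}
    (h : ∀ a b, (a < b → pr a b = b * b + a) ∧ (¬ a < b → pr a b = a * a + a + b)) :
    pr = Nat.pair := by
  funext a b
  unfold Nat.pair
  split_ifs with hab
  · exact (h a b).1 hab
  · exact (h a b).2 hab

/-! ### Restriction to finitely many atoms -/

def Dep (K : ℕ) (p : QF ℕ) : Prop := ∀ As As' : Asg,
  (∀ x i a, a < K → (a ∈ As x i ↔ a ∈ As' x i)) → (p.sat As ↔ p.sat As')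

theorem Dep.mono {K K' : ℕ} {p : QF ℕ} (h : Dep K p) (hK : K ≤ K') : Dep K' p :=
  fun As As' hh => h As As' fun x i a ha => hh x i a (lt_of_lt_of_le ha hK)

theorem Dep.sh {K : ℕ} {p : QF ℕ} (h : Dep K p) (As As' : Asg)
    (hh : ∀ x i a, a < K → (a ∈ As x i ↔ a ∈ As' x i)) (j : ℕ) :
    p.sat (shiftAsg As j) ↔ p.sat (shiftAsg As' j) :=
  h _ _ fun x i a ha => hh x (i + j) a ha

theorem exists_dep (p : QF ℕ) : ∃ K, Dep K p := by
  induction p with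
  | atom a x => exact ⟨a + 1, fun As As' h => h x 0 a (by omega)⟩
  | neg p ih => obtain ⟨K, h⟩ := ih; exact ⟨K, fun As As' hh => not_congr (h As As' hh)⟩
  | disj p q ih1 ih2 =>
    obtain ⟨K1, h1⟩ := ih1
    obtain ⟨K2, h2⟩ := ih2
    exact ⟨max K1 K2, fun As As' hh => or_congr (h1.mono (le_max_left _ _) As As' hh)
      (h2.mono (le_max_right _ _) As As' hh)⟩
  | next p ih => obtain ⟨K, h⟩ := ih; exact ⟨K, fun As As' hh => h.sh As As' hh 1⟩
  | untl p q ih1 ih2 =>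
    obtain ⟨K1, h1⟩ := ih1
    obtain ⟨K2, h2⟩ := ih2
    refine ⟨max K1 K2, fun As As' hh => ?_⟩
    have e1 := (h1.mono (le_max_left K1 K2)).sh As As' hh
    have e2 := (h2.mono (le_max_right K1 K2)).sh As As' hh
    simp only [QF.sat, e1, e2]

def restr (K : ℕ) (t : Trace ℕ) : Trace ℕ := fun i => {a | a ∈ t i ∧ a < K}

theorem exists_restr (p : HFormula ℕ) : ∃ K, ∀ (T : Set (Trace ℕ)) (As : Asg),
    p.sat (restr K '' T) (fun x => restr K (As x)) ↔ p.sat T As := by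
  induction p with
  | ex y p ih =>
    obtain ⟨K, h⟩ := ih
    refine ⟨K, fun T As => ?_⟩
    simp only [HFormula.sat, Set.exists_mem_image]
    refine exists_congr fun t => and_congr_right fun _ => ?_
    rw [← h T (Function.update As y t)]
    refine iff_of_eq (congrArg _ ?_)
    funext x
    by_cases hx : x = y
    · subst hx; simp
    · simp [hx]
  | all y p ih =>
    obtain ⟨K, h⟩ := ih
    refine ⟨K, fun T As => ?_⟩
    simp only [HFormula.sat, Set.forall_mem_image]
    refine forall_congr' fun t => forall_congr' fun _ => ?_
    rw [← h T (Function.update As y t)]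
    refine iff_of_eq (congrArg _ ?_)
    funext x
    by_cases hx : x = y
    · subst hx; simp
    · simp [hx]
  | qf p =>
    obtain ⟨K, h⟩ := exists_dep p
    refine ⟨K, fun T As => h _ _ fun x i a ha => ?_⟩
    simp [restr, ha]

/-- decoding of a finite description of an ultimately periodic trace -/
def upt (z : ℕ × ℕ × List (Finset ℕ)) : Trace ℕ := fun i =>
  ↑(z.2.2.getD (if i < z.1 then i else z.1 + (i - z.1) % z.2.1) ∅)

theorem up_eq (t : Trace ℕ) (s p : ℕ) (h : ∀ n, s ≤ n → t (n + p) = t n) (m k : ℕ) :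
    t (s + (m + p * k)) = t (s + m) := by
  induction k with
  | zero => rfl
  | succ k ih =>
    rw [← ih, ← h (s + (m + p * k)) (by omega)]
    congr 1
    ring

theorem up_range (K : ℕ) (t : Trace ℕ) (ht : UltPeriodic t) : restr K t ∈ Set.range upt := by
  classical
  obtain ⟨s, p, hs, hp, h⟩ := ht
  refine ⟨(s, p, (List.range (s + p)).map fun i => (Finset.range K).filter (· ∈ t i)), ?_⟩
  funext i
  have key : t (if i < s then i else s + (i - s) % p) = t i := by
    split_ifs with hi
    · rfl
    · have := up_eq t s p h ((i - s) % p) ((i - s) / p)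
      rw [Nat.mod_add_div] at this
      rw [← this]
      congr 1
      omega
  have lt : (if i < s then i else s + (i - s) % p) < s + p := by
    have := Nat.mod_lt (i - s) hp
    split_ifs <;> omega
  ext a
  simp only [upt, restr, ← key]
  generalize (if i < s then i else s + (i - s) % p) = m at lt
  simp [List.getD, lt, and_comm]

theorem restr_up (K : ℕ) (t : Trace ℕ) (ht : UltPeriodic t) : UltPeriodic (restr K t) := by
  obtain ⟨s, p, hs, hp, h⟩ := ht
  exact ⟨s, p, hs, hp, fun n hn => by simp only [restr, h n hn]⟩

theorem exists_enum (T : Set (Trace ℕ)) (h : T.Countable) : ∃ (f : ℕ → Trace ℕ) (D : ℕ → Prop),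
    f 0 = (fun _ => ∅) ∧ f '' {t | D t} = T := by
  rcases T.eq_empty_or_nonempty with rfl | hne
  · exact ⟨fun _ _ => ∅, fun _ => False, rfl, by simp⟩
  · obtain ⟨g, rfl⟩ := h.exists_eq_range hne
    refine ⟨fun k => match k with
      | 0 => fun _ => ∅
      | k + 1 => g k, fun k => k ≠ 0, rfl, ?_⟩
    ext t
    constructor
    · rintro ⟨k, hk, rfl⟩
      cases k with
      | zero => exact absurd rfl hk
      | succ k => exact ⟨k, rfl⟩
    · rintro ⟨k, rfl⟩
      exact ⟨k + 1, by simp, rfl⟩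

theorem forth (φ : HFormula ℕ) (hs : φ.IsSentence) (T : Set (Trace ℕ))
    (hT : ∀ t ∈ T, UltPeriodic t) (hm : HModels T φ) :
    ∃ Vq Vh Fq Fh Sq Sh M D L U pr A0,
      Ax (φ.codeWith id) Vq Vh Fq Fh Sq Sh M D L U pr A0 := by
  classical
  obtain ⟨K, hK⟩ := exists_restr φ
  have hm' : φ.sat (restr K '' T) (fun _ _ => ∅) := by
    have := (hK T (fun _ _ => ∅)).2 hm
    have e : (fun x => restr K ((fun _ _ => ∅ : Asg) x)) = (fun _ _ => ∅ : Asg) := by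
      funext x i; simp [restr]
    rwa [e] at this
  have hT' : ∀ t ∈ restr K '' T, UltPeriodic t := by
    rintro _ ⟨t, ht, rfl⟩; exact restr_up K t (hT t ht)
  have hc : (restr K '' T).Countable := by
    refine (Set.countable_range upt).mono ?_
    rintro _ ⟨t, ht, rfl⟩; exact up_range K t (hT t ht)
  generalize restr K '' T = T' at hm' hT' hc
  obtain ⟨f, D, f0, rfl⟩ := exists_enum T' hc
  obtain ⟨g, hg⟩ := exists_surjective_nat (ℕ →₀ ℕ)
  obtain ⟨r, hr⟩ := hg.hasRightInverse
  have gU : ∀ A x t y, g (r ((g A).update x t)) y = if y = x then t else g A y := by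
    intro A x t y
    rw [hr, Finsupp.coe_update, Function.update_apply]
  have upd : ∀ A x t, (fun y => f (g (r ((g A).update x t)) y)) =
      Function.update (fun y => f (g A y)) x (f t) := by
    intro A x t
    funext y
    rw [gU, Function.update_apply]
    split_ifs <;> rfl
  have exq : ∀ (p : QF ℕ) (Q : QF ℕ → Prop), (∃ q : QF ℕ, q.codeWith id = p.codeWith id ∧ Q q) ↔
      Q p := fun p Q => ⟨fun ⟨q, h, hq⟩ => code_q_inj h ▸ hq, fun h => ⟨p, rfl, h⟩⟩
  have exh : ∀ (p : HFormula ℕ) (Q : HFormula ℕ → Prop),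
      (∃ q : HFormula ℕ, q.codeWith id = p.codeWith id ∧ Q q) ↔
      Q p := fun p Q => ⟨fun ⟨q, h, hq⟩ => code_h_inj h ▸ hq, fun h => ⟨p, rfl, h⟩⟩
  refine ⟨fun c => ∃ p : QF ℕ, p.codeWith id = c, fun c => ∃ p : HFormula ℕ, p.codeWith id = c,
    fun c x => ∀ p : QF ℕ, p.codeWith id = c → x ∈ p.freeVars,
    fun c x => ∀ p : HFormula ℕ, p.codeWith id = c → x ∈ p.freeVars,
    fun c A i => ∃ p : QF ℕ, p.codeWith id = c ∧ p.sat (shiftAsg (fun x => f (g A x)) i),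
    fun c A => ∃ p : HFormula ℕ, p.codeWith id = c ∧
      p.sat (f '' {t | D t}) (fun x => f (g A x)),
    fun t i a => a ∈ f t i, D, fun A x => g A x, fun A x t => r ((g A).update x t), Nat.pair, r 0,
    ?_⟩
  constructor
  · intro a b
    unfold Nat.pair
    exact ⟨fun h => if_pos h, fun h => if_neg h⟩
  · intro c
    constructor
    · rintro ⟨p, rfl⟩
      cases p with
      | atom a x => exact Or.inl ⟨a, x, rfl⟩
      | neg p => exact Or.inr (Or.inl ⟨_, rfl, p, rfl⟩)
      | disj p q => exact Or.inr (Or.inr (Or.inl ⟨_, _, rfl, ⟨p, rfl⟩, q, rfl⟩))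
      | next p => exact Or.inr (Or.inr (Or.inr (Or.inl ⟨_, rfl, p, rfl⟩)))
      | untl p q => exact Or.inr (Or.inr (Or.inr (Or.inr ⟨_, _, rfl, ⟨p, rfl⟩, q, rfl⟩)))
    · rintro (⟨a, x, rfl⟩ | ⟨d, rfl, p, rfl⟩ | ⟨d, e, rfl, ⟨p, rfl⟩, q, rfl⟩ | ⟨d, rfl, p, rfl⟩ |
        ⟨d, e, rfl, ⟨p, rfl⟩, q, rfl⟩)
      · exact ⟨.atom a x, rfl⟩
      · exact ⟨.neg p, rfl⟩
      · exact ⟨.disj p q, rfl⟩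
      · exact ⟨.next p, rfl⟩
      · exact ⟨.untl p q, rfl⟩
  · intro c
    constructor
    · rintro ⟨p, rfl⟩
      refine ⟨code_h_gt p, ?_⟩
      cases p with
      | ex x p => exact Or.inl ⟨_, _, rfl, p, rfl⟩
      | all x p => exact Or.inr (Or.inl ⟨_, _, rfl, p, rfl⟩)
      | qf p => exact Or.inr (Or.inr ⟨_, rfl, p, rfl⟩)
    · rintro ⟨-, ⟨x, d, rfl, p, rfl⟩ | ⟨x, d, rfl, p, rfl⟩ | ⟨d, rfl, p, rfl⟩⟩
      · exact ⟨.ex x p, rfl⟩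
      · exact ⟨.all x p, rfl⟩
      · exact ⟨.qf p, rfl⟩
  · intro d e x
    refine ⟨?_, ?_, ?_, ?_, ?_⟩
    · intro p hp
      rw [code_q_inj (q := .atom d x) hp]
      rfl
    · intro h p hp
      cases p <;> simp only [QF.codeWith, Nat.pair_eq_pair] at hp <;> try omega
      have hh := h _ hp.2
      exact hh
    · intro h p hp
      cases p <;> simp only [QF.codeWith, Nat.pair_eq_pair] at hp <;> try omega
      exact h.imp (fun h => h _ hp.2.1) (fun h => h _ hp.2.2)
    · intro h p hp
      cases p <;> simp only [QF.codeWith, Nat.pair_eq_pair] at hp <;> try omega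
      have hh := h _ hp.2
      exact hh
    · intro h p hp
      cases p <;> simp only [QF.codeWith, Nat.pair_eq_pair] at hp <;> try omega
      exact h.imp (fun h => h _ hp.2.1) (fun h => h _ hp.2.2)
  · intro y d x
    refine ⟨?_, ?_, ?_⟩
    · intro hxy h p hp
      cases p <;> simp only [HFormula.codeWith, Nat.pair_eq_pair] at hp <;> try omega
      exact ⟨h _ hp.2.2, by rw [hp.2.1]; exact hxy⟩
    · intro hxy h p hp
      cases p <;> simp only [HFormula.codeWith, Nat.pair_eq_pair] at hp <;> try omega
      exact ⟨h _ hp.2.2, by rw [hp.2.1]; exact hxy⟩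
    · intro h p hp
      cases p <;> simp only [HFormula.codeWith, Nat.pair_eq_pair] at hp <;> try omega
      exact h _ hp.2
  · intro d e A i
    refine ⟨(exq (.atom d e) _).trans (atom_shift _ _ _ _), ?_⟩
    rintro ⟨p, rfl⟩
    refine ⟨?_, ?_, ?_⟩
    · refine (exq (.neg p) _).trans ?_
      simp only [exq]
      rfl
    · refine (exq (.next p) _).trans ?_
      simp only [exq]
      exact next_shift _ _ _
    · rintro ⟨q, rfl⟩
      refine ⟨?_, ?_⟩
      · refine (exq (.disj p q) _).trans ?_
        simp only [exq]
        rfl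
      · refine (exq (.untl p q) _).trans ?_
        simp only [exq]
        exact untl_shift _ _ _ _
  · intro x d A
    refine ⟨?_, ?_⟩
    · rintro ⟨p, rfl⟩
      refine ⟨?_, ?_⟩
      · refine (exh (.ex x p) _).trans ?_
        simp only [exh, upd, HFormula.sat, Set.exists_mem_image, Set.mem_ofPred_eq]
      · refine (exh (.all x p) _).trans ?_
        simp only [exh, upd, HFormula.sat, Set.forall_mem_image, Set.mem_ofPred_eq]
    · rintro ⟨p, rfl⟩
      refine (exh (.qf p) _).trans ?_
      simp only [exq]
      rfl
  · refine ⟨fun A x t => ⟨?_, fun y hy => ?_⟩, fun i a => ⟨?_, ?_⟩⟩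
    · simp only [gU, if_true]
    · simp only [gU, if_neg hy]
    · simp only [hr 0]; rfl
    · simp [f0]
  · intro t ht
    obtain ⟨s, p, h1, h2, h⟩ := hT' _ ⟨t, ht, rfl⟩
    exact ⟨s, p, h1, h2, fun n hn a => by rw [h n (by omega)]⟩
  · refine ⟨⟨φ, rfl⟩, fun x hx => ?_, φ, rfl, ?_⟩
    · have := hx φ rfl
      rw [show φ.freeVars = ∅ from hs] at this
      exact this
    · have e : (fun x => f (g (r 0) x)) = (fun _ _ => ∅ : Asg) := by
        funext x
        rw [hr 0]
        exact f0
      rw [e]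
      exact hm'

theorem membership : Sigma11 UPSatCodes := by
  refine ⟨cAll, fun n => ?_⟩
  simp only [cAll_sat]
  rw [exists_F]
  constructor
  · rintro ⟨φ, hs, rfl, T, hT, hm⟩
    exact forth φ hs T hT hm
  · rintro ⟨Vq, Vh, Fq, Fh, Sq, Sh, M, D, L, U, pr, A0, h⟩
    obtain rfl := pr_eq h.c1
    exact back h

end HUP


/-- **HyperLTL satisfiability restricted to sets of ultimately periodic traces is
Σ¹₁-complete**: the set of codes is Σ¹₁ and every Σ¹₁ set many-one reduces to it
via a total computable function. -/
theorem hyperltl_up_sat_Sigma11_complete :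
    Sigma11 UPSatCodes ∧ ∀ N : Set ℕ, Sigma11 N → ManyOneRed N UPSatCodes := by
  exact ⟨HUP.membership, HUP.hard⟩
end
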